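/- arXiv:2409.02422 — 2 statements merged into one kernel-verified Lean document; each statement's English description precedes it below -/
import Mathlib

section
/- Assume m+1 ≠ n. The kernel of φ_{R_1} : U(gl(m+1|n)) → D'(m|n)⊗U(gl(m|n)) is the two-sided ideal (G_1) of U(gl(m+1|n)) generated by the first Gelfand invariant G_1^{gl(m+1|n)} = Σ_{i∈Î} e_{ii}. -/
set_option maxHeartbeats 1000000
set_option synthInstance.maxHeartbeats 400000

noncomputable section
open scoped TensorProduct

/-- The index set `I = {1,…,m,1̄,…,n̄}` of `gl(m|n)`; `Sum.inl` are the even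
(unbarred) indices, `Sum.inr` the odd (barred) ones.  The index set
`Î = {0} ∪ I` of `gl(m+1|n)` is realized as `Ind (m+1) n`, with `0 = Sum.inl 0`. -/
abbrev Ind (m n : ℕ) := Fin m ⊕ Fin n

/-- Parity of an index, as `0` or `1`. -/
def pI {m n : ℕ} : Ind m n → ℕ := Sum.elim (fun _ => 0) (fun _ => 1)

/-- The total order `1 < ⋯ < m < 1̄ < ⋯ < n̄` on `I` (and, with `m+1` in place of `m`,
the order `0 < 1 < ⋯ < m < 1̄ < ⋯ < n̄` on `Î`). -/
def iltI {m n : ℕ} : Ind m n → Ind m n → Prop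
  | Sum.inl a, Sum.inl b => a < b
  | Sum.inl _, Sum.inr _ => True
  | Sum.inr _, Sum.inl _ => False
  | Sum.inr a, Sum.inr b => a < b

/-- The distinguished index `0` of `Î`. -/
def z0 {m n : ℕ} : Ind (m+1) n := Sum.inl 0

/-- The inclusion `I ↪ Î`. -/
def emb {m n : ℕ} : Ind m n → Ind (m+1) n := Sum.map Fin.succ id

lemma emb_injective {m n : ℕ} : Function.Injective (emb (m := m) (n := n)) := by
  intro a b h
  cases a <;> cases b <;> simp [emb, Fin.succ_inj] at h <;> simp [h]

lemma emb_ne_z0 {m n : ℕ} (a : Ind m n) : emb a ≠ z0 := by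
  cases a <;> simp [emb, z0, Fin.succ_ne_zero]

/-- Builds a linear map out of a space with basis `α` from a function on basis vectors. -/
def mkOp {α M : Type} [AddCommGroup M] [Module ℂ M] (g : α → M) : (α →₀ ℂ) →ₗ[ℂ] M :=
  Finsupp.lsum ℂ fun x => LinearMap.toSpanSingleton ℂ M (g x)

/-- Number of odd variables occurring before position `i`. -/
def cntB {n : ℕ} (b : Fin n → Bool) (i : Fin n) : ℕ :=
  (Finset.univ.filter fun j => j < i ∧ b j = true).card

/-- Number of odd variables occurring. -/
def cntA {n : ℕ} (b : Fin n → Bool) : ℕ := (Finset.univ.filter fun j => b j = true).card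


/-- The defining (super-)commutation relations of `gl`:
`e_ij e_kl − (−1)^{(|i|+|j|)(|k|+|l|)} e_kl e_ij = δ_jk e_il − (−1)^{(|i|+|j|)(|k|+|l|)} δ_li e_kj`. -/
inductive glRel (ι : Type) (p : ι → ℕ) [DecidableEq ι] :
    FreeAlgebra ℂ (ι × ι) → FreeAlgebra ℂ (ι × ι) → Prop
  | basic (i j k l : ι) : glRel ι p
      (FreeAlgebra.ι ℂ (i, j) * FreeAlgebra.ι ℂ (k, l)
        - ((-1 : ℂ) ^ ((p i + p j) * (p k + p l))) •
            (FreeAlgebra.ι ℂ (k, l) * FreeAlgebra.ι ℂ (i, j)))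
      ((if j = k then FreeAlgebra.ι ℂ (i, l) else 0)
        - ((-1 : ℂ) ^ ((p i + p j) * (p k + p l))) •
            (if l = i then FreeAlgebra.ι ℂ (k, j) else 0))

/-- The universal enveloping superalgebra of the general linear Lie superalgebra with
index set `ι` and parity `p`, presented by generators `e_ij` and the super-commutator
relations. -/
abbrev UEA (ι : Type) (p : ι → ℕ) [DecidableEq ι] : Type := RingQuot (glRel ι p)

/-- The generator `e_ij` of `UEA ι p`. -/
def gen {ι : Type} (p : ι → ℕ) [DecidableEq ι] (i j : ι) : UEA ι p :=
  RingQuot.mkAlgHom ℂ (glRel ι p) (FreeAlgebra.ι ℂ (i, j))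

/-- Monomials `t_0^{k} t^e t̄^b` of `F = ℂ[t_0^{±1},t_1,…,t_m] ⊗ Λ_n`. -/
abbrev FMon (m n : ℕ) := ℤ × (Fin m → ℕ) × (Fin n → Bool)

/-- `F = ℂ[t_0^{±1},t_1,…,t_m] ⊗ Λ_n` as the vector space with basis the monomials. -/
abbrev FSp (m n : ℕ) : Type := FMon m n →₀ ℂ

/-- The basis monomial of `F` attached to `x`. -/
def fmono {m n : ℕ} (x : FMon m n) : FSp m n := Finsupp.single x 1

/-- Left multiplication by `t_i/t_0` for an even index `i ∈ {1,…,m}`. -/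
def opDivE {m n : ℕ} (i : Fin m) : Module.End ℂ (FSp m n) :=
  mkOp fun x => fmono (x.1 - 1, Function.update x.2.1 i (x.2.1 i + 1), x.2.2)

/-- Left multiplication by `t_ī/t_0` for an odd index `ī`. -/
def opDivO {m n : ℕ} (i : Fin n) : Module.End ℂ (FSp m n) :=
  mkOp fun x => if x.2.2 i then 0 else
    ((-1 : ℂ) ^ (cntB x.2.2 i)) • fmono (x.1 - 1, x.2.1, Function.update x.2.2 i true)

/-- The operator `t_0 ∂_0`. -/
def opPar0 {m n : ℕ} : Module.End ℂ (FSp m n) :=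
  mkOp fun x => (x.1 : ℂ) • fmono x

/-- The operator `t_0 ∂_i` for an even index `i ∈ {1,…,m}`. -/
def opParE {m n : ℕ} (i : Fin m) : Module.End ℂ (FSp m n) :=
  mkOp fun x => (x.2.1 i : ℂ) • fmono (x.1 + 1, Function.update x.2.1 i (x.2.1 i - 1), x.2.2)

/-- The operator `t_0 ∂_ī` for an odd index `ī`. -/
def opParO {m n : ℕ} (i : Fin n) : Module.End ℂ (FSp m n) :=
  mkOp fun x => if x.2.2 i then
    ((-1 : ℂ) ^ (cntB x.2.2 i)) • fmono (x.1 + 1, x.2.1, Function.update x.2.2 i false) else 0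

/-- The multiplication operators `t_i/t_0`, `i ∈ I`. -/
def opDiv {m n : ℕ} : Ind m n → Module.End ℂ (FSp m n) := Sum.elim opDivE opDivO

/-- The operators `t_0 ∂_i`, `i ∈ Î`. -/
def opPar {m n : ℕ} : Ind (m+1) n → Module.End ℂ (FSp m n) :=
  Sum.elim (Fin.cases opPar0 opParE) opParO

/-- The multiplication operators `t_i/t_0` for `i ∈ Î` (equal to `1` for `i = 0`). -/
def opDivB {m n : ℕ} : Ind (m+1) n → Module.End ℂ (FSp m n) :=
  Sum.elim (Fin.cases 1 opDivE) opDivO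

/-- The generators of `D'(m|n)`. -/
def Dgens (m n : ℕ) : Set (Module.End ℂ (FSp m n)) := Set.range opDiv ∪ Set.range opPar

/-- The superalgebra `D'(m|n)` of differential operators on `F`, i.e. the subalgebra of
operators on `F` generated by `t_i/t_0` (`i ∈ I`) and `t_0∂_i` (`i ∈ Î`). -/
def Dprime (m n : ℕ) : Subalgebra ℂ (Module.End ℂ (FSp m n)) := Algebra.adjoin ℂ (Dgens m n)

/-- `t_i/t_0` as an element of `D'(m|n)`. -/
def tdiv {m n : ℕ} (i : Ind m n) : Dprime m n :=
  ⟨opDiv i, Algebra.subset_adjoin (Or.inl ⟨i, rfl⟩)⟩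

/-- `t_0∂_i` as an element of `D'(m|n)`. -/
def tpar {m n : ℕ} (i : Ind (m+1) n) : Dprime m n :=
  ⟨opPar i, Algebra.subset_adjoin (Or.inr ⟨i, rfl⟩)⟩

/-- `t_i/t_0` for `i ∈ Î` as an element of `D'(m|n)`. -/
def tdivB {m n : ℕ} : Ind (m+1) n → Dprime m n :=
  Sum.elim (Fin.cases 1 fun i => tdiv (Sum.inl i)) fun i => tdiv (Sum.inr i)

/-- The operator `t_a∂_b = (t_a/t_0)(t_0∂_b)` of `D'(m|n)`, for `a, b ∈ Î`. -/
def tdel {m n : ℕ} (a b : Ind (m+1) n) : Dprime m n := tdivB a * tpar b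

/-- The Euler operator `E = Σ_{i∈Î} t_i∂_i ∈ D'(m|n)`. -/
def En (m n : ℕ) : Dprime m n := ∑ i : Ind (m+1) n, tdel i i

noncomputable instance instDprimeRing (m n : ℕ) : Ring (Dprime m n) :=
  @Subalgebra.toRing ℂ (Module.End ℂ (FSp m n)) inferInstance inferInstance inferInstance _

noncomputable instance instDprimeAlgebra (m n : ℕ) : Algebra ℂ (Dprime m n) :=
  @Subalgebra.algebra ℂ (Module.End ℂ (FSp m n)) inferInstance inferInstance inferInstance _

/-- The super tensor product `D'(m|n) ⊗ U(gl(m|n))`, axiomatized: an algebra `T` together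
with algebra maps `d ↦ d⊗1`, `u ↦ 1⊗u`, such that the induced linear map
`D'(m|n) ⊗_ℂ U(gl(m|n)) → T` is a linear isomorphism and such that the Koszul sign rule
`(1⊗u)(d⊗1) = (−1)^{|u||d|}(d⊗1)(1⊗u)` holds on (super-)generators. -/
structure SuperTensor (m n : ℕ) where
  T : Type
  [ringT : Ring T]
  [algT : Algebra ℂ T]
  inD : Dprime m n →ₐ[ℂ] T
  inU : UEA (Ind m n) pI →ₐ[ℂ] T
  equiv : ((Dprime m n) ⊗[ℂ] (UEA (Ind m n) pI)) ≃ₗ[ℂ] T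
  equiv_tmul : ∀ (d : Dprime m n) (u : UEA (Ind m n) pI), equiv (d ⊗ₜ u) = inD d * inU u
  comm_div : ∀ (i j k : Ind m n),
    inU (gen pI i j) * inD (tdiv k) =
      ((-1 : ℂ) ^ ((pI i + pI j) * pI k)) • (inD (tdiv k) * inU (gen pI i j))
  comm_par : ∀ (i j : Ind m n) (k : Ind (m+1) n),
    inU (gen pI i j) * inD (tpar k) =
      ((-1 : ℂ) ^ ((pI i + pI j) * pI k)) • (inD (tpar k) * inU (gen pI i j))

attribute [instance] SuperTensor.ringT SuperTensor.algT

/-- The predicate expressing that `φ : U(gl(m+1|n)) → D'(m|n) ⊗ U(gl(m|n))` is given on the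
generators `e_ab` by the formulas of Theorem 3.1 (for the central element `R`). -/
def IsPhi {m n : ℕ} (ST : SuperTensor m n) (R : ST.T)
    (φ : UEA (Ind (m+1) n) pI →ₐ[ℂ] ST.T) : Prop :=
  (∀ a b : Ind m n, φ (gen pI (emb a) (emb b)) =
      ST.inD (tdel (emb a) (emb b)) + ST.inU (gen pI a b)
        + (if a = b then ((-1 : ℂ) ^ (pI a * pI b)) • R else 0)) ∧
  (∀ a : Ind m n, φ (gen pI (emb a) z0) =
      ST.inD (tdel (emb a) z0)
        - ∑ j : Ind m n, ((-1 : ℂ) ^ (pI a * pI j)) • (ST.inD (tdiv j) * ST.inU (gen pI a j))) ∧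
  (∀ b : Ind m n, φ (gen pI z0 (emb b)) = ST.inD (tdel z0 (emb b))) ∧
  (φ (gen pI z0 z0) = ST.inD (tdel z0 z0) + R)

/-- The generating set of `U(sl(m+1|n))` inside `U(gl(m+1|n))`: the `e_ij` with `i ≠ j`
together with `e_00 − (−1)^{|a|} e_aa` for `a ∈ I`. -/
def slSet (m n : ℕ) : Set (UEA (Ind (m+1) n) pI) :=
  {x | (∃ i j : Ind (m+1) n, i ≠ j ∧ x = gen pI i j) ∨
    (∃ a : Ind m n, x = gen pI z0 z0 - ((-1 : ℂ) ^ (pI a)) • gen pI (emb a) (emb a))}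

/-- `U(sl(m+1|n))`, realized as the subalgebra of `U(gl(m+1|n))` generated by `sl(m+1|n)`. -/
def Usl (m n : ℕ) : Subalgebra ℂ (UEA (Ind (m+1) n) pI) := Algebra.adjoin ℂ (slSet m n)

lemma mem_gen_ne {m n : ℕ} {i j : Ind (m+1) n} (h : i ≠ j) : gen pI i j ∈ Usl m n :=
  Algebra.subset_adjoin (Or.inl ⟨i, j, h, rfl⟩)

lemma mem_h {m n : ℕ} (a : Ind m n) :
    gen pI z0 z0 - ((-1 : ℂ) ^ (pI a)) • gen pI (emb a) (emb a) ∈ Usl m n :=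
  Algebra.subset_adjoin (Or.inr ⟨a, rfl⟩)

/-- The predicate expressing that `ψ : U(sl(m+1|n)) → D'(m|n) ⊗ U(gl(m|n))` is given on the
generators by the formulas of Corollary 3.2 (the homomorphism `φ^s`). -/
def IsPhiS {m n : ℕ} (ST : SuperTensor m n) (ψ : Usl m n →ₐ[ℂ] ST.T) : Prop :=
  (∀ (a b : Ind m n) (h : a ≠ b),
    ψ ⟨gen pI (emb a) (emb b), mem_gen_ne fun he => h (emb_injective he)⟩ =
      ST.inD (tdel (emb a) (emb b)) + ST.inU (gen pI a b)) ∧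
  (∀ a : Ind m n, ψ ⟨gen pI (emb a) z0, mem_gen_ne (emb_ne_z0 a)⟩ =
      ST.inD (tdel (emb a) z0)
        - ∑ j : Ind m n, ((-1 : ℂ) ^ (pI a * pI j)) • (ST.inD (tdiv j) * ST.inU (gen pI a j))) ∧
  (∀ b : Ind m n, ψ ⟨gen pI z0 (emb b), mem_gen_ne (Ne.symm (emb_ne_z0 b))⟩ =
      ST.inD (tdel z0 (emb b))) ∧
  (∀ a : Ind m n, ψ ⟨gen pI z0 z0 - ((-1 : ℂ) ^ (pI a)) • gen pI (emb a) (emb a), mem_h a⟩ =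
      ST.inD (tdel (m:=m) (n:=n) z0 z0 - ((-1 : ℂ) ^ (pI a)) • tdel (emb a) (emb a))
        - ((-1 : ℂ) ^ (pI a)) • ST.inU (gen pI a a))

/-- The first Gelfand invariant `G₁ = Σ_i e_ii`. -/
def G1 (ι : Type) (p : ι → ℕ) [DecidableEq ι] [Fintype ι] : UEA ι p := ∑ i : ι, gen p i i

/-- The distinguished central element `R₁ = −(1/(m−n+1))(E⊗1 + 1⊗G₁)`. -/
def R1elt {m n : ℕ} (ST : SuperTensor m n) : ST.T :=
  -(1 / ((m : ℂ) - n + 1)) • (ST.inD (En m n) + ST.inU (G1 (Ind m n) pI))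

set_option linter.all false


/-! ### Basic facts on `FSp` -/

@[simp] lemma mkOp_fmono {m n : ℕ} {M : Type} [AddCommGroup M] [Module ℂ M]
    (g : FMon m n → M) (x : FMon m n) : mkOp g (fmono x) = g x := by
  simp [mkOp, fmono]

lemma FSp_ext {m n : ℕ} {M : Type} [AddCommGroup M] [Module ℂ M] {f g : FSp m n →ₗ[ℂ] M}
    (h : ∀ x, f (fmono x) = g (fmono x)) : f = g := by
  apply Finsupp.lhom_ext'
  intro x
  apply LinearMap.ext_ring
  exact h x

/-- exponents -/
def ex {m n : ℕ} (x : FMon m n) : Ind m n → ℕ :=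
  Sum.elim x.2.1 (fun j => (x.2.2 j).toNat)

/-- derivations -/
def dd {m n : ℕ} (i : Ind m n) : Module.End ℂ (FSp m n) := opPar (emb i)

@[simp] lemma dd_inl {m n : ℕ} (i : Fin m) : dd (n := n) (Sum.inl i) = opParE i := rfl
@[simp] lemma dd_inr {m n : ℕ} (i : Fin n) : dd (m := m) (Sum.inr i) = opParO i := rfl
@[simp] lemma opDiv_inl {m n : ℕ} (i : Fin m) : opDiv (n := n) (Sum.inl i) = opDivE i := rfl
@[simp] lemma opDiv_inr {m n : ℕ} (i : Fin n) : opDiv (m := m) (Sum.inr i) = opDivO i := rfl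

/-- spec: nonzero multiple of a monomial -/
lemma opDiv_spec {m n : ℕ} (i : Ind m n) (x : FMon m n) :
    (opDiv i (fmono x) = 0 ∧ pI i = 1 ∧ ex x i = 1) ∨
    ∃ c : ℂ, c ≠ 0 ∧ ∃ x', opDiv i (fmono x) = c • fmono x' ∧ x'.1 = x.1 - 1 ∧
      ex x' = ex x + Pi.single i 1 := by
  rcases i with i | i
  · right
    refine ⟨1, one_ne_zero, (x.1 - 1, Function.update x.2.1 i (x.2.1 i + 1), x.2.2), ?_, rfl, ?_⟩
    · simp [opDivE]
    · funext j
      rcases j with j | j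
      · by_cases h : j = i
        · subst h; simp [ex]
        · simp [ex, h]
      · simp [ex]
  · by_cases hb : x.2.2 i = true
    · left
      simp [opDivO, hb, pI, ex]
    · right
      refine ⟨(-1) ^ cntB x.2.2 i, by simp, (x.1 - 1, x.2.1, Function.update x.2.2 i true), ?_, rfl, ?_⟩
      · simp [opDivO, hb]
      · funext j
        rcases j with j | j
        · simp [ex]
        · by_cases h : j = i
          · subst h; simp [ex, hb]
          · simp [ex, h]

lemma dd_spec {m n : ℕ} (i : Ind m n) (x : FMon m n) :
    (dd i (fmono x) = 0 ∧ ex x i = 0) ∨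
    ∃ c : ℂ, c ≠ 0 ∧ ∃ x', dd i (fmono x) = c • fmono x' ∧ x'.1 = x.1 + 1 ∧
      ex x' + Pi.single i 1 = ex x := by
  rcases i with i | i
  · by_cases hb : x.2.1 i = 0
    · left
      simp [opParE, hb, ex]
    right
    refine ⟨x.2.1 i, by simpa using hb,
      (x.1 + 1, Function.update x.2.1 i (x.2.1 i - 1), x.2.2), ?_, rfl, ?_⟩
    · simp [opParE]
    · funext j
      rcases j with j | j
      · change Function.update x.2.1 i (x.2.1 i - 1) j + Pi.single (M := fun _ => ℕ) (Sum.inl i) 1 (Sum.inl j) = x.2.1 j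
        by_cases h : j = i
        · subst h; rw [Function.update_self, Pi.single_eq_same]; omega
        · rw [Function.update_of_ne h, Pi.single_eq_of_ne (by simpa using h), add_zero]
      · change (x.2.2 j).toNat + Pi.single (M := fun _ => ℕ) (Sum.inl i) 1 (Sum.inr j) = (x.2.2 j).toNat
        rw [Pi.single_eq_of_ne (by simp), add_zero]
  · by_cases hb : x.2.2 i = true
    · right
      refine ⟨(-1) ^ cntB x.2.2 i, by simp, (x.1 + 1, x.2.1, Function.update x.2.2 i false), ?_, rfl, ?_⟩
      · simp [opParO, hb]
      · funext j
        rcases j with j | j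
        · simp [ex]
        · by_cases h : j = i
          · subst h; simp [ex, hb]
          · simp [ex, h]
    · left
      simp [opParO, hb, ex]

lemma ex_inj {m n : ℕ} {x y : FMon m n} (h1 : x.1 = y.1) (h : ex x = ex y) : x = y := by
  obtain ⟨a, b, c⟩ := x
  obtain ⟨a', b', c'⟩ := y
  simp only [Prod.mk.injEq]
  refine ⟨h1, ?_, ?_⟩
  · funext i
    exact congrFun h (Sum.inl i)
  · funext i
    have := congrFun h (Sum.inr i)
    simp only [ex, Sum.elim_inr] at this
    revert this
    cases c i <;> cases c' i <;> simp

/-- existence of monomials with given exponents -/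
lemma ex_surj {m n : ℕ} (k : ℤ) (f : Ind m n → ℕ) (hf : ∀ i, pI i = 1 → f i ≤ 1) :
    ∃ x : FMon m n, x.1 = k ∧ ex x = f := by
  refine ⟨(k, fun i => f (Sum.inl i), fun j => decide (f (Sum.inr j) = 1)), rfl, ?_⟩
  funext i
  rcases i with i | i
  · simp [ex]
  · have := hf (Sum.inr i) rfl
    simp only [ex, Sum.elim_inr]
    have h2 : f (Sum.inr i) = 0 ∨ f (Sum.inr i) = 1 := by omega
    rcases h2 with h | h <;> simp [h]

lemma cntB_upd_true {n : ℕ} (b : Fin n → Bool) (i j : Fin n) (h : b j = false) :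
    ((-1 : ℂ) ^ cntB (Function.update b j true) i) =
      (if j < i then -1 else 1) * (-1) ^ cntB b i := by
  unfold cntB
  split_ifs with hj
  · have : (Finset.univ.filter fun k => k < i ∧ Function.update b j true k = true)
      = insert j (Finset.univ.filter fun k => k < i ∧ b k = true) := by
      ext k
      by_cases hk : k = j
      · subst hk; simp [hj]
      · simp [hk]
    rw [this, Finset.card_insert_of_notMem (by simp [h]), pow_succ]; ring
  · rw [one_mul]
    congr 2
    ext k
    by_cases hk : k = j
    · subst hk; simp [hj]
    · simp [hk]

lemma cntB_upd_false {n : ℕ} (b : Fin n → Bool) (i j : Fin n) (h : b j = true) :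
    ((-1 : ℂ) ^ cntB (Function.update b j false) i) =
      (if j < i then -1 else 1) * (-1) ^ cntB b i := by
  have := cntB_upd_true (Function.update b j false) i j (by simp)
  rw [Function.update_idem] at this
  have h2 : Function.update b j true = b := by rw [← h]; simp
  rw [h2] at this
  rw [this]
  split_ifs <;> ring

lemma sq_sgn (k : ℕ) : ((-1 : ℂ) ^ k) * ((-1 : ℂ) ^ k) = 1 := by
  rw [← mul_pow]; simp

lemma XX_comm {m n : ℕ} (i j : Ind m n) :
    opDiv i * opDiv j = ((-1 : ℂ) ^ (pI i * pI j)) • (opDiv j * opDiv i) := by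
  apply FSp_ext
  intro x
  rcases i with i | i <;> rcases j with j | j <;> simp [pI, Module.End.mul_apply]
  · simp only [opDivE, mkOp_fmono]
    by_cases h : i = j
    · subst h; rfl
    · simp [h, Ne.symm h, Function.update_comm h]
  · simp only [opDivE, opDivO, mkOp_fmono]
    split_ifs <;> simp
  · simp only [opDivE, opDivO, mkOp_fmono]
    split_ifs <;> simp
  · simp only [opDivO, mkOp_fmono]
    rcases lt_trichotomy i j with h | h | h
    · rcases hi : x.2.2 i <;> rcases hj : x.2.2 j <;>
      simp [hi, hj, h.ne, h.ne', cntB_upd_true, h, h.not_gt, Function.update_comm h.ne, smul_smul, mul_comm]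
    · subst h
      rcases hi : x.2.2 i <;> simp [hi]
    · rcases hi : x.2.2 i <;> rcases hj : x.2.2 j <;>
      simp [hi, hj, h.ne, h.ne', cntB_upd_true, h, h.not_gt, Function.update_comm h.ne, smul_smul, mul_comm]

lemma DD_comm {m n : ℕ} (i j : Ind m n) :
    dd i * dd j = ((-1 : ℂ) ^ (pI i * pI j)) • (dd j * dd i) := by
  apply FSp_ext
  intro x
  rcases i with i | i <;> rcases j with j | j <;> simp [pI, Module.End.mul_apply]
  · simp only [opParE, mkOp_fmono, map_smul]
    by_cases h : i = j
    · subst h; rfl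
    · simp [h, Ne.symm h, Function.update_comm h, smul_smul, mul_comm]
  · simp only [opParE, opParO, mkOp_fmono, map_smul]
    split_ifs <;> simp [opParO, opParE, *, smul_smul, mul_comm]
  · simp only [opParE, opParO, mkOp_fmono, map_smul]
    split_ifs <;> simp [smul_smul, mul_comm]
  · simp only [opParO, mkOp_fmono]
    rcases lt_trichotomy i j with h | h | h
    · rcases hi : x.2.2 i <;> rcases hj : x.2.2 j <;>
      simp [hi, hj, h.ne, h.ne', cntB_upd_false, h, h.not_gt, Function.update_comm h.ne, smul_smul, mul_comm]
    · subst h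
      rcases hi : x.2.2 i <;> simp [hi]
    · rcases hi : x.2.2 i <;> rcases hj : x.2.2 j <;>
      simp [hi, hj, h.ne, h.ne', cntB_upd_false, h, h.not_gt, Function.update_comm h.ne, smul_smul, mul_comm]

lemma DX_comm {m n : ℕ} (i j : Ind m n) :
    dd i * opDiv j = ((-1 : ℂ) ^ (pI i * pI j)) • (opDiv j * dd i) + (if i = j then 1 else 0) := by
  apply FSp_ext
  intro x
  rcases i with i | i <;> rcases j with j | j <;> simp [pI, Module.End.mul_apply]
  · simp only [opParE, opDivE, mkOp_fmono, map_smul]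
    by_cases h : i = j
    · subst h
      rcases hk : x.2.1 i with _ | k
      · have : x.2.1 = Function.update x.2.1 i 0 := by rw [← hk]; simp
        simp [← this]
      · have : x.2.1 = Function.update x.2.1 i (k+1) := by rw [← hk]; simp
        simp [← this, add_smul]
    · simp [h, Ne.symm h, Function.update_comm h, smul_smul, mul_comm]
  · simp only [opParE, opDivO, mkOp_fmono, map_smul]
    split_ifs <;> simp [opParO, opParE, *, smul_smul, mul_comm]
  · simp only [opDivE, opParO, mkOp_fmono, map_smul]
    split_ifs <;> simp [opParO, opParE, *, smul_smul, mul_comm]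
  · simp only [opParO, opDivO, mkOp_fmono]
    rcases lt_trichotomy i j with h | h | h
    · rcases hi : x.2.2 i <;> rcases hj : x.2.2 j <;>
      simp [hi, hj, h.ne, h.ne', cntB_upd_false, cntB_upd_true, h, h.not_gt, Function.update_comm h.ne, smul_smul, mul_comm]
    · subst h
      rcases hi : x.2.2 i
      · have : x.2.2 = Function.update x.2.2 i false := by rw [← hi]; simp
        simp [hi, cntB_upd_true, smul_smul, sq_sgn, ← this]
      · have : x.2.2 = Function.update x.2.2 i true := by rw [← hi]; simp
        simp [hi, cntB_upd_false, smul_smul, sq_sgn, ← this]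
    · rcases hi : x.2.2 i <;> rcases hj : x.2.2 j <;>
      simp [hi, hj, h.ne, h.ne', cntB_upd_false, cntB_upd_true, h, h.not_gt, Function.update_comm h.ne, smul_smul, mul_comm]

/-- parity exponent of a monomial -/
def sgE {m n : ℕ} (f : Ind m n → ℕ) : ℕ := ∑ i, pI i * f i

lemma sgE_add {m n : ℕ} (f : Ind m n → ℕ) (i : Ind m n) :
    sgE (f + Pi.single i 1) = sgE f + pI i := by
  simp [sgE, mul_add, Finset.sum_add_distrib, Pi.single_apply]

/-- parity operator -/
def Sg {m n : ℕ} : Module.End ℂ (FSp m n) := mkOp fun x => ((-1 : ℂ) ^ sgE (ex x)) • fmono x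

@[simp] lemma Sg_fmono {m n : ℕ} (x : FMon m n) : Sg (fmono x) = ((-1 : ℂ) ^ sgE (ex x)) • fmono x := by
  simp [Sg]

lemma Sg_sq {m n : ℕ} : (Sg : Module.End ℂ (FSp m n)) * Sg = 1 := by
  apply FSp_ext; intro x
  simp [Module.End.mul_apply, smul_smul, sq_sgn]

lemma Sg_X {m n : ℕ} (i : Ind m n) : Sg * opDiv i = ((-1 : ℂ) ^ (pI i)) • (opDiv i * Sg) := by
  apply FSp_ext; intro x
  rcases opDiv_spec i x with h | ⟨c, _, x', h, _, h2⟩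
  · simp [Module.End.mul_apply, h.1]
  · simp [Module.End.mul_apply, h, h2, sgE_add, smul_smul, pow_add, mul_comm, mul_left_comm]

lemma Sg_D {m n : ℕ} (i : Ind m n) : Sg * dd i = ((-1 : ℂ) ^ (pI i)) • (dd i * Sg) := by
  apply FSp_ext; intro x
  rcases dd_spec i x with h | ⟨c, _, x', h, _, h2⟩
  · simp [Module.End.mul_apply, h.1]
  · have := sq_sgn (pI i)
    simp only [Module.End.mul_apply, h, map_smul, Sg_fmono, LinearMap.smul_apply, ← h2, sgE_add,
      smul_smul, pow_add]
    congr 1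
    linear_combination (-(c * (-1) ^ sgE (ex x'))) * this

lemma Sg_0 {m n : ℕ} : Sg * opPar0 = (opPar0 * Sg : Module.End ℂ (FSp m n)) := by
  apply FSp_ext; intro x
  simp [Module.End.mul_apply, opPar0, smul_smul, mul_comm]


lemma sgn_congr {a b : ℕ} (h : a % 2 = b % 2) : ((-1 : ℂ) ^ a) = (-1) ^ b := by
  rw [neg_one_pow_eq_pow_mod_two, h, ← neg_one_pow_eq_pow_mod_two]

instance instRingV (m n m' n' : ℕ) : Ring (Module.End ℂ (FSp m n ⊗[ℂ] FSp m' n')) :=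
  Algebra.semiringToRing ℂ

lemma gl_pt {A I : Type} [Ring A] [Algebra ℂ A] [DecidableEq I] (p : I → ℕ)
    (Y D : I → I → A)
    (hYY : ∀ a b c d, Y a b * Y c d = ((-1 : ℂ) ^ ((p a + p b) * (p c + p d))) • (Y c d * Y a b))
    (hDD : ∀ a b c d, D a b * D c d = ((-1 : ℂ) ^ ((p a + p b) * (p c + p d))) • (D c d * D a b))
    (hDY : ∀ a b c d, D a b * Y c d = ((-1 : ℂ) ^ ((p a + p b) * (p c + p d))) • (Y c d * D a b)
      + if a = c ∧ b = d then 1 else 0) (i j u v k l : I) :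
    (Y k i * D k j) * (Y l u * D l v) - ((-1 : ℂ) ^ ((p i + p j) * (p u + p v))) •
      ((Y l u * D l v) * (Y k i * D k j)) =
    (if k = l ∧ j = u then Y k i * D l v else 0) - ((-1 : ℂ) ^ ((p i + p j) * (p u + p v))) •
      (if l = k ∧ v = i then Y l u * D k j else 0) := by
  have h1 : (Y k i * D k j) * (Y l u * D l v) =
      ((-1 : ℂ) ^ ((p k + p j) * (p l + p u))) • (Y k i * Y l u * (D k j * D l v)) +
        (if k = l ∧ j = u then Y k i * D l v else 0) := by
    calc _ = Y k i * (D k j * Y l u) * D l v := by noncomm_ring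
      _ = _ := by
        rw [hDY]
        split_ifs <;> simp [mul_add, add_mul, mul_assoc]
  have h2 : (Y l u * D l v) * (Y k i * D k j) =
      ((-1 : ℂ) ^ ((p l + p v) * (p k + p i) + (p l + p u) * (p k + p i) + (p l + p v) * (p k + p j)))
        • (Y k i * Y l u * (D k j * D l v)) +
        (if l = k ∧ v = i then Y l u * D k j else 0) := by
    calc _ = Y l u * (D l v * Y k i) * D k j := by noncomm_ring
      _ = ((-1 : ℂ) ^ ((p l + p v) * (p k + p i))) • ((Y l u * Y k i) * (D l v * D k j)) +
         (if l = k ∧ v = i then Y l u * D k j else 0) := by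
        rw [hDY]
        split_ifs <;> simp [mul_add, add_mul, mul_assoc]
      _ = _ := by
        rw [hYY l u k i, hDD l v k j]
        simp [smul_smul, pow_add, mul_assoc, mul_comm, mul_left_comm]
  rw [h1, h2, smul_add, smul_smul, ← pow_add]
  rw [sgn_congr (a := (p i + p j) * (p u + p v) + _) (b := (p k + p j) * (p l + p u))]
  · abel
  · have key : (p i + p j) * (p u + p v) + ((p l + p v) * (p k + p i) + (p l + p u) * (p k + p i) + (p l + p v) * (p k + p j)) = (p k + p j) * (p l + p u) + 2 * ((p l) * (p k + p i) + p i * (p u + p v) + p j * p v + p v * p k ) := by ring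
    rw [key]; omega

lemma gl_rep {A I : Type} [Ring A] [Algebra ℂ A] [DecidableEq I] [Fintype I] (p : I → ℕ)
    (Y D : I → I → A)
    (hYY : ∀ a b c d, Y a b * Y c d = ((-1 : ℂ) ^ ((p a + p b) * (p c + p d))) • (Y c d * Y a b))
    (hDD : ∀ a b c d, D a b * D c d = ((-1 : ℂ) ^ ((p a + p b) * (p c + p d))) • (D c d * D a b))
    (hDY : ∀ a b c d, D a b * Y c d = ((-1 : ℂ) ^ ((p a + p b) * (p c + p d))) • (Y c d * D a b)
      + if a = c ∧ b = d then 1 else 0) (i j u v : I) :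
    (∑ k, Y k i * D k j) * (∑ l, Y l u * D l v) - ((-1 : ℂ) ^ ((p i + p j) * (p u + p v))) •
      ((∑ l, Y l u * D l v) * (∑ k, Y k i * D k j)) =
    (if j = u then (∑ k, Y k i * D k v) else 0) - ((-1 : ℂ) ^ ((p i + p j) * (p u + p v))) •
      (if v = i then (∑ k, Y k u * D k j) else 0) := by
  have h := fun k l => gl_pt p Y D hYY hDD hDY i j u v k l
  have h2 : (∑ l, Y l u * D l v) * (∑ k, Y k i * D k j) =
      ∑ k, ∑ l, (Y l u * D l v) * (Y k i * D k j) := by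
    rw [Finset.sum_mul_sum, Finset.sum_comm]
  rw [Finset.sum_mul_sum, h2, Finset.smul_sum, ← Finset.sum_sub_distrib]
  simp_rw [Finset.smul_sum, ← Finset.sum_sub_distrib, h, Finset.sum_sub_distrib, ← Finset.smul_sum]
  congr 1
  · by_cases hj : j = u <;> simp [hj]
  · by_cases hj : v = i <;> simp [hj]

lemma gl_rep_add {A I : Type} [Ring A] [Algebra ℂ A] [DecidableEq I] [Fintype I] (p : I → ℕ)
    (Y D : I → I → A)
    (hYY : ∀ a b c d, Y a b * Y c d = ((-1 : ℂ) ^ ((p a + p b) * (p c + p d))) • (Y c d * Y a b))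
    (hDD : ∀ a b c d, D a b * D c d = ((-1 : ℂ) ^ ((p a + p b) * (p c + p d))) • (D c d * D a b))
    (hDY : ∀ a b c d, D a b * Y c d = ((-1 : ℂ) ^ ((p a + p b) * (p c + p d))) • (Y c d * D a b)
      + if a = c ∧ b = d then 1 else 0) (i j u v : I) :
    (∑ k, Y k i * D k j) * (∑ l, Y l u * D l v) + ((-1 : ℂ) ^ ((p i + p j) * (p u + p v))) •
      (if v = i then (∑ k, Y k u * D k j) else 0) =
    (if j = u then (∑ k, Y k i * D k v) else 0) + ((-1 : ℂ) ^ ((p i + p j) * (p u + p v))) •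
      ((∑ l, Y l u * D l v) * (∑ k, Y k i * D k j)) :=
  sub_eq_sub_iff_add_eq_add.mp (gl_rep p Y D hYY hDD hDY i j u v)

section M
variable {m n m' n' : ℕ} (θ : Ind m n × Ind m n ≃ Ind m' n')

lemma exists_theta (m n : ℕ) : ∃ (m' n' : ℕ) (θ : Ind m n × Ind m n ≃ Ind m' n'),
    ∀ a b, pI (θ (a, b)) % 2 = (pI a + pI b) % 2 := by
  classical
  let P : Ind m n × Ind m n → Prop := fun q => (pI q.1 + pI q.2) % 2 = 0
  refine ⟨Fintype.card {q // P q}, Fintype.card {q // ¬ P q},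
    (Equiv.sumCompl P).symm.trans (Equiv.sumCongr (Fintype.equivFin _) (Fintype.equivFin _)), ?_⟩
  intro a b
  by_cases h : P (a, b)
  · have h' : (pI a + pI b) % 2 = 0 := h
    rw [h']
    simp [Equiv.sumCompl_symm_apply_of_pos h, pI]
  · have h' : ¬ (pI a + pI b) % 2 = 0 := h
    have : (pI a + pI b) % 2 = 1 := by omega
    rw [this]
    simp [Equiv.sumCompl_symm_apply_of_neg h, pI]

/-- shifted coordinates -/
def YM (a b : Ind m n) : Module.End ℂ (FSp m' n') := opDiv (θ (a, b)) + if a = b then 1 else 0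

/-- derivations -/
def DM (a b : Ind m n) : Module.End ℂ (FSp m' n') := dd (θ (a, b))

def eM (i j : Ind m n) : Module.End ℂ (FSp m' n') := ∑ k, YM θ k i * DM θ k j

lemma sgn_theta (hθ : ∀ a b, pI (θ (a, b)) % 2 = (pI a + pI b) % 2) (a b c d : Ind m n) : ((-1 : ℂ) ^ (pI (θ (a, b)) * pI (θ (c, d)))) =
    (-1) ^ ((pI a + pI b) * (pI c + pI d)) := by
  apply sgn_congr
  rw [Nat.mul_mod, hθ, hθ, ← Nat.mul_mod]

lemma sgn_dbl (k : ℕ) (l : ℕ) : ((-1 : ℂ) ^ ((k + k) * l)) = 1 := by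
  rw [sgn_congr (b := 0)]; simp
  have : (k + k) * l = 2 * (k * l) := by ring
  omega
lemma sgn_dbl' (k : ℕ) (l : ℕ) : ((-1 : ℂ) ^ (l * (k + k))) = 1 := by
  rw [mul_comm, sgn_dbl]

lemma eM_rel (hθ : ∀ a b, pI (θ (a, b)) % 2 = (pI a + pI b) % 2) (i j u v : Ind m n) :
    eM θ i j * eM θ u v + ((-1 : ℂ) ^ ((pI i + pI j) * (pI u + pI v))) •
      (if v = i then eM θ u j else 0) =
    (if j = u then eM θ i v else 0) + 
     ((-1 : ℂ) ^ ((pI i + pI j) * (pI u + pI v))) • (eM θ u v * eM θ i j) := by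
  unfold eM
  refine gl_rep_add pI (YM θ) (DM θ) ?_ ?_ ?_ i j u v
  · intro a b c d
    unfold YM
    by_cases h1 : a = b
    · subst h1
      have := XX_comm (θ (a, a)) (θ (c, d))
      rw [sgn_theta θ hθ, sgn_dbl, one_smul] at this
      rw [sgn_dbl, one_smul, add_mul, mul_add, this]
      split_ifs <;> noncomm_ring
    · by_cases h2 : c = d
      · subst h2
        have := XX_comm (θ (a, b)) (θ (c, c))
        rw [sgn_theta θ hθ, sgn_dbl', one_smul] at this
        rw [sgn_dbl', one_smul, mul_add, add_mul, add_mul, this]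
        split_ifs <;> noncomm_ring
      · have := XX_comm (θ (a, b)) (θ (c, d))
        rw [sgn_theta θ hθ] at this
        simp [h1, h2, this]
  · intro a b c d
    have := DD_comm (θ (a, b)) (θ (c, d))
    rw [sgn_theta θ hθ] at this
    exact this
  · intro a b c d
    unfold YM DM
    have := DX_comm (θ (a, b)) (θ (c, d))
    rw [sgn_theta θ hθ] at this
    rw [mul_add, this]
    have e : (if θ (a, b) = θ (c, d) then (1 : Module.End ℂ (FSp m' n')) else 0)
      = if a = c ∧ b = d then 1 else 0 := by
      simp only [θ.injective.eq_iff, Prod.mk.injEq]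
    rw [e]
    by_cases h2 : c = d
    · subst h2
      rw [sgn_dbl']
      simp only [one_smul, if_true, mul_one, add_mul, one_mul]; abel
    · simp [h2]

lemma Sg_pow_dbl (k : ℕ) : (Sg : Module.End ℂ (FSp m n)) ^ (k + k) = 1 := by
  rw [← two_mul, pow_mul, pow_two, Sg_sq, one_pow]

/-- generator images -/
def bgen (q : Ind m n × Ind m n) : Module.End ℂ (FSp m n ⊗[ℂ] FSp m' n') :=
  TensorProduct.map (Sg ^ (pI q.1 + pI q.2)) (eM θ q.1 q.2)

lemma bgen_rel (hθ : ∀ a b, pI (θ (a, b)) % 2 = (pI a + pI b) % 2) (i j u v : Ind m n) :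
    bgen θ (i, j) * bgen θ (u, v) - ((-1 : ℂ) ^ ((pI i + pI j) * (pI u + pI v))) •
      (bgen θ (u, v) * bgen θ (i, j)) =
    (if j = u then bgen θ (i, v) else 0) - ((-1 : ℂ) ^ ((pI i + pI j) * (pI u + pI v))) •
      (if v = i then bgen θ (u, j) else 0) := by
  unfold bgen
  simp only
  have h := eM_rel θ hθ i j u v
  refine sub_eq_sub_iff_add_eq_add.mpr ?_
  have h2 := congrArg (TensorProduct.map (Sg ^ ((pI i + pI j) + (pI u + pI v)) : Module.End ℂ (FSp m n))) h
  rw [TensorProduct.map_add_right, TensorProduct.map_add_right, TensorProduct.map_smul_right,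
    TensorProduct.map_smul_right] at h2
  rw [← TensorProduct.map_mul, ← TensorProduct.map_mul, ← pow_add, ← pow_add,
    add_comm (pI u + pI v) (pI i + pI j)]
  convert h2 using 2
  · congr 1
    split_ifs with h
    · subst h
      congr 1
      rw [show pI v + pI j + (pI u + pI v) = pI u + pI j + (pI v + pI v) by ring, pow_add Sg (pI u + pI j) (pI v + pI v), Sg_pow_dbl, mul_one]
    · simp
  · split_ifs with h
    · subst h
      congr 1
      rw [show pI i + pI j + (pI j + pI v) = pI i + pI v + (pI j + pI j) by ring, pow_add Sg (pI i + pI v) (pI j + pI j), Sg_pow_dbl, mul_one]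
    · simp

lemma exists_beta (hθ : ∀ a b, pI (θ (a, b)) % 2 = (pI a + pI b) % 2) : ∃ β : UEA (Ind m n) pI →ₐ[ℂ] Module.End ℂ (FSp m n ⊗[ℂ] FSp m' n'),
    ∀ i j, β (gen pI i j) = bgen θ (i, j) := by
  refine ⟨RingQuot.liftAlgHom ℂ ⟨FreeAlgebra.lift ℂ (bgen θ), ?_⟩, ?_⟩
  · intro x y h
    induction h with
    | basic i j k l =>
      have := bgen_rel θ hθ i j k l
      simp only [map_sub, map_mul, map_smul, FreeAlgebra.lift_ι_apply]
      rw [this]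
      split_ifs <;> simp
  · intro i j
    simp [gen]
end M

lemma exists_Theta {m n : ℕ} (ST : SuperTensor m n) {A : Type} [Ring A] [Algebra ℂ A]
    (α : Dprime m n →ₐ[ℂ] A) (β : UEA (Ind m n) pI →ₐ[ℂ] A)
    (hdiv : ∀ (i j k : Ind m n), β (gen pI i j) * α (tdiv k) =
      ((-1 : ℂ) ^ ((pI i + pI j) * pI k)) • (α (tdiv k) * β (gen pI i j)))
    (hpar : ∀ (i j : Ind m n) (k : Ind (m+1) n), β (gen pI i j) * α (tpar k) =
      ((-1 : ℂ) ^ ((pI i + pI j) * pI k)) • (α (tpar k) * β (gen pI i j))) :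
    ∃ Θ : ST.T →ₐ[ℂ] A, (∀ d, Θ (ST.inD d) = α d) ∧ ∀ u, Θ (ST.inU u) = β u := by
  let B : Dprime m n ⊗[ℂ] UEA (Ind m n) pI →ₗ[ℂ] A :=
    TensorProduct.lift ((LinearMap.mul ℂ A).compl₁₂ α.toLinearMap β.toLinearMap)
  let Θ : ST.T →ₗ[ℂ] A := B ∘ₗ ST.equiv.symm.toLinearMap
  have hΘ : ∀ d u, Θ (ST.inD d * ST.inU u) = α d * β u := by
    intro d u
    rw [← ST.equiv_tmul]
    simp [Θ, B]
  have hD : ∀ d, Θ (ST.inD d) = α d := by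
    intro d; have := hΘ d 1; simpa using this
  have hU : ∀ d, Θ (ST.inU d) = β d := by
    intro d; have := hΘ 1 d; simpa using this
  have hsp : ∀ P : ST.T → Prop, (∀ x y, P x → P y → P (x + y)) → P 0 →
      (∀ d u, P (ST.inD d * ST.inU u)) → ∀ t, P t := by
    intro P hadd h0 hb t
    obtain ⟨z, rfl⟩ := ST.equiv.surjective t
    induction z using TensorProduct.induction_on with
    | zero => simpa using h0
    | tmul d u => rw [ST.equiv_tmul]; exact hb d u
    | add x y hx hy => rw [map_add]; exact hadd _ _ hx hy
  have hDmul : ∀ d s, Θ (ST.inD d * s) = α d * Θ s := by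
    intro d
    apply hsp
    · intro x y hx hy; simp [mul_add, hx, hy]
    · simp
    · intro d' u'
      rw [← mul_assoc, ← map_mul, hΘ, hΘ, map_mul, mul_assoc]
  have hUmul : ∀ i j s, Θ (ST.inU (gen pI i j) * s) = β (gen pI i j) * Θ s := by
    intro i j
    have key : ∀ (d : Dprime m n) (u : UEA (Ind m n) pI),
        Θ (ST.inU (gen pI i j) * (ST.inD d * ST.inU u)) = β (gen pI i j) * (α d * β u) := by
      have base : ∀ u : UEA (Ind m n) pI, Θ (ST.inU (gen pI i j) * ST.inU u) =
          β (gen pI i j) * β u := by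
        intro u; rw [← map_mul, hU, map_mul]
      have gens : ∀ (g : Dprime m n) (c : ℂ), ST.inU (gen pI i j) * ST.inD g = c • (ST.inD g * ST.inU (gen pI i j)) →
          β (gen pI i j) * α g = c • (α g * β (gen pI i j)) →
          ∀ s, Θ (ST.inU (gen pI i j) * s) = β (gen pI i j) * Θ s →
           Θ (ST.inU (gen pI i j) * (ST.inD g * s)) = β (gen pI i j) * (α g * Θ s) := by
        intro g c h1 h2 s hs
        rw [← mul_assoc, h1, smul_mul_assoc, mul_assoc, map_smul, hDmul, hs, ← mul_assoc (β _), h2,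
          smul_mul_assoc, mul_assoc]
      have gen2 : ∀ d : Dprime m n, ∀ s, Θ (ST.inU (gen pI i j) * s) = β (gen pI i j) * Θ s →
           Θ (ST.inU (gen pI i j) * (ST.inD d * s)) = β (gen pI i j) * (α d * Θ s) := by
        rintro ⟨d, hd⟩
        induction hd using Algebra.adjoin_induction with
        | mem x hx =>
          rcases hx with ⟨k, rfl⟩ | ⟨k, rfl⟩
          · exact gens (tdiv k) _ (ST.comm_div i j k) (hdiv i j k)
          · exact gens (tpar k) _ (ST.comm_par i j k) (hpar i j k)
        | algebraMap r =>
          intro s hs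
          have e : (⟨algebraMap ℂ _ r, Subalgebra.algebraMap_mem _ r⟩ : Dprime m n) = algebraMap ℂ _ r := rfl
          rw [e, AlgHom.commutes, AlgHom.commutes, ← Algebra.smul_def, ← Algebra.smul_def]
          simp [hs]
        | add x y hx hy h1 h2 =>
          intro s hs
          have e : (⟨x + y, add_mem hx hy⟩ : Dprime m n) = ⟨x, hx⟩ + ⟨y, hy⟩ := rfl
          rw [e, map_add, map_add, add_mul, add_mul, mul_add, mul_add, map_add, h1 s hs, h2 s hs]
        | mul x y hx hy h1 h2 =>
          intro s hs
          have e : (⟨x * y, mul_mem hx hy⟩ : Dprime m n) = ⟨x, hx⟩ * ⟨y, hy⟩ := rfl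
          have e1 : ST.inD (⟨x, hx⟩ * ⟨y, hy⟩ : Dprime m n) = ST.inD ⟨x, hx⟩ * ST.inD ⟨y, hy⟩ := map_mul ST.inD _ _
          have e2 : α (⟨x, hx⟩ * ⟨y, hy⟩ : Dprime m n) = α ⟨x, hx⟩ * α ⟨y, hy⟩ := map_mul α _ _
          rw [e, e1, e2, mul_assoc, mul_assoc, h1 _ (by rw [h2 s hs, hDmul]), hDmul]
      intro d u
      have := gen2 d (ST.inU u) (by rw [base, hU])
      rw [this, hU]
    apply hsp
    · intro x y hx hy; simp [mul_add, hx, hy]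
    · simp
    · intro d' u'
      rw [key, hΘ]
  have hUmul' : ∀ u s, Θ (ST.inU u * s) = β u * Θ s := by
    intro u
    obtain ⟨f, rfl⟩ := RingQuot.mkAlgHom_surjective ℂ (glRel (Ind m n) pI) u
    induction f using FreeAlgebra.induction with
    | grade0 r => intro s; rw [AlgHom.commutes, AlgHom.commutes, AlgHom.commutes, ← Algebra.smul_def, ← Algebra.smul_def, map_smul]
    | grade1 x => exact hUmul x.1 x.2
    | mul a b ha hb => intro s; rw [map_mul (RingQuot.mkAlgHom ℂ (glRel (Ind m n) pI)), map_mul ST.inU, mul_assoc, ha, hb, map_mul β, mul_assoc]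
    | add a b ha hb => intro s; rw [map_add, map_add, add_mul, map_add, ha, hb, map_add, add_mul]
  refine ⟨AlgHom.ofLinearMap Θ ?_ ?_, hD, hU⟩
  · have := hD 1; simpa using this
  · intro x y
    revert x
    apply hsp
    · intro x x' hx hx'; simp [add_mul, hx, hx']
    · simp
    · intro d u
      rw [mul_assoc, hDmul, hUmul', hΘ, mul_assoc]


section pbw
variable {A Γ : Type} [Ring A] [Algebra ℂ A] [DecidableEq Γ]

def Gd (g : Γ → A) (S : Submodule ℂ A) (d : ℕ) : Submodule ℂ A :=
  S ⊔ Submodule.span ℂ {x | ∃ l : List Γ, l.length < d ∧ x = (l.map g).prod}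

lemma Gd_mono (g : Γ → A) (S : Submodule ℂ A) {d e : ℕ} (h : d ≤ e) : Gd g S d ≤ Gd g S e := by
  apply sup_le_sup_left
  apply Submodule.span_mono
  rintro x ⟨l, hl, rfl⟩
  exact ⟨l, hl.trans_le h, rfl⟩

lemma mem_Gd (g : Γ → A) (S : Submodule ℂ A) {d : ℕ} (l : List Γ) (hl : l.length < d) :
    (l.map g).prod ∈ Gd g S d :=
  Submodule.mem_sup_right (Submodule.subset_span ⟨l, hl, rfl⟩)

lemma mul_Gd (g : Γ → A) (S : Submodule ℂ A) (hSl : ∀ a, ∀ s ∈ S, a * s ∈ S) (i : Γ) {d : ℕ}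
    {x : A} (hx : x ∈ Gd g S d) : g i * x ∈ Gd g S (d + 1) := by
  have : Gd g S d ≤ (Gd g S (d+1)).comap (LinearMap.mulLeft ℂ (g i)) := by
    apply sup_le
    · intro s hs
      exact Submodule.mem_sup_left (hSl _ s hs)
    · rw [Submodule.span_le]
      rintro x ⟨l, hl, rfl⟩
      have := mem_Gd g S (i :: l) (d := d + 1) (by simpa using hl)
      simpa using this
  exact this hx

lemma one_mul_Gd (g : Γ → A) (S : Submodule ℂ A) (hSr : ∀ a, ∀ s ∈ S, s * a ∈ S)
    {x : A} (hx : x ∈ S ⊔ Submodule.span ℂ (Set.range g)) (l : List Γ) :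
    x * (l.map g).prod ∈ Gd g S (l.length + 2) := by
  have : S ⊔ Submodule.span ℂ (Set.range g) ≤
      (Gd g S (l.length + 2)).comap (LinearMap.mulRight ℂ (l.map g).prod) := by
    apply sup_le
    · intro s hs
      exact Submodule.mem_sup_left (hSr _ s hs)
    · rw [Submodule.span_le]
      rintro _ ⟨i, rfl⟩
      have := mem_Gd g S (i :: l) (d := l.length + 2) (by simp)
      simpa using this
  exact this hx

lemma perm_Gd (g : Γ → A) (S : Submodule ℂ A) (hSl : ∀ a, ∀ s ∈ S, a * s ∈ S)
    (hSr : ∀ a, ∀ s ∈ S, s * a ∈ S)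
    (hcomm : ∀ i j, ∃ c : ℂ, g i * g j - c • (g j * g i) ∈ S ⊔ Submodule.span ℂ (Set.range g))
    {l l' : List Γ} (h : l.Perm l') :
    ∃ c : ℂ, (l.map g).prod - c • (l'.map g).prod ∈ Gd g S l.length := by
  induction h with
  | nil => exact ⟨1, by simp⟩
  | cons a h ih =>
    obtain ⟨c, hc⟩ := ih
    refine ⟨c, ?_⟩
    have := mul_Gd g S hSl a hc
    simpa [mul_sub] using this
  | swap a b l =>
    obtain ⟨c, hc⟩ := hcomm b a
    refine ⟨c, ?_⟩
    have := one_mul_Gd g S hSr hc l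
    simpa [sub_mul, mul_assoc] using this
  | trans h1 h2 ih1 ih2 =>
    obtain ⟨c, hc⟩ := ih1
    obtain ⟨e, he⟩ := ih2
    refine ⟨c * e, ?_⟩
    rw [← h1.length_eq] at he
    have := add_mem hc ((Gd g S _).smul_mem c he)
    simpa [smul_sub, smul_smul] using this

lemma pbw_span (g : Γ → A) (odd : Γ → Prop) (S K : Submodule ℂ A) (hSl : ∀ a, ∀ s ∈ S, a * s ∈ S)
    (hSr : ∀ a, ∀ s ∈ S, s * a ∈ S)
    (hcomm : ∀ i j, ∃ c : ℂ, g i * g j - c • (g j * g i) ∈ S ⊔ Submodule.span ℂ (Set.range g))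
    (hodd : ∀ i, odd i → g i * g i ∈ S ⊔ Submodule.span ℂ (Set.range g))
    (hSK : S ≤ K)
    (hK : ∀ l : List Γ, (∀ i, odd i → (l : Multiset Γ).count i ≤ 1) → ∃ l' : List Γ, l.Perm l' ∧ (l'.map g).prod ∈ K)
    (l : List Γ) : (l.map g).prod ∈ K := by
  induction hd : l.length using Nat.strong_induction_on generalizing l with
  | _ d ih =>
    have hG : Gd g S d ≤ K := by
      apply sup_le hSK
      rw [Submodule.span_le]
      rintro x ⟨l', hl', rfl⟩
      exact ih _ hl' l' rfl
    have key : ∀ l', l.Perm l' → (l'.map g).prod ∈ K → (l.map g).prod ∈ K := by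
      intro l' hp hl'
      obtain ⟨c, hc⟩ := perm_Gd g S hSl hSr hcomm hp
      rw [hd] at hc
      have := add_mem (hG hc) (K.smul_mem c hl')
      simpa using this
    by_cases h : ∀ i, odd i → (l : Multiset Γ).count i ≤ 1
    · obtain ⟨l', hp, hl'⟩ := hK l h
      exact key l' hp hl'
    · push Not at h
      obtain ⟨i, hi, hc⟩ := h
      rw [Multiset.coe_count] at hc
      have h1 : i ∈ l := List.count_pos_iff.mp (by omega)
      have h2 : i ∈ l.erase i := List.count_pos_iff.mp (by rw [List.count_erase_self]; omega)
      have hp : l.Perm (i :: i :: (l.erase i).erase i) :=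
        (List.perm_cons_erase h1).trans ((List.perm_cons_erase h2).cons i)
      apply key _ hp
      have := one_mul_Gd g S hSr (hodd i hi) ((l.erase i).erase i)
      have e := hp.length_eq
      simp only [List.length_cons] at e
      rw [show ((l.erase i).erase i).length + 2 = d by omega] at this
      apply hG
      simpa [mul_assoc] using this
end pbw

/-! Application -/

section app
variable {m n : ℕ}

/-- index set for generators of sl -/
abbrev GI (m n : ℕ) := Ind m n ⊕ ((Ind m n × Ind m n) ⊕ Ind m n)

def gE (a b : Ind m n) : UEA (Ind (m+1) n) pI :=
  if a = b then gen pI z0 z0 - ((-1 : ℂ) ^ (pI a)) • gen pI (emb a) (emb a)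
    else gen pI (emb a) (emb b)

def gg : GI m n → UEA (Ind (m+1) n) pI :=
  Sum.elim (fun a => gen pI (emb a) z0) (Sum.elim (fun q => gE q.1 q.2) (fun b => gen pI z0 (emb b)))

def pG : GI m n → ℕ := Sum.elim pI (Sum.elim (fun q => pI q.1 + pI q.2) pI)

lemma pI_emb (a : Ind m n) : pI (emb a) = pI a := by cases a <;> rfl
lemma pI_z0 : pI (z0 : Ind (m+1) n) = 0 := rfl

def LS (m n : ℕ) (q : ℕ) : Submodule ℂ (UEA (Ind (m+1) n) pI) :=
  Submodule.span ℂ {x | ∃ i j, (pI i + pI j) % 2 = q % 2 ∧ x = gen pI i j}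

def AllG (m n : ℕ) : Submodule ℂ (UEA (Ind (m+1) n) pI) :=
  Submodule.span ℂ {x | ∃ i j, x = gen pI i j}

lemma gen_rel {ι : Type} [DecidableEq ι] (p : ι → ℕ) (i j k l : ι) :
    gen p i j * gen p k l - ((-1 : ℂ) ^ ((p i + p j) * (p k + p l))) • (gen p k l * gen p i j) =
    (if j = k then gen p i l else 0) - ((-1 : ℂ) ^ ((p i + p j) * (p k + p l))) •
      (if l = i then gen p k j else 0) := by
  have := RingQuot.mkAlgHom_rel ℂ (glRel.basic (p := p) i j k l)
  simp only [map_sub, map_mul, map_smul] at this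
  unfold gen
  rw [this]
  split_ifs <;> simp

lemma LS_br (p q : ℕ) {x y : UEA (Ind (m+1) n) pI} (hx : x ∈ LS m n p) (hy : y ∈ LS m n q) :
    x * y - ((-1 : ℂ) ^ (p * q)) • (y * x) ∈ AllG m n := by
  induction hx using Submodule.span_induction with
  | mem x hx =>
    obtain ⟨i, j, hij, rfl⟩ := hx
    induction hy using Submodule.span_induction with
    | mem y hy =>
      obtain ⟨k, l, hkl, rfl⟩ := hy
      have e : ((-1 : ℂ) ^ (p * q)) = (-1) ^ ((pI i + pI j) * (pI k + pI l)) := by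
        apply sgn_congr
        rw [Nat.mul_mod, ← hij, ← hkl, ← Nat.mul_mod]
      rw [e, gen_rel]
      apply sub_mem
      · split_ifs
        · exact Submodule.subset_span ⟨_, _, rfl⟩
        · exact zero_mem _
      · apply Submodule.smul_mem
        split_ifs
        · exact Submodule.subset_span ⟨_, _, rfl⟩
        · exact zero_mem _
    | zero => simp
    | add a b _ _ h1 h2 => convert add_mem h1 h2 using 1; simp only [mul_add, add_mul, smul_add]; abel
    | smul c a _ h1 => convert Submodule.smul_mem _ c h1 using 1; simp only [mul_smul_comm, smul_mul_assoc, smul_sub, smul_comm c]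
  | zero => simp
  | add a b _ _ h1 h2 => convert add_mem h1 h2 using 1; simp only [mul_add, add_mul, smul_add]; abel
  | smul c a _ h1 => convert Submodule.smul_mem _ c h1 using 1; simp only [mul_smul_comm, smul_mul_assoc, smul_sub, smul_comm c]

lemma gg_LS (γ : GI m n) : gg γ ∈ LS m n (pG γ) := by
  rcases γ with a | ⟨a, b⟩ | b
  · exact Submodule.subset_span ⟨_, _, by simp [pG, pI_emb, pI_z0], rfl⟩
  · simp only [gg, Sum.elim_inr, Sum.elim_inl, gE]
    split_ifs with h
    · subst h
      apply sub_mem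
      · exact Submodule.subset_span ⟨_, _, by simp [pG, pI_z0]; omega, rfl⟩
      · apply Submodule.smul_mem
        exact Submodule.subset_span ⟨_, _, by simp [pG, pI_emb], rfl⟩
    · exact Submodule.subset_span ⟨_, _, by simp [pG, pI_emb], rfl⟩
  · exact Submodule.subset_span ⟨_, _, by simp [pG, pI_emb, pI_z0], rfl⟩

/-- the two sided ideal -/
def JJ (m n : ℕ) : Submodule ℂ (UEA (Ind (m+1) n) pI) :=
  Submodule.span ℂ {y : UEA (Ind (m+1) n) pI |
        ∃ u v : UEA (Ind (m+1) n) pI, y = u * G1 (Ind (m+1) n) pI * v}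

lemma JJ_l : ∀ a, ∀ s ∈ JJ m n, a * s ∈ JJ m n := by
  intro a s hs
  have : JJ m n ≤ (JJ m n).comap (LinearMap.mulLeft ℂ a) := by
    conv_lhs => unfold JJ
    rw [Submodule.span_le]
    rintro x ⟨u, v, rfl⟩
    exact Submodule.subset_span ⟨a * u, v, by simp [mul_assoc]⟩
  exact this hs

lemma JJ_r : ∀ a, ∀ s ∈ JJ m n, s * a ∈ JJ m n := by
  intro a s hs
  have : JJ m n ≤ (JJ m n).comap (LinearMap.mulRight ℂ a) := by
    conv_lhs => unfold JJ
    rw [Submodule.span_le]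
    rintro x ⟨u, v, rfl⟩
    exact Submodule.subset_span ⟨u, v * a, by simp [mul_assoc]⟩
  exact this hs

lemma sum_hat {M : Type} [AddCommMonoid M] (f : Ind (m+1) n → M) :
    ∑ i, f i = f z0 + ∑ a, f (emb a) := by
  rw [Fintype.sum_sum_type, Fin.sum_univ_succ, Fintype.sum_sum_type, add_assoc]; rfl

lemma hat_cases (i : Ind (m+1) n) : i = z0 ∨ ∃ a, i = emb a := by
  rcases i with i | i
  · rcases Fin.eq_zero_or_eq_succ i with h | ⟨j, h⟩
    · left; rw [h]; rfl
    · right; exact ⟨Sum.inl j, by rw [h]; rfl⟩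
  · right; exact ⟨Sum.inr i, rfl⟩

lemma sum_sgn : ∑ a : Ind m n, ((-1 : ℂ) ^ pI a) = m - n := by
  rw [Fintype.sum_sum_type]; simp [pI]; ring

lemma ne_c (hmn : m + 1 ≠ n) : (m : ℂ) - n + 1 ≠ 0 := by
  intro h
  apply hmn
  have : ((m + 1 : ℕ) : ℂ) = n := by push_cast; linear_combination h
  exact_mod_cast this

lemma sgn_sgn (k : ℕ) : ((-1 : ℂ) ^ k) * ((-1 : ℂ) ^ k) = 1 := sq_sgn k

lemma AllG_le (hmn : m + 1 ≠ n) :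
    AllG m n ≤ JJ m n ⊔ Submodule.span ℂ (Set.range gg) := by
  have hg : ∀ γ : GI m n, gg γ ∈ JJ m n ⊔ Submodule.span ℂ (Set.range gg) := fun γ =>
    Submodule.mem_sup_right (Submodule.subset_span ⟨γ, rfl⟩)
  have hG : G1 (Ind (m+1) n) pI ∈ JJ m n ⊔ Submodule.span ℂ (Set.range gg) :=
    Submodule.mem_sup_left (Submodule.subset_span ⟨1, 1, by simp⟩)
  have hH : ∀ a : Ind m n, gen pI z0 z0 - ((-1 : ℂ) ^ (pI a)) • gen pI (emb a) (emb a) ∈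
      JJ m n ⊔ Submodule.span ℂ (Set.range gg) := by
    intro a
    have := hg (Sum.inr (Sum.inl (a, a)))
    simpa [gg, gE] using this
  have h00 : gen pI z0 z0 ∈ JJ m n ⊔ Submodule.span ℂ (Set.range gg) := by
    have h1 : G1 (Ind (m+1) n) pI + ∑ a : Ind m n, ((-1 : ℂ) ^ (pI a)) •
        (gen pI z0 z0 - ((-1 : ℂ) ^ (pI a)) • gen pI (emb a) (emb a)) =
        ((m : ℂ) - n + 1) • gen pI z0 z0 := by
      unfold G1
      rw [sum_hat]
      simp only [smul_sub, smul_smul, sq_sgn, one_smul, Finset.sum_sub_distrib, ← Finset.sum_smul,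
        sum_sgn, add_smul]
      abel
    have h2 : gen pI z0 z0 = ((m : ℂ) - n + 1)⁻¹ • (G1 (Ind (m+1) n) pI + ∑ a : Ind m n, ((-1 : ℂ) ^ (pI a)) •
        (gen pI z0 z0 - ((-1 : ℂ) ^ (pI a)) • gen pI (emb a) (emb a))) := by
      rw [h1, smul_smul, inv_mul_cancel₀ (ne_c hmn), one_smul]
    rw [h2]
    exact Submodule.smul_mem _ _ (add_mem hG (sum_mem fun a _ => Submodule.smul_mem _ _ (hH a)))
  unfold AllG
  rw [Submodule.span_le]
  rintro x ⟨i, j, rfl⟩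
  rcases hat_cases i with rfl | ⟨a, rfl⟩ <;> rcases hat_cases j with rfl | ⟨b, rfl⟩
  · exact h00
  · exact hg (Sum.inr (Sum.inr b))
  · exact hg (Sum.inl a)
  · by_cases h : a = b
    · subst h
      have : gen pI (emb a) (emb a) = ((-1 : ℂ) ^ (pI a)) • (gen pI z0 z0 -
          (gen pI z0 z0 - ((-1 : ℂ) ^ (pI a)) • gen pI (emb a) (emb a))) := by
        rw [sub_sub_cancel, smul_smul, sq_sgn, one_smul]
      rw [this]
      exact Submodule.smul_mem _ _ (sub_mem h00 (hH a))
    · have := hg (Sum.inr (Sum.inl (a, b)))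
      simpa [gg, gE, h] using this

/-- index set of monomials -/
abbrev BI (m n : ℕ) := Multiset (Ind m n) × Multiset (Ind m n × Ind m n) × Multiset (Ind m n)

def okB (b : BI m n) : Prop :=
  (∀ a, pI a = 1 → b.1.count a ≤ 1) ∧ (∀ a c, (pI a + pI c) % 2 = 1 → b.2.1.count (a, c) ≤ 1) ∧
  (∀ a, pI a = 1 → b.2.2.count a ≤ 1)

def lst (l1 : List (Ind m n)) (l2 : List (Ind m n × Ind m n)) (l3 : List (Ind m n)) : List (GI m n) :=
  l1.map Sum.inl ++ (l2.map (Sum.inr ∘ Sum.inl) ++ l3.map (Sum.inr ∘ Sum.inr))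

def monB (b : BI m n) : UEA (Ind (m+1) n) pI :=
  ((lst b.1.toList b.2.1.toList b.2.2.toList).map gg).prod

lemma lst_exists (l : List (GI m n)) : ∃ l1 l2 l3, l.Perm (lst l1 l2 l3) := by
  induction l with
  | nil => exact ⟨[], [], [], by simp [lst]⟩
  | cons x l ih =>
    obtain ⟨l1, l2, l3, h⟩ := ih
    rcases x with a | q | b
    · exact ⟨a :: l1, l2, l3, by simpa [lst] using h⟩
    · refine ⟨l1, q :: l2, l3, (h.cons _).trans ?_⟩
      simp only [lst, List.map_cons, List.cons_append, Function.comp]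
      exact List.perm_middle.symm
    · refine ⟨l1, l2, b :: l3, (h.cons _).trans ?_⟩
      simp only [lst, List.map_cons, List.cons_append, Function.comp]
      rw [← List.append_assoc, ← List.append_assoc]
      exact List.perm_middle.symm

lemma lst_perm {l1 l1' : List (Ind m n)} {l2 l2' : List (Ind m n × Ind m n)} {l3 l3' : List (Ind m n)}
    (h1 : l1.Perm l1') (h2 : l2.Perm l2') (h3 : l3.Perm l3') : (lst l1 l2 l3).Perm (lst l1' l2' l3') :=
  (h1.map _).append ((h2.map _).append (h3.map _))

lemma count_map_zero {X Y : Type} [DecidableEq Y] (f : X → Y) (l : Multiset X) (y : Y) (h : ∀ x, f x ≠ y) :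
    (l.map f).count y = 0 := by
  rw [Multiset.count_eq_zero]
  simp [h]

lemma lst_coe (l1 : List (Ind m n)) (l2 : List (Ind m n × Ind m n)) (l3 : List (Ind m n)) :
    ((lst l1 l2 l3 : List (GI m n)) : Multiset (GI m n)) = (l1 : Multiset (Ind m n)).map Sum.inl +
      ((l2 : Multiset (Ind m n × Ind m n)).map (Sum.inr ∘ Sum.inl) +
       (l3 : Multiset (Ind m n)).map (Sum.inr ∘ Sum.inr)) := by
  simp only [lst, ← Multiset.coe_add, ← Multiset.map_coe]

lemma lst_count (l1 : List (Ind m n)) (l2 : List (Ind m n × Ind m n)) (l3 : List (Ind m n)) :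
    (∀ a, ((lst l1 l2 l3 : List (GI m n)) : Multiset (GI m n)).count (Sum.inl a) =
      (l1 : Multiset (Ind m n)).count a) ∧
    (∀ q, ((lst l1 l2 l3 : List (GI m n)) : Multiset (GI m n)).count (Sum.inr (Sum.inl q)) =
      (l2 : Multiset (Ind m n × Ind m n)).count q) ∧
    (∀ a, ((lst l1 l2 l3 : List (GI m n)) : Multiset (GI m n)).count (Sum.inr (Sum.inr a)) =
      (l3 : Multiset (Ind m n)).count a) := by
  rw [lst_coe]
  refine ⟨fun a => ?_, fun a => ?_, fun a => ?_⟩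
  · rw [Multiset.count_add, Multiset.count_add, Multiset.count_map_eq_count' _ _ Sum.inl_injective,
      count_map_zero, count_map_zero] <;> simp
  · have := Multiset.count_map_eq_count' (Sum.inr ∘ Sum.inl : _ → GI m n) (l2 : Multiset (Ind m n × Ind m n)) (Sum.inr_injective.comp Sum.inl_injective) a
    rw [Multiset.count_add, Multiset.count_add, count_map_zero, count_map_zero (Sum.inr ∘ Sum.inr)]
    · rw [Function.comp_apply] at this
      rw [this]; simp
    · simp
    · simp
  · have := Multiset.count_map_eq_count' (Sum.inr ∘ Sum.inr : _ → GI m n) (l3 : Multiset (Ind m n)) (Sum.inr_injective.comp Sum.inr_injective) a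
    rw [Multiset.count_add, Multiset.count_add, count_map_zero, count_map_zero (Sum.inr ∘ Sum.inl)]
    · rw [Function.comp_apply] at this
      rw [this]; simp
    · simp
    · simp

lemma half_odd {M : Type} [Ring M] [Algebra ℂ M] (y : M) :
    y = (2⁻¹ : ℂ) • (y - ((-1 : ℂ) ^ 1) • y) := by
  module

lemma pI_mod (a : Ind m n) (h : pI a = 1) : pI a % 2 = 1 := by rw [h]

lemma U_span (hmn : m + 1 ≠ n) :
    JJ m n ⊔ Submodule.span ℂ (monB '' {b : BI m n | okB b}) = ⊤ := by
  set K := JJ m n ⊔ Submodule.span ℂ (monB '' {b : BI m n | okB b}) with hK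
  have hl : ∀ l : List (GI m n), (l.map gg).prod ∈ K := by
    apply pbw_span gg (fun γ => pG γ % 2 = 1) (JJ m n) K JJ_l JJ_r
    · intro i j
      exact ⟨_, AllG_le hmn (LS_br _ _ (gg_LS i) (gg_LS j))⟩
    · intro i hi
      have := AllG_le hmn (LS_br _ _ (gg_LS i) (gg_LS i))
      rw [sgn_congr (b := 1) (by rw [Nat.mul_mod, hi])] at this
      have h2 := Submodule.smul_mem _ (2⁻¹ : ℂ) this
      rw [half_odd (gg i * gg i)]
      exact h2
    · exact le_sup_left
    · intro l hc
      obtain ⟨l1, l2, l3, h⟩ := lst_exists l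
      have e1 := Multiset.coe_eq_coe.mp (Multiset.coe_toList (l1 : Multiset (Ind m n)))
      have e2 := Multiset.coe_eq_coe.mp (Multiset.coe_toList (l2 : Multiset (Ind m n × Ind m n)))
      have e3 := Multiset.coe_eq_coe.mp (Multiset.coe_toList (l3 : Multiset (Ind m n)))
      refine ⟨_, h.trans (lst_perm e1.symm e2.symm e3.symm), ?_⟩
      apply Submodule.mem_sup_right
      apply Submodule.subset_span
      refine ⟨(l1, l2, l3), ⟨?_, ?_, ?_⟩, rfl⟩
      · intro a ha
        have := hc (Sum.inl a) (by simp [pG, ha])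
        rw [Multiset.coe_eq_coe.mpr h, (lst_count l1 l2 l3).1] at this
        exact this
      · intro a c ha
        have := hc (Sum.inr (Sum.inl (a, c))) (by simp [pG, ha])
        rw [Multiset.coe_eq_coe.mpr h, (lst_count l1 l2 l3).2.1] at this
        exact this
      · intro a ha
        have := hc (Sum.inr (Sum.inr a)) (by simp [pG, ha])
        rw [Multiset.coe_eq_coe.mpr h, (lst_count l1 l2 l3).2.2] at this
        exact this

  set W := JJ m n ⊔ Submodule.span ℂ (Set.range fun l : List (GI m n) => (l.map gg).prod) with hW
  have hWK : W ≤ K := by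
    apply sup_le le_sup_left
    rw [Submodule.span_le]
    rintro _ ⟨l, rfl⟩
    exact hl l
  have hgW : ∀ γ : GI m n, ∀ y ∈ W, gg γ * y ∈ W := by
    intro γ y hy
    have : W ≤ W.comap (LinearMap.mulLeft ℂ (gg γ)) := by
      apply sup_le
      · intro s hs
        exact Submodule.mem_sup_left (JJ_l _ s hs)
      · rw [Submodule.span_le]
        rintro x ⟨l, rfl⟩
        exact Submodule.mem_sup_right (Submodule.subset_span ⟨γ :: l, by simp⟩)
    exact this hy
  have hxW : ∀ x : UEA (Ind (m+1) n) pI, ∀ y ∈ W, x * y ∈ W := by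
    intro x
    obtain ⟨f, rfl⟩ := RingQuot.mkAlgHom_surjective ℂ (glRel (Ind (m+1) n) pI) x
    induction f using FreeAlgebra.induction with
    | grade0 r =>
      intro y hy; rw [AlgHom.commutes, ← Algebra.smul_def]; exact W.smul_mem _ hy
    | grade1 q =>
      intro y hy
      have h1 : gen pI q.1 q.2 ∈ AllG m n := Submodule.subset_span ⟨_, _, rfl⟩
      have : JJ m n ⊔ Submodule.span ℂ (Set.range gg) ≤ W.comap (LinearMap.mulRight ℂ y) := by
        apply sup_le
        · intro s hs
          exact Submodule.mem_sup_left (JJ_r _ s hs)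
        · rw [Submodule.span_le]
          rintro _ ⟨γ, rfl⟩
          exact hgW γ y hy
      exact this (AllG_le hmn h1)
    | mul a b ha hb => intro y hy; rw [map_mul, mul_assoc]; exact ha _ (hb _ hy)
    | add a b ha hb => intro y hy; rw [map_add, add_mul]; exact add_mem (ha _ hy) (hb _ hy)
  rw [eq_top_iff]
  intro x _
  apply hWK
  have := hxW x 1 (Submodule.mem_sup_right (Submodule.subset_span ⟨[], by simp⟩))
  simpa using this

end app


section filt
variable {V : Type} [AddCommMonoid V] [Module ℂ V]

/-- operators of filtration degree at most r -/
def Fil (N : ℤ → Submodule ℂ V) (r : ℤ) : Submodule ℂ (Module.End ℂ V) where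
  carrier := {T | ∀ k, ∀ v ∈ N k, T v ∈ N (k - r)}
  add_mem' := by
    intro a b ha hb k v hv
    exact add_mem (ha k v hv) (hb k v hv)
  zero_mem' := by
    intro k v hv
    exact zero_mem _
  smul_mem' := by
    intro c a ha k v hv
    exact Submodule.smul_mem _ c (ha k v hv)

lemma Fil_mono {N : ℤ → Submodule ℂ V} (hN : ∀ k l, k ≤ l → N l ≤ N k) {r s : ℤ} (h : r ≤ s) :
    Fil N r ≤ Fil N s := by
  intro T hT k v hv
  exact hN _ _ (by omega) (hT k v hv)

lemma Fil_mul {N : ℤ → Submodule ℂ V} {r s : ℤ} {S T : Module.End ℂ V} (hS : S ∈ Fil N r)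
    (hT : T ∈ Fil N s) : S * T ∈ Fil N (r + s) := by
  intro k v hv
  have := hS _ _ (hT k v hv)
  rw [show k - (r + s) = k - s - r by ring]
  exact this

lemma Fil_one {N : ℤ → Submodule ℂ V} : (1 : Module.End ℂ V) ∈ Fil N 0 := by
  intro k v hv
  simpa using hv

lemma App_list {N : ℤ → Submodule ℂ V} (hN : ∀ k l, k ≤ l → N l ≤ N k) {Γ : Type}
    (T L : Γ → Module.End ℂ V) (r : Γ → ℤ) (hL : ∀ γ, L γ ∈ Fil N (r γ))
    (h : ∀ γ, ∃ E ∈ Fil N (r γ - 1), T γ = L γ + E) (l : List Γ) :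
    (l.map L).prod ∈ Fil N (l.map r).sum ∧
    ∃ E ∈ Fil N ((l.map r).sum - 1), (l.map T).prod = (l.map L).prod + E := by
  induction l with
  | nil => exact ⟨by simpa using Fil_one, 0, zero_mem _, by simp⟩
  | cons γ l ih =>
    obtain ⟨h1, E, hE, h2⟩ := ih
    obtain ⟨E', hE', h3⟩ := h γ
    simp only [List.map_cons, List.prod_cons, List.sum_cons]
    refine ⟨Fil_mul (hL γ) h1, L γ * E + E' * (l.map L).prod + E' * E, ?_, ?_⟩
    · refine add_mem (add_mem ?_ ?_) ?_
      · exact Fil_mono hN (by omega) (Fil_mul (hL γ) hE)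
      · exact Fil_mono hN (by omega) (Fil_mul hE' h1)
      · exact Fil_mono hN (by omega) (Fil_mul hE' hE)
    · rw [h2, h3, add_mul, mul_add, mul_add]
      simp only [add_assoc]
end filt

section tens
variable {m n m' n' : ℕ}

/-- weight -/
def wt (w : Ind m' n' → ℕ) (y : FMon m' n') : ℤ := ∑ i, ((w i * ex y i : ℕ) : ℤ)

lemma wt_add (w : Ind m' n' → ℕ) (x y : FMon m' n') (i : Ind m' n') (h : ex x = ex y + Pi.single i 1) :
    wt w x = wt w y + w i := by
  simp only [wt, h, Pi.add_apply, mul_add]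
  push_cast
  rw [Finset.sum_add_distrib]
  congr 1
  rw [Finset.sum_eq_single i]
  · simp
  · intro j _ hj; simp [hj]
  · simp

def MM (w : Ind m' n' → ℕ) (k : ℤ) : Submodule ℂ (FSp m' n') :=
  Submodule.span ℂ {v | ∃ y, k ≤ wt w y ∧ v = fmono y}

lemma MM_mono (w : Ind m' n' → ℕ) : ∀ k l, k ≤ l → MM w l ≤ MM w k := by
  intro k l h
  apply Submodule.span_mono
  rintro _ ⟨y, hy, rfl⟩
  exact ⟨y, h.trans hy, rfl⟩

lemma dd_Fil (w : Ind m' n' → ℕ) (i : Ind m' n') : dd i ∈ Fil (MM w) (w i) := by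
  intro k v hv
  have : MM w k ≤ (MM w (k - w i)).comap (dd i) := by
    conv_lhs => unfold MM
    rw [Submodule.span_le]
    rintro _ ⟨y, hy, rfl⟩
    rcases dd_spec i y with h | ⟨c, _, x', h, _, h2⟩
    · simp [h.1]
    · have := wt_add w _ _ i h2.symm
      simp only [Submodule.comap_coe, Set.mem_preimage, h]
      exact Submodule.smul_mem _ _ (Submodule.subset_span ⟨x', by omega, rfl⟩)
  exact this hv

lemma opDiv_Fil (w : Ind m' n' → ℕ) (i : Ind m' n') : opDiv i ∈ Fil (MM w) (-(w i)) := by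
  intro k v hv
  have : MM w k ≤ (MM w (k - -(w i : ℤ))).comap (opDiv i) := by
    conv_lhs => unfold MM
    rw [Submodule.span_le]
    rintro _ ⟨y, hy, rfl⟩
    rcases opDiv_spec i y with h | ⟨c, _, x', h, _, h2⟩
    · simp [h.1]
    · have := wt_add w _ _ i h2
      simp only [Submodule.comap_coe, Set.mem_preimage, h]
      exact Submodule.smul_mem _ _ (Submodule.subset_span ⟨x', by omega, rfl⟩)
  exact this hv

def NN (m n : ℕ) (w : Ind m' n' → ℕ) (k : ℤ) : Submodule ℂ (FSp m n ⊗[ℂ] FSp m' n') :=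
  Submodule.span ℂ {v | ∃ f, ∃ y ∈ MM w k, v = f ⊗ₜ y}

lemma NN_mono (w : Ind m' n' → ℕ) : ∀ k l, k ≤ l → NN m n w l ≤ NN m n w k := by
  intro k l h
  apply Submodule.span_mono
  rintro _ ⟨f, y, hy, rfl⟩
  exact ⟨f, y, MM_mono w k l h hy, rfl⟩

lemma map_Fil (w : Ind m' n' → ℕ) {r : ℤ} (A : Module.End ℂ (FSp m n)) {B : Module.End ℂ (FSp m' n')}
    (hB : B ∈ Fil (MM w) r) : TensorProduct.map A B ∈ Fil (NN m n w) r := by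
  intro k v hv
  have : NN m n w k ≤ (NN m n w (k - r)).comap (TensorProduct.map A B) := by
    conv_lhs => unfold NN
    rw [Submodule.span_le]
    rintro _ ⟨f, y, hy, rfl⟩
    simp only [Submodule.comap_coe, Set.mem_preimage, TensorProduct.map_tmul]
    exact Submodule.subset_span ⟨_, _, hB k y hy, rfl⟩
  exact this hv

/-- coefficient -/
def kap (x : FMon m n) (y : FMon m' n') : (FSp m n ⊗[ℂ] FSp m' n') →ₗ[ℂ] ℂ :=
  LinearMap.mul' ℂ ℂ ∘ₗ TensorProduct.map (Finsupp.lapply x) (Finsupp.lapply y)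

lemma kap_mono (x x' : FMon m n) (y y' : FMon m' n') :
    kap x y (fmono x' ⊗ₜ fmono y') = if x' = x ∧ y' = y then 1 else 0 := by
  simp only [kap, LinearMap.comp_apply, TensorProduct.map_tmul, fmono, Finsupp.lapply_apply,
    Finsupp.single_apply, LinearMap.mul'_apply]
  by_cases h : x' = x <;> by_cases h' : y' = y <;> simp [h, h']

lemma kap_NN (w : Ind m' n' → ℕ) (x : FMon m n) (y : FMon m' n') {k : ℤ} (h : wt w y < k)
    {v : FSp m n ⊗[ℂ] FSp m' n'} (hv : v ∈ NN m n w k) : kap x y v = 0 := by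
  have : NN m n w k ≤ LinearMap.ker (kap x y) := by
    unfold NN
    rw [Submodule.span_le]
    rintro _ ⟨f, z, hz, rfl⟩
    have hz' : z y = 0 := by
      have : MM w k ≤ LinearMap.ker (Finsupp.lapply (R := ℂ) y) := by
        unfold MM
        rw [Submodule.span_le]
        rintro _ ⟨u, hu, rfl⟩
        have : u ≠ y := by rintro rfl; omega
        simp [fmono, Finsupp.single_apply, this]
      exact this hz
    simp [kap, hz']
  exact this hv
end tens

section lead
variable {m n m' n' : ℕ} (θ : Ind m n × Ind m n ≃ Ind m' n')

def ww (i : Ind m' n') : ℕ := if (θ.symm i).1 = (θ.symm i).2 then 3 else 2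

lemma ww_le (i : Ind m' n') : 2 ≤ ww θ i ∧ ww θ i ≤ 3 := by unfold ww; split_ifs <;> simp

lemma eM_split (i j : Ind m n) : ∃ E ∈ Fil (MM (ww θ)) 1, eM θ i j = DM θ i j + E := by
  refine ⟨∑ k, opDiv (θ (k, i)) * DM θ k j, ?_, ?_⟩
  · apply sum_mem
    intro k _
    refine Fil_mono (MM_mono _) ?_ (Fil_mul (opDiv_Fil _ _) (dd_Fil _ _))
    have h1 := ww_le θ (θ (k, i))
    have h2 := ww_le θ (θ (k, j))
    omega
  · simp only [eM, YM, add_mul, Finset.sum_add_distrib]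
    rw [add_comm]
    congr 1
    simp

lemma eM_Fil (i j : Ind m n) : eM θ i j ∈ Fil (MM (ww θ)) (ww θ (θ (i, j))) := by
  obtain ⟨E, hE, h⟩ := eM_split θ i j
  rw [h]
  refine add_mem (dd_Fil _ _) (Fil_mono (MM_mono _) ?_ hE)
  have h1 := ww_le θ (θ (i, j))
  omega

/-- degree of generator -/
def rG : GI m n → ℤ := Sum.elim (fun a => ww θ (θ (a, a))) (Sum.elim (fun q => ww θ (θ q)) (fun _ => 0))

def cG : GI m n → ℂ := Sum.elim (fun a => -((-1) ^ (pI a * pI a)))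
  (Sum.elim (fun q => if q.1 = q.2 then -((-1) ^ pI q.1) else 1) (fun _ => 1))

def AG : GI m n → Module.End ℂ (FSp m n) := Sum.elim (fun a => opDiv a)
  (Sum.elim (fun q => Sg ^ (pI q.1 + pI q.2)) (fun b => dd b))

def BG : GI m n → Module.End ℂ (FSp m' n') := Sum.elim (fun a => dd (θ (a, a)))
  (Sum.elim (fun q => dd (θ q)) (fun b => 1))

def LG (γ : GI m n) : Module.End ℂ (FSp m n ⊗[ℂ] FSp m' n') := cG γ • TensorProduct.map (AG γ) (BG θ γ)

lemma cG_ne (γ : GI m n) : cG γ ≠ 0 := by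
  rcases γ with a | q | b <;> simp [cG]
  split_ifs <;> simp

lemma LG_Fil (γ : GI m n) : LG θ γ ∈ Fil (NN m n (ww θ)) (rG θ γ) := by
  apply Submodule.smul_mem
  apply map_Fil
  rcases γ with a | q | b
  · exact dd_Fil _ _
  · exact dd_Fil _ _
  · exact Fil_one

end lead


section lead2
variable {m n m' n' : ℕ} (θ : Ind m n × Ind m n ≃ Ind m' n')

def alphaL (m n m' n' : ℕ) : Module.End ℂ (FSp m n) →ₐ[ℂ] Module.End ℂ (FSp m n ⊗[ℂ] FSp m' n') :=
  Module.End.rTensorAlgHom ℂ (FSp m n) (FSp m' n')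

lemma alphaL_apply (d : Module.End ℂ (FSp m n)) : alphaL m n m' n' d = TensorProduct.map d 1 := by
  rfl

def alphaD (m n m' n' : ℕ) : Dprime m n →ₐ[ℂ] Module.End ℂ (FSp m n ⊗[ℂ] FSp m' n') :=
  (alphaL m n m' n').comp (Dprime m n).val

lemma alphaD_apply (d : Dprime m n) : alphaD m n m' n' d = TensorProduct.map d.1 1 := by
  rfl

lemma pow_sgn (S X : Module.End ℂ (FSp m n)) (p : ℕ) (h : S * X = ((-1 : ℂ) ^ p) • (X * S)) (k : ℕ) :
    S ^ k * X = ((-1 : ℂ) ^ (k * p)) • (X * S ^ k) := by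
  induction k with
  | zero => simp
  | succ k ih =>
    rw [pow_succ, mul_assoc, h, mul_smul_comm, ← mul_assoc, ih, smul_mul_assoc, smul_smul, mul_assoc,
      ← pow_add]
    congr 2
    ring

lemma map_sgn (S X : Module.End ℂ (FSp m n)) (e : Module.End ℂ (FSp m' n')) (c : ℂ) (h : S * X = c • (X * S)) :
    TensorProduct.map S e * TensorProduct.map X 1 = c • (TensorProduct.map X 1 * TensorProduct.map S e) := by
  apply TensorProduct.ext'
  intro f g
  have := congrArg (fun T : Module.End ℂ (FSp m n) => T f) h
  simp only [Module.End.mul_apply, LinearMap.smul_apply] at this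
  simp only [Module.End.mul_apply, LinearMap.smul_apply, TensorProduct.map_tmul, Module.End.one_apply, this,
    TensorProduct.smul_tmul']

lemma exists_Th (hθ : ∀ a b, pI (θ (a, b)) % 2 = (pI a + pI b) % 2) (ST : SuperTensor m n) :
    ∃ Θ : ST.T →ₐ[ℂ] Module.End ℂ (FSp m n ⊗[ℂ] FSp m' n'),
      (∀ d, Θ (ST.inD d) = TensorProduct.map d.1 1) ∧ ∀ i j, Θ (ST.inU (gen pI i j)) =
        TensorProduct.map (Sg ^ (pI i + pI j)) (eM θ i j) := by
  obtain ⟨β, hβ⟩ := exists_beta θ hθ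
  obtain ⟨Θ, h1, h2⟩ := exists_Theta ST (alphaD m n m' n') β (by
    intro i j k
    rw [hβ, alphaD_apply]
    apply map_sgn
    exact pow_sgn Sg _ _ (Sg_X k) _) (by
    intro i j k
    rw [hβ, alphaD_apply]
    apply map_sgn
    refine pow_sgn Sg _ _ ?_ _
    rcases hat_cases k with rfl | ⟨a, rfl⟩
    · rw [pI_z0, pow_zero, one_smul]
      exact Sg_0
    · rw [pI_emb]
      exact Sg_D a)
  exact ⟨Θ, fun d => by rw [h1]; rfl, fun i j => by rw [h2, hβ]; rfl⟩

lemma map_add_r (A : Module.End ℂ (FSp m n)) (B B' : Module.End ℂ (FSp m' n')) :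
    TensorProduct.map A (B + B') = TensorProduct.map A B + TensorProduct.map A B' :=
  TensorProduct.map_add_right _ _ _

lemma H_cancel {T : Type} [Ring T] [Algebra ℂ T] (d R d' u : T) (p : ℕ) (hp : p = 0 ∨ p = 1) :
    (d + R) - ((-1 : ℂ) ^ p) • (d' + u + ((-1 : ℂ) ^ (p * p)) • R) =
      d + (-((-1 : ℂ) ^ p)) • d' + (-((-1 : ℂ) ^ p)) • u := by
  rcases hp with rfl | rfl
  · simp only [pow_zero, mul_zero]; module
  · simp only [pow_one, mul_one]; module

lemma pI01 (a : Ind m n) : pI a = 0 ∨ pI a = 1 := by cases a <;> simp [pI]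

lemma sub_sum_neg {T ι : Type} [Ring T] [Algebra ℂ T] [Fintype ι] [DecidableEq ι] (d : T) (a : ι) (c : ι → ℂ) (f : ι → T) :
    d - ∑ j, c j • f j = d + (-(c a)) • f a + ∑ j ∈ Finset.univ.erase a, (-(c j)) • f j := by
  rw [← Finset.add_sum_erase _ _ (Finset.mem_univ a)]
  simp only [neg_smul, Finset.sum_neg_distrib]
  abel

lemma lead_gg (ST : SuperTensor m n) (R : ST.T)
    (φ : UEA (Ind (m+1) n) pI →ₐ[ℂ] ST.T) (hφ : IsPhi ST R φ)
    (Θ : ST.T →ₐ[ℂ] Module.End ℂ (FSp m n ⊗[ℂ] FSp m' n'))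
    (hD : ∀ d, Θ (ST.inD d) = TensorProduct.map d.1 1)
    (hU : ∀ i j, Θ (ST.inU (gen pI i j)) = TensorProduct.map (Sg ^ (pI i + pI j)) (eM θ i j))
    (γ : GI m n) : ∃ E ∈ Fil (NN m n (ww θ)) (rG θ γ - 1), Θ (φ (gg γ)) = LG θ γ + E := by
  obtain ⟨p1, p2, p3, p4⟩ := hφ
  have hd0 : ∀ d, Θ (ST.inD d) ∈ Fil (NN m n (ww θ)) 0 := by
    intro d; rw [hD]; exact map_Fil _ _ Fil_one
  have hm := NN_mono (m := m) (n := n) (ww θ)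
  rcases γ with a | ⟨a, b⟩ | b
  · obtain ⟨E, hE, he⟩ := eM_split θ a a
    have hw : ww θ (θ (a, a)) = 3 := by simp [ww]
    have h3 : ∀ j, Θ (ST.inD (tdiv j) * ST.inU (gen pI a j)) =
        TensorProduct.map (opDiv j * Sg ^ (pI a + pI j)) (eM θ a j) := by
      intro j
      rw [map_mul, hD, hU, ← TensorProduct.map_mul, one_mul]; rfl
    refine ⟨Θ (ST.inD (tdel (emb a) z0)) + (-((-1 : ℂ) ^ (pI a * pI a))) • TensorProduct.map (opDiv a) E +
      ∑ j ∈ Finset.univ.erase a, (-((-1 : ℂ) ^ (pI a * pI j))) •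
        TensorProduct.map (opDiv j * Sg ^ (pI a + pI j)) (eM θ a j), ?_, ?_⟩
    · have hr : rG θ (Sum.inl a : GI m n) - 1 = 2 := by simp [rG, hw]
      rw [hr]
      refine add_mem (add_mem ?_ ?_) ?_
      · exact Fil_mono hm (by norm_num) (hd0 _)
      · exact Submodule.smul_mem _ _ (Fil_mono hm (by norm_num) (map_Fil _ _ hE))
      · apply sum_mem
        intro j hj
        apply Submodule.smul_mem
        refine Fil_mono hm ?_ (map_Fil _ _ (eM_Fil θ a j))
        have : a ≠ j := (Finset.ne_of_mem_erase hj).symm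
        simp [ww, this]
    · have e : gg (Sum.inl a : GI m n) = gen pI (emb a) z0 := rfl
      rw [e, p2, sub_sum_neg _ a, map_add, map_add, map_smul, map_sum, h3, Sg_pow_dbl, mul_one, he, map_add_r]
      simp only [map_smul, h3]
      rw [smul_add]
      have : LG θ (Sum.inl a : GI m n) = (-((-1 : ℂ) ^ (pI a * pI a))) • TensorProduct.map (opDiv a) (DM θ a a) := rfl
      rw [this]
      abel
  · obtain ⟨E, hE, he⟩ := eM_split θ a b
    have hr : 1 ≤ rG θ (Sum.inr (Sum.inl (a, b)) : GI m n) - 1 := by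
      have := ww_le θ (θ (a, b))
      simp only [rG, Sum.elim_inr, Sum.elim_inl]
      omega
    by_cases h : a = b
    · subst h
      have e : gg (Sum.inr (Sum.inl (a, a)) : GI m n) =
        gen pI z0 z0 - ((-1 : ℂ) ^ (pI a)) • gen pI (emb a) (emb a) := by simp [gg, gE]
      refine ⟨Θ (ST.inD (tdel z0 z0)) + (-((-1 : ℂ) ^ pI a)) • Θ (ST.inD (tdel (emb a) (emb a))) +
        (-((-1 : ℂ) ^ pI a)) • TensorProduct.map (Sg ^ (pI a + pI a)) E, ?_, ?_⟩
      · refine Fil_mono hm hr (add_mem (add_mem ?_ ?_) ?_)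
        · exact Fil_mono hm (by norm_num) (hd0 _)
        · exact Submodule.smul_mem _ _ (Fil_mono hm (by norm_num) (hd0 _))
        · exact Submodule.smul_mem _ _ (map_Fil _ _ hE)
      · have p1a := p1 a a
        rw [if_pos rfl] at p1a
        have e2 : φ (gg (Sum.inr (Sum.inl (a, a)) : GI m n)) = ST.inD (tdel z0 z0) +
            (-((-1 : ℂ) ^ pI a)) • ST.inD (tdel (emb a) (emb a)) + (-((-1 : ℂ) ^ pI a)) • ST.inU (gen pI a a) := by
          rw [← H_cancel _ R _ _ _ (pI01 a), ← p1a, ← p4, e, map_sub, map_smul]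
        rw [e2, map_add, map_add, map_smul, map_smul, hU, he, map_add_r, smul_add]
        have : LG θ (Sum.inr (Sum.inl (a, a)) : GI m n) =
          (-((-1 : ℂ) ^ pI a)) • TensorProduct.map (Sg ^ (pI a + pI a)) (DM θ a a) := by
          simp [LG, cG, AG, BG, DM]
        rw [this]
        abel
    · have e : gg (Sum.inr (Sum.inl (a, b)) : GI m n) = gen pI (emb a) (emb b) := by simp [gg, gE, h]
      refine ⟨Θ (ST.inD (tdel (emb a) (emb b))) + TensorProduct.map (Sg ^ (pI a + pI b)) E, ?_, ?_⟩
      · refine Fil_mono hm hr (add_mem ?_ ?_)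
        · exact Fil_mono hm (by norm_num) (hd0 _)
        · exact map_Fil _ _ hE
      · rw [e, p1, if_neg h, add_zero, map_add, hU, he, map_add_r]
        have : LG θ (Sum.inr (Sum.inl (a, b)) : GI m n) =
          TensorProduct.map (Sg ^ (pI a + pI b)) (DM θ a b) := by
          simp [LG, cG, AG, BG, DM, h]
        rw [this]
        abel
  · refine ⟨0, zero_mem _, ?_⟩
    have e : gg (Sum.inr (Sum.inr b) : GI m n) = gen pI z0 (emb b) := rfl
    rw [e, p3, hD, add_zero]
    have : LG θ (Sum.inr (Sum.inr b) : GI m n) = TensorProduct.map (dd b) 1 := by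
      simp [LG, cG, AG, BG]
    rw [this]
    congr 1
end lead2


def cn {X : Type} [DecidableEq X] (s : Multiset X) : X → ℕ := fun a => s.count a

lemma cn_cons {X : Type} [DecidableEq X] (a : X) (l : List X) :
    cn ((a :: l : List X) : Multiset X) = cn (l : Multiset X) + Pi.single a 1 := by
  funext b
  rw [← Multiset.cons_coe]
  simp only [cn, Multiset.count_cons, Pi.add_apply, Pi.single_apply]

lemma cn_nil {X : Type} [DecidableEq X] : cn (([] : List X) : Multiset X) = 0 := rfl

lemma cn_add {X : Type} [DecidableEq X] (s t : Multiset X) : cn (s + t) = cn s + cn t := by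
  funext b; simp [cn]

lemma cn_inj {X : Type} [DecidableEq X] {s t : Multiset X} (h : cn s = cn t) : s = t := by
  ext a; exact congrFun h a

section act
variable {m n m' n' : ℕ} (θ : Ind m n × Ind m n ≃ Ind m' n')

lemma LG_tmul (γ : GI m n) (f : FSp m n) (g : FSp m' n') :
    LG θ γ (f ⊗ₜ g) = cG γ • (AG γ f ⊗ₜ[ℂ] BG θ γ g) := rfl

lemma tmul_sm (c d e : ℂ) (f : FSp m n) (g : FSp m' n') :
    c • ((d • f) ⊗ₜ[ℂ] (e • g)) = (c * (d * e)) • (f ⊗ₜ[ℂ] g) := by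
  rw [TensorProduct.smul_tmul_smul, smul_smul]

lemma A3 (l : List (Ind m n)) (x : FMon m n) (y : FMon m' n') :
    ((l.map (fun b => LG θ (Sum.inr (Sum.inr b)))).prod (fmono x ⊗ₜ fmono y) = 0 ∧ ¬ cn (l : Multiset (Ind m n)) ≤ ex x) ∨
    ∃ c : ℂ, c ≠ 0 ∧ ∃ x', (l.map (fun b => LG θ (Sum.inr (Sum.inr b)))).prod (fmono x ⊗ₜ fmono y) =
      c • (fmono x' ⊗ₜ fmono y) ∧ ex x' + cn (l : Multiset (Ind m n)) = ex x := by
  induction l with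
  | nil => exact Or.inr ⟨1, one_ne_zero, x, by simp, by rw [cn_nil, add_zero]⟩
  | cons b l ih =>
    rw [cn_cons]
    simp only [List.map_cons, List.prod_cons, Module.End.mul_apply]
    rcases ih with ⟨h1, h2⟩ | ⟨c, hc, x', h1, h2⟩
    · left
      rw [h1, map_zero]
      exact ⟨rfl, fun h => h2 (le_trans (le_add_of_nonneg_right (by simp)) h)⟩
    · rw [h1, map_smul, LG_tmul]
      have eA : AG (Sum.inr (Sum.inr b) : GI m n) = dd b := rfl
      have eB : BG θ (Sum.inr (Sum.inr b) : GI m n) (fmono y) = (1 : ℂ) • fmono y := by simp [BG]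
      rw [eA, eB]
      rcases dd_spec b x' with ⟨h3, h4⟩ | ⟨d, hd, x'', h3, _, h4⟩
      · left
        rw [h3]
        refine ⟨by simp, fun h => ?_⟩
        have e1 := congrFun h2 b
        have e2 := h b
        simp at e1 e2
        omega
      · right
        refine ⟨c * (cG (Sum.inr (Sum.inr b) : GI m n) * (d * 1)), ?_, x'', ?_, ?_⟩
        · simp [hc, hd, cG_ne]
        · rw [h3, tmul_sm, smul_smul]
        · rw [← h2, ← h4]; abel

lemma Sg_pow_fmono (k : ℕ) (x : FMon m n) : ∃ c : ℂ, c ≠ 0 ∧ (Sg ^ k : Module.End ℂ (FSp m n)) (fmono x) = c • fmono x := by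
  induction k with
  | zero => exact ⟨1, one_ne_zero, by simp⟩
  | succ k ih =>
    obtain ⟨c, hc, h⟩ := ih
    refine ⟨(-1) ^ sgE (ex x) * c, by simp [hc], ?_⟩
    rw [pow_succ, Module.End.mul_apply, Sg_fmono, map_smul, h, smul_smul]

lemma A2 (l : List (Ind m n × Ind m n)) (x : FMon m n) (y : FMon m' n') :
    ((l.map (fun b => LG θ (Sum.inr (Sum.inl b)))).prod (fmono x ⊗ₜ fmono y) = 0 ∧
      ¬ cn (l.map θ : Multiset (Ind m' n')) ≤ ex y) ∨
    ∃ c : ℂ, c ≠ 0 ∧ ∃ y', (l.map (fun b => LG θ (Sum.inr (Sum.inl b)))).prod (fmono x ⊗ₜ fmono y) =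
      c • (fmono x ⊗ₜ fmono y') ∧ ex y' + cn (l.map θ : Multiset (Ind m' n')) = ex y := by
  induction l with
  | nil => exact Or.inr ⟨1, one_ne_zero, y, by simp, by rw [List.map_nil, cn_nil, add_zero]⟩
  | cons b l ih =>
    rw [List.map_cons, List.map_cons, cn_cons]
    simp only [List.prod_cons, Module.End.mul_apply]
    rcases ih with ⟨h1, h2⟩ | ⟨c, hc, y', h1, h2⟩
    · left
      rw [h1, map_zero]
      exact ⟨rfl, fun h => h2 (le_trans (le_add_of_nonneg_right (by simp)) h)⟩
    · rw [h1, map_smul, LG_tmul]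
      have eB : BG θ (Sum.inr (Sum.inl b) : GI m n) = dd (θ b) := rfl
      obtain ⟨e, he, eA⟩ := Sg_pow_fmono (pI b.1 + pI b.2) x
      have eA : AG (Sum.inr (Sum.inl b) : GI m n) (fmono x) = e • fmono x := eA
      rw [eA, eB]
      rcases dd_spec (θ b) y' with ⟨h3, h4⟩ | ⟨d, hd, y'', h3, _, h4⟩
      · left
        rw [h3]
        refine ⟨by simp, fun h => ?_⟩
        have e1 := congrFun h2 (θ b)
        have e2 := h (θ b)
        simp only [Pi.add_apply, Pi.single_eq_same] at e1 e2
        omega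
      · right
        refine ⟨c * (cG (Sum.inr (Sum.inl b) : GI m n) * (e * d)), ?_, y'', ?_, ?_⟩
        · simp [hc, hd, cG_ne, he]
        · rw [h3, tmul_sm, smul_smul]
        · rw [← h2, ← h4]; abel

lemma A1 (l : List (Ind m n)) (x : FMon m n) (y : FMon m' n') :
    ((l.map (fun b => LG θ (Sum.inl b))).prod (fmono x ⊗ₜ fmono y) = 0 ∧
      (¬ cn (l.map (fun a => θ (a, a)) : Multiset (Ind m' n')) ≤ ex y ∨
        ∃ a, pI a = 1 ∧ 1 < ex x a + cn (l : Multiset (Ind m n)) a)) ∨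
    ∃ c : ℂ, c ≠ 0 ∧ ∃ x' y', (l.map (fun b => LG θ (Sum.inl b))).prod (fmono x ⊗ₜ fmono y) =
      c • (fmono x' ⊗ₜ fmono y') ∧ ex x' = ex x + cn (l : Multiset (Ind m n)) ∧
      ex y' + cn (l.map (fun a => θ (a, a)) : Multiset (Ind m' n')) = ex y := by
  induction l with
  | nil => exact Or.inr ⟨1, one_ne_zero, x, y, by simp, by rw [cn_nil, add_zero],
      by rw [List.map_nil, cn_nil, add_zero]⟩
  | cons b l ih =>
    rw [List.map_cons, List.map_cons, cn_cons, cn_cons]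
    simp only [List.prod_cons, Module.End.mul_apply]
    rcases ih with ⟨h1, h2 | ⟨a, ha, h2⟩⟩ | ⟨c, hc, x', y', h1, h2, h2'⟩
    · left
      rw [h1, map_zero]
      exact ⟨rfl, Or.inl fun h => h2 (le_trans (le_add_of_nonneg_right (by simp)) h)⟩
    · left
      rw [h1, map_zero]
      refine ⟨rfl, Or.inr ⟨a, ha, ?_⟩⟩
      simp only [Pi.add_apply]
      omega
    · rw [h1, map_smul, LG_tmul]
      have eB : BG θ (Sum.inl b : GI m n) = dd (θ (b, b)) := rfl
      have eA : AG (Sum.inl b : GI m n) = opDiv b := rfl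
      rw [eA, eB]
      rcases dd_spec (θ (b, b)) y' with ⟨h3, h4⟩ | ⟨d, hd, y'', h3, _, h4⟩
      · left
        rw [h3]
        refine ⟨by simp, Or.inl fun h => ?_⟩
        have e1 := congrFun h2' (θ (b, b))
        have e2 := h (θ (b, b))
        simp only [Pi.add_apply, Pi.single_eq_same] at e1 e2
        omega
      · rcases opDiv_spec b x' with ⟨h5, h6, h7⟩ | ⟨e, he, x'', h5, _, h6⟩
        · left
          rw [h5]
          refine ⟨by simp, Or.inr ⟨b, h6, ?_⟩⟩
          have e1 := congrFun h2 b
          simp only [Pi.add_apply, Pi.single_eq_same] at e1 ⊢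
          omega
        · right
          refine ⟨c * (cG (Sum.inl b : GI m n) * (e * d)), ?_, x'', y'', ?_, ?_, ?_⟩
          · simp [hc, hd, cG_ne, he]
          · rw [h3, h5, tmul_sm, smul_smul]
          · rw [h6, h2]; abel
          · rw [← h2', ← h4]; abel

/-- the list of generators of a monomial -/
def bl (b : BI m n) : List (GI m n) := lst b.1.toList b.2.1.toList b.2.2.toList

def nu (b : BI m n) : Multiset (Ind m' n') := b.1.map (fun a => θ (a, a)) + b.2.1.map θ

lemma Lb_split (b : BI m n) : ((bl b).map (LG θ)).prod =
    (b.1.toList.map (fun b => LG θ (Sum.inl b))).prod *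
    ((b.2.1.toList.map (fun b => LG θ (Sum.inr (Sum.inl b)))).prod *
     (b.2.2.toList.map (fun b => LG θ (Sum.inr (Sum.inr b)))).prod) := by
  simp [bl, lst, List.map_append, List.prod_append, List.map_map, Function.comp_def]

lemma coe_map_toList {X Y : Type} (f : X → Y) (s : Multiset X) :
    ((s.toList.map f : List Y) : Multiset Y) = s.map f := by
  rw [← Multiset.map_coe, Multiset.coe_toList]

lemma AbL (b : BI m n) (x : FMon m n) (y : FMon m' n') :
    (((bl b).map (LG θ)).prod (fmono x ⊗ₜ fmono y) = 0 ∧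
      (cn b.2.2 = ex x → cn (nu θ b) = ex y → ∃ a, pI a = 1 ∧ 1 < cn b.1 a)) ∨
    ∃ c : ℂ, c ≠ 0 ∧ ∃ x0 x' y', ((bl b).map (LG θ)).prod (fmono x ⊗ₜ fmono y) =
      c • (fmono x' ⊗ₜ fmono y') ∧ ex x0 + cn b.2.2 = ex x ∧ ex x' = ex x0 + cn b.1 ∧
      ex y' + cn (nu θ b) = ex y := by
  rw [Lb_split, Module.End.mul_apply, Module.End.mul_apply]
  unfold nu
  rw [cn_add]
  rcases A3 θ b.2.2.toList x y with ⟨h1, h2⟩ | ⟨c, hc, x0, h1, h2⟩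
  · left
    rw [h1, map_zero, map_zero]
    rw [Multiset.coe_toList] at h2
    exact ⟨rfl, fun h => absurd h.le h2⟩
  · rw [Multiset.coe_toList] at h2
    rw [h1, map_smul, map_smul]
    rcases A2 θ b.2.1.toList x0 y with ⟨h3, h4⟩ | ⟨d, hd, y1, h3, h4⟩
    · left
      rw [h3, map_zero, smul_zero]
      rw [coe_map_toList] at h4
      exact ⟨rfl, fun _ h => absurd (by rw [← h]; exact le_add_of_nonneg_left (by intro i; exact Nat.zero_le _)) h4⟩
    · rw [coe_map_toList] at h4
      rw [h3, map_smul]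
      rcases A1 θ b.1.toList x0 y1 with ⟨h5, h6⟩ | ⟨e, he, x', y', h5, h6, h7⟩
      · left
        rw [h5, smul_zero, smul_zero]
        rw [coe_map_toList, Multiset.coe_toList] at h6
        refine ⟨rfl, fun hx hy => ?_⟩
        rcases h6 with h6 | ⟨a, ha, h6⟩
        · exfalso
          apply h6
          rw [← h4] at hy
          exact (add_right_cancel hy).le
        · refine ⟨a, ha, ?_⟩
          have e1 := congrFun h2 a
          have e2 := congrFun hx a
          simp only [Pi.add_apply] at e1 e2
          omega
      · right
        rw [coe_map_toList] at h7
        rw [Multiset.coe_toList] at h6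
        refine ⟨c * (d * e), by simp [hc, hd, he], x0, x', y', ?_, h2, h6, ?_⟩
        · rw [h5, smul_smul, smul_smul, mul_assoc]
        · rw [← h4, ← h7]; abel

lemma sum_cn {X : Type} [DecidableEq X] [Fintype X] (w : X → ℕ) (s : Multiset X) :
    ∑ i, w i * cn s i = (s.map w).sum := by
  induction s using Multiset.induction_on with
  | empty => simp [cn]
  | cons a s ih =>
    have : cn (a ::ₘ s) = cn s + Pi.single a 1 := by
      funext b
      simp only [cn, Multiset.count_cons, Pi.add_apply, Pi.single_apply]
    rw [this, Multiset.map_cons, Multiset.sum_cons, ← ih]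
    simp only [Pi.add_apply, mul_add, Finset.sum_add_distrib]
    rw [add_comm]
    congr 1
    rw [Finset.sum_eq_single a]
    · simp
    · intro j _ hj; simp [hj]
    · simp

def Wb (b : BI m n) : ℕ := ((nu θ b).map (ww θ)).sum

lemma Wb_eq (b : BI m n) : ((bl b).map (rG θ)).sum = (Wb θ b : ℤ) := by
  have h : ((bl b).map (rG θ)).sum = (((bl b : List (GI m n)) : Multiset (GI m n)).map (rG θ)).sum := by
    rw [Multiset.map_coe, Multiset.sum_coe]
  rw [h, bl, lst_coe, Multiset.coe_toList, Multiset.coe_toList, Multiset.coe_toList]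
  simp only [Multiset.map_add, Multiset.map_map, Multiset.sum_add, Wb, nu]
  have h0 : (b.2.2.map (rG θ ∘ (Sum.inr ∘ Sum.inr))).sum = 0 := by
    apply Multiset.sum_eq_zero
    intro x hx
    obtain ⟨a, _, rfl⟩ := Multiset.mem_map.mp hx
    rfl
  rw [h0, add_zero]
  push_cast
  simp only [Multiset.map_map]
  rfl

lemma wt_of (y : FMon m' n') (s : Multiset (Ind m' n')) (h : ex y = cn s) (w : Ind m' n' → ℕ) :
    wt w y = ((s.map w).sum : ℕ) := by
  rw [← sum_cn]
  simp [wt, h]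

lemma indep (hθ : ∀ a b, pI (θ (a, b)) % 2 = (pI a + pI b) % 2)
    (ρ : UEA (Ind (m+1) n) pI →ₐ[ℂ] Module.End ℂ (FSp m n ⊗[ℂ] FSp m' n'))
    (hρ : ∀ γ : GI m n, ∃ E ∈ Fil (NN m n (ww θ)) (rG θ γ - 1), ρ (gg γ) = LG θ γ + E)
    (c : BI m n →₀ ℂ) (hc : ∀ b ∈ c.support, okB b)
    (h0 : ∑ b ∈ c.support, c b • ρ (monB b) = 0) : c = 0 := by
  by_contra hne
  have hS : c.support.Nonempty := Finsupp.support_nonempty_iff.mpr hne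
  obtain ⟨b1, hb1, hmax⟩ := Finset.exists_max_image c.support (Wb θ) hS
  obtain ⟨b0, hb0, hmin⟩ := Finset.exists_min_image (c.support.filter fun b => Wb θ b = Wb θ b1)
    (fun b => b.2.2.card) ⟨b1, by simp [hb1] at *⟩
  rw [Finset.mem_filter] at hb0
  obtain ⟨hb0, hW0⟩ := hb0
  obtain ⟨ok1, ok2, ok3⟩ := hc b0 hb0
  obtain ⟨x0, _, hx0⟩ := ex_surj 0 (cn b0.2.2) ok3
  obtain ⟨y0, _, hy0⟩ := ex_surj 0 (cn (nu θ b0)) (by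
    intro i hi
    obtain ⟨⟨a, b⟩, rfl⟩ := θ.surjective i
    have hp := hθ a b
    rw [hi] at hp
    have hab : a ≠ b := by rintro rfl; omega
    have h2 := ok2 a b hp.symm
    rw [nu, cn_add, Pi.add_apply]
    have e1 : cn (b0.1.map (fun a => θ (a, a))) (θ (a, b)) = 0 := by
      apply count_map_zero
      intro u hu
      have := θ.injective hu
      simp only [Prod.mk.injEq] at this
      exact hab (this.1.symm.trans this.2)
    have e2 : cn (b0.2.1.map θ) (θ (a, b)) = b0.2.1.count (a, b) :=
      Multiset.count_map_eq_count' _ _ θ.injective _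
    rw [e1, e2]
    omega)
  rcases AbL θ b0 x0 y0 with ⟨_, h2⟩ | ⟨d, hd, u0, tx, ty, h1, h2, h3, h4⟩
  · obtain ⟨a, ha, h⟩ := h2 hx0.symm hy0.symm
    have := ok1 a ha
    simp only [cn] at h
    omega
  rw [hx0] at h2
  rw [hy0] at h4
  have hu0 : ex u0 = 0 := by simpa using h2
  have hty : ex ty = 0 := by simpa using h4
  rw [hu0, zero_add] at h3
  have hwty : wt (ww θ) ty = 0 := by simp [wt, hty]
  have hwy0 : wt (ww θ) y0 = Wb θ b0 := wt_of y0 _ hy0 _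
  have hv : (fmono x0 ⊗ₜ[ℂ] fmono y0) ∈ NN m n (ww θ) (Wb θ b0) :=
    Submodule.subset_span ⟨_, _, Submodule.subset_span ⟨y0, hwy0.ge, rfl⟩, rfl⟩
  have key : ∀ b ∈ c.support, kap tx ty (ρ (monB b) (fmono x0 ⊗ₜ[ℂ] fmono y0)) = if b = b0 then d else 0 := by
    intro b hb
    have hρb : ρ (monB b) = ((bl b).map (fun γ => ρ (gg γ))).prod := by
      rw [monB, map_list_prod, List.map_map]; rfl
    obtain ⟨hL, E, hE, hT⟩ := App_list (NN_mono (m := m) (n := n) (ww θ)) (fun γ => ρ (gg γ)) (LG θ) (rG θ)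
      (LG_Fil θ) hρ (bl b)
    rw [Wb_eq] at hL hE
    have hle := hmax b hb
    rw [← hW0] at hle
    have hE0 : kap tx ty (E (fmono x0 ⊗ₜ[ℂ] fmono y0)) = 0 := by
      apply kap_NN (ww θ) tx ty _ (hE _ _ hv)
      rw [hwty]; omega
    rw [hρb, hT, LinearMap.add_apply, map_add, hE0, add_zero]
    by_cases hlt : Wb θ b = Wb θ b0
    · rcases AbL θ b x0 y0 with ⟨z1, _⟩ | ⟨e, he, u, x', y', z1, z2, z3, z4⟩
      · rw [z1, map_zero, if_neg]
        rintro rfl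
        rw [h1] at z1
        have := congrArg (kap tx ty) z1
        rw [map_smul, kap_mono] at this
        simp [hd] at this
      · by_cases hbb : b = b0
        · subst hbb
          rw [if_pos rfl, h1, map_smul, kap_mono]
          simp
        · rw [if_neg hbb, z1, map_smul, kap_mono, if_neg, smul_zero]
          rintro ⟨rfl, rfl⟩
          apply hbb
          rw [hx0] at z2
          rw [hy0, hty, zero_add] at z4
          have hcard := hmin b (by rw [Finset.mem_filter]; exact ⟨hb, hlt.trans hW0⟩)
          have hs3 : b.2.2 = b0.2.2 := by
            apply Multiset.eq_of_le_of_card_le _ hcard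
            rw [Multiset.le_iff_count]
            intro a
            have := congrFun z2 a
            simp only [Pi.add_apply, cn] at this
            omega
          rw [hs3] at z2
          have hu : ex u = 0 := by simpa using z2
          rw [hu, zero_add, h3] at z3
          have hs1 : b.1 = b0.1 := (cn_inj z3).symm
          have hn := cn_inj z4
          unfold nu at hn
          rw [hs1] at hn
          have hs2 : b.2.1 = b0.2.1 := Multiset.map_injective θ.injective (add_left_cancel hn)
          exact Prod.ext hs1 (Prod.ext hs2 hs3)
    · have hbb : b ≠ b0 := by rintro rfl; exact hlt rfl
      rw [if_neg hbb]
      apply kap_NN (ww θ) tx ty _ (hL _ _ hv)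
      rw [hwty]; omega
  have hfin := congrArg (fun T : Module.End ℂ (FSp m n ⊗[ℂ] FSp m' n') => kap tx ty (T (fmono x0 ⊗ₜ[ℂ] fmono y0))) h0
  simp only [LinearMap.sum_apply, LinearMap.smul_apply, map_sum, map_smul, LinearMap.zero_apply, map_zero] at hfin
  rw [Finset.sum_congr rfl (fun b hb => by rw [key b hb])] at hfin
  rw [Finset.sum_eq_single b0] at hfin
  · rw [if_pos rfl] at hfin
    rcases mul_eq_zero.mp hfin with h | h
    · exact Finsupp.mem_support_iff.mp hb0 h
    · exact hd h
  · intro b _ hb; simp [hb]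
  · intro h; exact absurd hb0 h
end act

lemma phi_G1 {m n : ℕ} (hmn : m + 1 ≠ n) (ST : SuperTensor m n)
    (φ : UEA (Ind (m+1) n) pI →ₐ[ℂ] ST.T) (hφ : IsPhi ST (R1elt ST) φ) :
    φ (G1 (Ind (m+1) n) pI) = 0 := by
  obtain ⟨p1, p2, p3, p4⟩ := hφ
  have hs : ∀ a : Ind m n, ((-1 : ℂ) ^ (pI a * pI a)) = (-1) ^ pI a := by
    intro a; rcases pI01 a with h | h <;> simp [h]
  rw [G1, sum_hat, map_add, p4, map_sum]
  have : ∀ a : Ind m n, φ (gen pI (emb a) (emb a)) = ST.inD (tdel (emb a) (emb a)) + ST.inU (gen pI a a) +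
      ((-1 : ℂ) ^ pI a) • R1elt ST := by
    intro a
    rw [p1, if_pos rfl, hs]
  simp only [this, Finset.sum_add_distrib, ← Finset.sum_smul, sum_sgn]
  have hE : ST.inD (En m n) = ST.inD (tdel z0 z0) + ∑ a, ST.inD (tdel (emb a) (emb a)) := by
    rw [En, sum_hat, map_add, map_sum]
  have hG : ST.inU (G1 (Ind m n) pI) = ∑ a, ST.inU (gen pI a a) := by
    rw [G1, map_sum]
  have hR : ((m : ℂ) - n + 1) • R1elt ST = -(ST.inD (En m n) + ST.inU (G1 (Ind m n) pI)) := by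
    rw [R1elt, smul_smul, mul_neg, mul_one_div_cancel (ne_c hmn), neg_smul, one_smul]
  rw [hE, hG, add_smul, one_smul] at hR
  rw [add_right_comm] 
  have h2 : ST.inD (tdel z0 z0) + (∑ a, ST.inD (tdel (emb a) (emb a)) + ∑ a, ST.inU (gen pI a a) +
      ((m : ℂ) - n) • R1elt ST) + R1elt ST =
      (((m : ℂ) - n) • R1elt ST + R1elt ST) + (ST.inD (tdel z0 z0) + ∑ a, ST.inD (tdel (emb a) (emb a)) + ∑ a, ST.inU (gen pI a a)) := by
    abel
  rw [h2, hR, neg_add_cancel]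

/-- Theorem 6.1.  For `m+1 ≠ n`, the kernel of `φ_{R₁}` is the two-sided
ideal of `U(gl(m+1|n))` generated by the first Gelfand invariant `G₁ = Σ_{i∈Î} e_ii`. -/
theorem stmt16 (m n : ℕ) (hmn : m + 1 ≠ n) (ST : SuperTensor m n)
    (φ : UEA (Ind (m+1) n) pI →ₐ[ℂ] ST.T) (hφ : IsPhi ST (R1elt ST) φ) :
    ∀ x : UEA (Ind (m+1) n) pI, φ x = 0 ↔
      x ∈ Submodule.span ℂ {y : UEA (Ind (m+1) n) pI |
        ∃ u v : UEA (Ind (m+1) n) pI, y = u * G1 (Ind (m+1) n) pI * v} := by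
  intro x
  change φ x = 0 ↔ x ∈ JJ m n
  have hJ : ∀ j ∈ JJ m n, φ j = 0 := by
    intro j hj
    have : JJ m n ≤ LinearMap.ker φ.toLinearMap := by
      unfold JJ
      rw [Submodule.span_le]
      rintro _ ⟨u, v, rfl⟩
      simp [phi_G1 hmn ST φ hφ]
    exact this hj
  refine ⟨fun hx => ?_, hJ x⟩
  have hxt : x ∈ JJ m n ⊔ Submodule.span ℂ (monB '' {b : BI m n | okB b}) := by
    rw [U_span hmn]; trivial
  obtain ⟨j, hj, y, hy, rfl⟩ := Submodule.mem_sup.mp hxt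
  rw [Finsupp.mem_span_image_iff_linearCombination] at hy
  obtain ⟨c, hcs, rfl⟩ := hy
  obtain ⟨m', n', θ, hθ⟩ := exists_theta m n
  obtain ⟨Θ, hD, hU⟩ := exists_Th θ hθ ST
  rw [map_add, hJ j hj, zero_add] at hx
  have hc0 : c = 0 := by
    apply indep θ hθ (Θ.comp φ) (lead_gg θ ST _ φ hφ Θ hD hU) c
    · intro b hb
      exact hcs hb
    · have h := congrArg Θ hx
      rw [Finsupp.linearCombination_apply, Finsupp.sum, map_sum, map_sum, map_zero] at h
      rw [← h]
      apply Finset.sum_congr rfl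
      intro b _
      rw [map_smul, map_smul]; rfl
  rw [hc0, map_zero, add_zero]
  exact hj
end
end

section
/- The homomorphism φ^s : U(sl(m+1|n)) → D'(m|n)⊗U(gl(m|n)), i.e. the restriction of φ_R to U(sl(m+1|n)) (which is independent of R), is injective. -/
set_option maxHeartbeats 1000000
set_option synthInstance.maxHeartbeats 400000

noncomputable section
open scoped TensorProduct

namespace S17

section general

variable {ι : Type} {p : ι → ℕ} [DecidableEq ι]

lemma gen_rel (i j k l : ι) : gen p i j * gen p k l =
    ((-1 : ℂ) ^ ((p i + p j) * (p k + p l))) • (gen p k l * gen p i j) +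
    ((if j = k then gen p i l else 0) -
      ((-1 : ℂ) ^ ((p i + p j) * (p k + p l))) • (if l = i then gen p k j else 0)) := by
  have h := RingQuot.mkAlgHom_rel ℂ (glRel.basic (p := p) i j k l)
  simp only [map_sub, map_mul, map_smul, apply_ite (RingQuot.mkAlgHom ℂ (glRel ι p)), map_zero] at h
  rw [sub_eq_iff_eq_add] at h
  simp only [gen]
  rw [h]; abel

def uLift {A : Type} [Ring A] [Algebra ℂ A] (f : ι → ι → A)
    (h : ∀ i j k l, f i j * f k l - ((-1 : ℂ) ^ ((p i + p j) * (p k + p l))) • (f k l * f i j) =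
      (if j = k then f i l else 0) -
      ((-1 : ℂ) ^ ((p i + p j) * (p k + p l))) • (if l = i then f k j else 0)) :
    UEA ι p →ₐ[ℂ] A :=
  RingQuot.liftAlgHom ℂ ⟨FreeAlgebra.lift ℂ (fun x : ι × ι => f x.1 x.2), by
    rintro _ _ ⟨i, j, k, l⟩
    simp only [map_sub, map_mul, map_smul, apply_ite (FreeAlgebra.lift ℂ (fun x : ι × ι => f x.1 x.2)),
      map_zero, FreeAlgebra.lift_ι_apply]
    exact h i j k l⟩

lemma uLift_gen {A : Type} [Ring A] [Algebra ℂ A] (f : ι → ι → A) (h) (i j : ι) :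
    uLift (p := p) f h (gen p i j) = f i j := by
  simp [uLift, gen, RingQuot.liftAlgHom_mkAlgHom_apply]

/-- left-multiplication induction -/
lemma u_ind {P : UEA ι p → Prop} (h1 : P 1) (hadd : ∀ x y, P x → P y → P (x + y))
    (hsmul : ∀ (c : ℂ) x, P x → P (c • x)) (hgen : ∀ i j x, P x → P (gen p i j * x)) (x) : P x := by
  obtain ⟨x, rfl⟩ := RingQuot.mkAlgHom_surjective ℂ (glRel ι p) x
  suffices h : ∀ x : FreeAlgebra ℂ (ι × ι), ∀ y, P y → P (RingQuot.mkAlgHom ℂ (glRel ι p) x * y) by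
    simpa using h x 1 h1
  intro x
  induction x with
  | grade0 r => intro y hy; rw [AlgHom.commutes, ← Algebra.smul_def]; exact hsmul _ _ hy
  | grade1 x => intro y hy; exact hgen x.1 x.2 y hy
  | mul a b ha hb => intro y hy; rw [map_mul, mul_assoc]; exact ha _ (hb _ hy)
  | add a b ha hb => intro y hy; rw [map_add, add_mul]; exact hadd _ _ (ha _ hy) (hb _ hy)

end general

lemma neg_one_sq_pow (a : ℕ) : ((-1 : ℂ) ^ a) * ((-1 : ℂ) ^ a) = 1 := by
  rw [← mul_pow]; simp

lemma pI_cases {m n : ℕ} (a : Ind m n) : pI a = 0 ∨ pI a = 1 := by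
  cases a <;> simp [pI]

@[simp] lemma pI_emb {m n : ℕ} (a : Ind m n) : pI (emb a) = pI a := by
  cases a <;> simp [pI, emb]

@[simp] lemma pI_z0 {m n : ℕ} : pI (z0 : Ind (m+1) n) = 0 := rfl

@[simp] lemma emb_inj {m n : ℕ} (a b : Ind m n) : emb a = emb b ↔ a = b := emb_injective.eq_iff
@[simp] lemma emb_z0 {m n : ℕ} (a : Ind m n) : (emb a = z0) = False := by simp [emb_ne_z0]
@[simp] lemma z0_emb {m n : ℕ} (a : Ind m n) : (z0 = emb a) = False := by simp [(emb_ne_z0 a).symm]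

/-- the copy of gl(m|n) in sl(m+1|n) -/
def gR {m n : ℕ} (a b : Ind m n) : UEA (Ind (m+1) n) pI :=
  gen pI (emb a) (emb b) - (if a = b then ((-1 : ℂ) ^ (pI a)) • gen pI z0 z0 else 0)

lemma gR_mem {m n : ℕ} (a b : Ind m n) : gR a b ∈ Usl m n := by
  by_cases h : a = b
  · subst h
    have := (Usl m n).smul_mem (mem_h a) (-(-1 : ℂ) ^ (pI a))
    convert this using 1
    rw [smul_sub, smul_smul]
    simp only [neg_mul, neg_one_sq_pow, gR, if_true]
    module
  · simpa [gR, h] using mem_gen_ne (m := m) (n := n) (i := emb a) (j := emb b) (by simpa using h)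

lemma gen_zero_comm {m n : ℕ} (a b : Ind m n) :
    gen pI (emb a) (emb b) * gen pI z0 z0 = gen pI z0 z0 * gen (pI (m := m+1) (n := n)) (emb a) (emb b) := by
  rw [gen_rel]; simp

lemma gR_rel {m n : ℕ} (i j k l : Ind m n) :
    gR i j * gR k l - ((-1 : ℂ) ^ ((pI i + pI j) * (pI k + pI l))) • (gR k l * gR i j) =
      (if j = k then gR i l else 0) -
      ((-1 : ℂ) ^ ((pI i + pI j) * (pI k + pI l))) • (if l = i then gR k j else 0) := by
  have h := gen_rel (p := pI (m := m+1) (n := n)) (emb i) (emb j) (emb k) (emb l)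
  simp only [pI_emb, emb_inj] at h
  have e1 : gR i j * gR k l - ((-1 : ℂ) ^ ((pI i + pI j) * (pI k + pI l))) • (gR k l * gR i j) =
     gen pI (emb i) (emb j) * gen pI (emb k) (emb l) -
     ((-1 : ℂ) ^ ((pI i + pI j) * (pI k + pI l))) • (gen pI (emb k) (emb l) * gen pI (emb i) (emb j)) := by
    unfold gR
    have ev : ∀ a : Ind m n, Even (pI a + pI a) := fun a => ⟨_, rfl⟩
    by_cases h1 : i = j <;> by_cases h2 : k = l
    · subst h1; subst h2
      rw [((ev i).mul_right _).neg_one_pow]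
      simp only [if_true, sub_mul, mul_sub, smul_mul_assoc, mul_smul_comm, gen_zero_comm, one_smul]
      module
    · subst h1
      rw [((ev i).mul_right _).neg_one_pow]
      simp only [h2, if_true, if_false, sub_mul, mul_sub, smul_mul_assoc, mul_smul_comm, gen_zero_comm, one_smul, zero_mul, mul_zero]
      module
    · subst h2
      rw [((ev k).mul_left _).neg_one_pow]
      simp only [h1, if_true, if_false, sub_mul, mul_sub, smul_mul_assoc, mul_smul_comm, gen_zero_comm, one_smul, zero_mul, mul_zero]
      module
    · simp [h1, h2]
  rw [e1, h]
  rw [add_sub_cancel_left]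
  unfold gR
  by_cases h1 : j = k <;> by_cases h2 : l = i
  · subst h1; subst h2
    have : ((-1 : ℂ) ^ ((pI l + pI j) * (pI j + pI l))) * (-1) ^ pI j = (-1) ^ pI l := by
      rcases pI_cases l with h | h <;> rcases pI_cases j with h' | h' <;> norm_num [h, h']
    simp only [if_true, smul_sub, smul_smul, this]
    module
  · subst h1
    simp [h2, Ne.symm h2]
  · subst h2
    simp [h1, Ne.symm h1]
  · simp [h1, h2]

def iS (m n : ℕ) : UEA (Ind m n) pI →ₐ[ℂ] Usl m n :=
  uLift (A := Usl m n) (fun a b => ⟨gR a b, gR_mem a b⟩) (by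
    intro i j k l
    apply Subtype.ext
    have := gR_rel i j k l
    split_ifs at this ⊢ <;> simpa using this)

lemma iS_gen {m n : ℕ} (a b : Ind m n) : iS m n (gen pI a b) = ⟨gR a b, gR_mem a b⟩ := by
  rw [iS, uLift_gen]

def EM {m n : ℕ} (a : Ind m n) : Usl m n := ⟨gen pI (emb a) z0, mem_gen_ne (emb_ne_z0 a)⟩
def EP {m n : ℕ} (b : Ind m n) : Usl m n := ⟨gen pI z0 (emb b), mem_gen_ne (Ne.symm (emb_ne_z0 b))⟩

lemma EM_comm {m n : ℕ} (a b : Ind m n) : EM a * EM b = ((-1 : ℂ) ^ (pI a * pI b)) • (EM b * EM a) := by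
  apply Subtype.ext
  simp only [EM, MulMemClass.mk_mul_mk]
  rw [gen_rel]; simp
lemma EP_comm {m n : ℕ} (a b : Ind m n) : EP a * EP b = ((-1 : ℂ) ^ (pI a * pI b)) • (EP b * EP a) := by
  apply Subtype.ext
  simp only [EP, MulMemClass.mk_mul_mk]
  rw [gen_rel]; simp

lemma iS_EM {m n : ℕ} (a b c : Ind m n) : iS m n (gen pI a b) * EM c =
    ((-1 : ℂ) ^ ((pI a + pI b) * pI c)) • (EM c * iS m n (gen pI a b)) +
    ((if b = c then (1 : ℂ) else 0) • EM a + (if a = b then ((-1 : ℂ) ^ (pI a)) else 0) • EM c) := by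
  rw [iS_gen]
  apply Subtype.ext
  simp only [EM, MulMemClass.mk_mul_mk, gR, Subalgebra.coe_add, Subalgebra.coe_smul, sub_mul, mul_sub]
  rw [gen_rel]
  by_cases h : a = b
  · subst h
    have h2 := gen_rel (p := pI (m := m+1) (n := n)) z0 z0 (emb c) z0
    have ev : Even (pI a + pI a) := ⟨_, rfl⟩
    simp at h2
    simp [(ev.mul_right _).neg_one_pow, h2, smul_add, smul_sub]
    split_ifs
    all_goals try abel
  · simp [h]

lemma EP_iS {m n : ℕ} (c a b : Ind m n) : EP c * iS m n (gen pI a b) =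
    ((-1 : ℂ) ^ (pI c * (pI a + pI b))) • (iS m n (gen pI a b) * EP c) +
    ((if c = a then (1 : ℂ) else 0) • EP b + (if a = b then ((-1 : ℂ) ^ (pI a)) else 0) • EP c) := by
  rw [iS_gen]
  apply Subtype.ext
  simp only [EP, MulMemClass.mk_mul_mk, gR, Subalgebra.coe_add, Subalgebra.coe_smul, sub_mul, mul_sub]
  rw [gen_rel]
  by_cases h : a = b
  · subst h
    have h2 := gen_rel (p := pI (m := m+1) (n := n)) z0 (emb c) z0 z0 
    have ev : Even (pI a + pI a) := ⟨_, rfl⟩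
    simp at h2
    simp [(ev.mul_left _).neg_one_pow, h2, smul_add, smul_sub]
    split_ifs
    all_goals try abel
  · simp [h]

lemma EP_EM {m n : ℕ} (b c : Ind m n) : EP b * EM c =
    ((-1 : ℂ) ^ (pI b * pI c)) • (EM c * EP b) +
     (-((-1 : ℂ) ^ (pI b * pI c))) • iS m n (gen pI c b) := by
  rw [iS_gen]
  apply Subtype.ext
  simp only [EP, EM, MulMemClass.mk_mul_mk, gR, Subalgebra.coe_add, Subalgebra.coe_smul]
  rw [gen_rel]
  by_cases h : b = c
  · subst h
    rcases pI_cases b with h | h <;> simp [h]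
    module
  · simp [h, Ne.symm h]


/-- product of a word -/
def wd {m n : ℕ} {A : Type} [Ring A] (y : Ind m n → A) (l : List (Ind m n)) : A := (l.map y).prod

@[simp] lemma wd_nil {m n : ℕ} {A : Type} [Ring A] (y : Ind m n → A) : wd y [] = 1 := by simp [wd]
@[simp] lemma wd_cons {m n : ℕ} {A : Type} [Ring A] (y : Ind m n → A) (a) (l : List (Ind m n)) :
    wd y (a :: l) = y a * wd y l := by simp [wd]

def SS (m n : ℕ) : Submodule ℂ (Usl m n) :=
  Submodule.span ℂ {x | ∃ (w : List (Ind m n)) (y : UEA (Ind m n) pI) (w' : List (Ind m n)),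
    x = wd EM w * (iS m n y * wd EP w')}

lemma SS_mem {m n : ℕ} (w y w') : wd EM w * (iS m n y * wd EP w') ∈ SS m n :=
  Submodule.subset_span ⟨w, y, w', rfl⟩

lemma left_closed {m n : ℕ} (x : Usl m n)
    (h : ∀ w y w', x * (wd EM w * (iS m n y * wd EP w')) ∈ SS m n) :
    ∀ z ∈ SS m n, x * z ∈ SS m n := by
  intro z hz
  induction hz using Submodule.span_induction with
  | mem z hz => obtain ⟨w, y, w', rfl⟩ := hz; exact h w y w'
  | zero => simp
  | add a b _ _ ha hb => rw [mul_add]; exact add_mem ha hb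
  | smul c a _ ha => rw [mul_smul_comm]; exact Submodule.smul_mem _ _ ha

lemma SS_EM {m n : ℕ} (a : Ind m n) : ∀ z ∈ SS m n, EM a * z ∈ SS m n := by
  apply left_closed
  intro w y w'
  have := SS_mem (a :: w) y w'
  rwa [wd_cons, mul_assoc] at this

lemma SS_gl {m n : ℕ} (a b : Ind m n) : ∀ z ∈ SS m n, iS m n (gen pI a b) * z ∈ SS m n := by
  apply left_closed
  intro w y w'
  induction w with
  | nil =>
    have := SS_mem [] (gen pI a b * y) w'
    rw [map_mul, wd_nil, one_mul, mul_assoc] at this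
    rwa [wd_nil, one_mul]
  | cons c w ih =>
    rw [wd_cons, mul_assoc, ← mul_assoc (iS m n _), iS_EM]
    simp only [add_mul, smul_mul_assoc]
    refine add_mem (Submodule.smul_mem _ _ ?_) (add_mem (Submodule.smul_mem _ _ ?_) (Submodule.smul_mem _ _ ?_))
    · rw [mul_assoc]; exact SS_EM _ _ ih
    · exact SS_EM _ _ (SS_mem _ _ _)
    · exact SS_EM _ _ (SS_mem _ _ _)

lemma SS_EP {m n : ℕ} (b : Ind m n) : ∀ z ∈ SS m n, EP b * z ∈ SS m n := by
  apply left_closed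
  intro w y w'
  induction w with
  | nil =>
    rw [wd_nil, one_mul]
    revert b w'
    refine u_ind (P := fun y => ∀ (b : Ind m n) (w' : List (Ind m n)), EP b * (iS m n y * wd EP w') ∈ SS m n)
      ?_ ?_ ?_ ?_ y
    · intro b w'
      have := SS_mem [] 1 (b :: w')
      simpa using this
    · intro x y hx hy b w'
      rw [map_add, add_mul, mul_add]; exact add_mem (hx _ _) (hy _ _)
    · intro c x hx b w'
      rw [map_smul, smul_mul_assoc, mul_smul_comm]; exact Submodule.smul_mem _ _ (hx _ _)
    · intro i j x hx b w'
      rw [map_mul, mul_assoc, ← mul_assoc (EP b), EP_iS]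
      simp only [add_mul, smul_mul_assoc]
      refine add_mem (Submodule.smul_mem _ _ ?_) (add_mem (Submodule.smul_mem _ _ ?_) (Submodule.smul_mem _ _ ?_))
      · rw [mul_assoc]; exact SS_gl _ _ _ (hx _ _)
      · exact hx _ _
      · exact hx _ _
  | cons c w ih =>
    rw [wd_cons, mul_assoc, ← mul_assoc (EP b), EP_EM]
    simp only [add_mul, smul_mul_assoc]
    refine add_mem (Submodule.smul_mem _ _ ?_) (Submodule.smul_mem _ _ ?_)
    · rw [mul_assoc]; exact SS_EM _ _ ih
    · exact SS_gl _ _ _ (SS_mem _ _ _)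

lemma ind_cases {m n : ℕ} (i : Ind (m+1) n) : i = z0 ∨ ∃ a : Ind m n, i = emb a := by
  rcases i with i | i
  · refine Fin.cases ?_ ?_ i
    · left; rfl
    · intro j; right; exact ⟨Sum.inl j, rfl⟩
  · right; exact ⟨Sum.inr i, rfl⟩

lemma SS_top {m n : ℕ} (x : Usl m n) : x ∈ SS m n := by
  have key : ∀ z ∈ SS m n, x * z ∈ SS m n := by
    obtain ⟨x, hx⟩ := x
    induction hx using Algebra.adjoin_induction with
    | mem x hx =>
      rcases hx with ⟨i, j, hij, rfl⟩ | ⟨a, rfl⟩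
      · rcases ind_cases i with rfl | ⟨a, rfl⟩ <;> rcases ind_cases j with rfl | ⟨b, rfl⟩
        · exact absurd rfl hij
        · exact SS_EP b
        · exact SS_EM a
        · have h2 : a ≠ b := fun h => hij (by rw [h])
          have := SS_gl a b
          rw [iS_gen] at this
          simp only [gR, h2, if_false, sub_zero] at this
          exact this
      · intro z hz
        have := Submodule.smul_mem _ (-(-1 : ℂ) ^ (pI a)) (SS_gl a a z hz)
        rw [← smul_mul_assoc, iS_gen] at this
        convert this using 2
        apply Subtype.ext
        simp only [Subalgebra.coe_smul, gR, if_true, smul_sub, smul_smul, neg_mul, neg_one_sq_pow]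
        module
    | algebraMap r =>
      intro z hz
      have : (⟨algebraMap ℂ _ r, Subalgebra.algebraMap_mem _ r⟩ : Usl m n) = algebraMap ℂ (Usl m n) r := rfl
      rw [this, ← Algebra.smul_def]
      exact Submodule.smul_mem _ _ hz
    | add x y hx hy h1 h2 =>
      intro z hz
      have := add_mem (h1 z hz) (h2 z hz)
      rwa [← add_mul] at this
    | mul x y hx hy h1 h2 =>
      intro z hz
      have := h1 _ (h2 z hz)
      rwa [← mul_assoc] at this
  have h1 : (1 : Usl m n) ∈ SS m n := by simpa using SS_mem (m := m) (n := n) [] 1 []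
  simpa using key 1 h1

/-- the sl part of U(gl(m|n)) relative to a base index -/
def K0 {m n : ℕ} (o : Ind m n) : Subalgebra ℂ (UEA (Ind m n) pI) :=
  Algebra.adjoin ℂ {x | (∃ a b : Ind m n, a ≠ b ∧ x = gen pI a b) ∨
    (∃ a : Ind m n, x = gen pI a a - ((-1 : ℂ) ^ (pI a + pI o)) • gen pI o o)}

def g1 {m n : ℕ} (o : Ind m n) : UEA (Ind m n) pI := (-(-1 : ℂ) ^ pI o) • gen pI o o

lemma K0_g1 {m n : ℕ} (o : Ind m n) (x)
    (hx : (∃ a b : Ind m n, a ≠ b ∧ x = gen pI a b) ∨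
    (∃ a : Ind m n, x = gen pI a a - ((-1 : ℂ) ^ (pI a + pI o)) • gen pI o o)) :
    ∃ c : ℂ, x * g1 o = g1 o * x + c • x := by
  have ev : Even (pI o + pI o) := ⟨_, rfl⟩
  have dg : ∀ a : Ind m n, gen pI a a * gen pI o o = gen pI o o * gen pI a a := by
    intro a
    rw [gen_rel, (ev.mul_left _).neg_one_pow]
    by_cases h : a = o
    · subst h; simp
    · simp [h, Ne.symm h]
  rcases hx with ⟨a, b, hab, rfl⟩ | ⟨a, rfl⟩
  · refine ⟨(-(-1 : ℂ) ^ pI o) * ((if b = o then 1 else 0) - (if o = a then 1 else 0)), ?_⟩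
    unfold g1
    rw [mul_smul_comm, gen_rel, (ev.mul_left _).neg_one_pow, mul_smul, sub_smul]
    rw [smul_mul_assoc, ← smul_add, one_smul, one_smul]
    congr 2
    split_ifs with h1 h2 h2
    · subst h1 ; exact absurd h2.symm hab
    · subst h1; simp
    · subst h2; simp
    · simp
  · refine ⟨0, ?_⟩
    simp only [g1, mul_smul_comm, sub_mul, mul_sub, smul_mul_assoc, dg, zero_smul, add_zero]
    module

lemma K0_span {m n : ℕ} (o : Ind m n) (x : UEA (Ind m n) pI) :
    x ∈ Submodule.span ℂ {x | ∃ (k : ℕ) (v : K0 o), x = g1 o ^ k * v} := by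
  set S := Submodule.span ℂ {x | ∃ (k : ℕ) (v : K0 o), x = g1 o ^ k * v} with hS
  have lc : ∀ x : UEA (Ind m n) pI, (∀ (k : ℕ) (v : K0 o), x * (g1 o ^ k * v) ∈ S) → ∀ z ∈ S, x * z ∈ S := by
    intro x h z hz
    induction hz using Submodule.span_induction with
    | mem z hz => obtain ⟨k, v, rfl⟩ := hz; exact h k v
    | zero => simp
    | add a b _ _ ha hb => rw [mul_add]; exact add_mem ha hb
    | smul c a _ ha => rw [mul_smul_comm]; exact Submodule.smul_mem _ _ ha
  have hg1 : ∀ z ∈ S, g1 o * z ∈ S := by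
    apply lc
    intro k v
    rw [← mul_assoc, ← pow_succ']
    exact Submodule.subset_span ⟨_, _, rfl⟩
  have hK : ∀ x, ((∃ a b : Ind m n, a ≠ b ∧ x = gen pI a b) ∨
    (∃ a : Ind m n, x = gen pI a a - ((-1 : ℂ) ^ (pI a + pI o)) • gen pI o o)) → ∀ z ∈ S, x * z ∈ S := by
    intro x hx
    apply lc
    intro k v
    obtain ⟨c, hc⟩ := K0_g1 o x hx
    induction k with
    | zero =>
      rw [pow_zero, one_mul]
      refine Submodule.subset_span ⟨0, ⟨x, Algebra.subset_adjoin hx⟩ * v, by simp⟩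
    | succ k ih =>
      rw [pow_succ', mul_assoc, ← mul_assoc x, hc, add_mul, smul_mul_assoc, mul_assoc]
      exact add_mem (hg1 _ ih) (Submodule.smul_mem _ _ ih)
  refine u_ind (P := fun x => x ∈ S) ?_ (fun x y => add_mem) (fun c x => Submodule.smul_mem _ c) ?_ x
  · exact Submodule.subset_span ⟨0, 1, by simp⟩
  · intro i j z hz
    by_cases h : i = j
    · subst h
      have h1 := hK _ (Or.inr ⟨i, rfl⟩) z hz
      have h2 := Submodule.smul_mem _ (-(-1 : ℂ) ^ pI i) (hg1 z hz)
      have := add_mem h1 h2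
      rw [g1, ← smul_mul_assoc, ← add_mul, smul_smul] at this
      convert this using 2
      rw [pow_add]
      module
    · exact hK _ (Or.inl ⟨i, j, h, rfl⟩) z hz

/-! Ordered monomials via multisets -/

def Good {m n : ℕ} (s : Multiset (Ind m n)) : Prop := ∀ j : Fin n, s.count (Sum.inr j) ≤ 1

lemma wd_perm {m n : ℕ} {A : Type} [Ring A] [Algebra ℂ A] (y : Ind m n → A)
    (hy : ∀ a b, y a * y b = ((-1 : ℂ) ^ (pI a * pI b)) • (y b * y a))
    {l l' : List (Ind m n)} (h : l.Perm l') : ∃ c : ℂ, wd y l = c • wd y l' := by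
  induction h with
  | nil => exact ⟨1, by simp⟩
  | cons a _ ih => obtain ⟨c, hc⟩ := ih; exact ⟨c, by simp [hc]⟩
  | swap a b l =>
    refine ⟨(-1 : ℂ) ^ (pI b * pI a), ?_⟩
    simp only [wd_cons, ← mul_assoc, hy b a, smul_mul_assoc]
  | trans _ _ h1 h2 =>
    obtain ⟨c, hc⟩ := h1
    obtain ⟨d, hd⟩ := h2
    exact ⟨c * d, by rw [hc, hd, smul_smul]⟩

lemma wd_bad {m n : ℕ} {A : Type} [Ring A] [Algebra ℂ A] (y : Ind m n → A)
    (hy : ∀ a b, y a * y b = ((-1 : ℂ) ^ (pI a * pI b)) • (y b * y a))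
    (l : List (Ind m n)) (h : ¬ Good (l : Multiset (Ind m n))) : wd y l = 0 := by
  simp only [Good, not_forall, not_le] at h
  obtain ⟨j, hj⟩ := h
  have h2 : Multiset.replicate 2 (Sum.inr j) ≤ (l : Multiset (Ind m n)) :=
    Multiset.le_count_iff_replicate_le.1 hj
  obtain ⟨t, ht⟩ := Multiset.le_iff_exists_add.1 h2
  induction t using Quotient.inductionOn with
  | h t =>
    have hp : l.Perm (Sum.inr j :: Sum.inr j :: t) := by
      apply Multiset.coe_eq_coe.1
      rw [ht]; rfl
    obtain ⟨c, hc⟩ := wd_perm y hy hp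
    have h0 : y (Sum.inr j) * y (Sum.inr j) = 0 := by
      have := hy (Sum.inr j) (Sum.inr j)
      simp only [pI, Sum.elim_inr, mul_one, pow_one] at this
      rw [neg_smul, one_smul, eq_neg_iff_add_eq_zero, ← two_smul ℂ] at this
      exact (smul_eq_zero.1 this).resolve_left (by norm_num)
    rw [hc, wd_cons, wd_cons, ← mul_assoc, h0, zero_mul, smul_zero]

abbrev GM (m n : ℕ) := {s : Multiset (Ind m n) // Good s}

def Theta {m n : ℕ} (o : Ind m n) : ((GM m n × ℕ × GM m n) →₀ K0 o) →ₗ[ℂ] Usl m n :=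
  Finsupp.lsum ℂ fun i => 
    (LinearMap.mulLeft ℂ (wd EM i.1.1.toList)) ∘ₗ (LinearMap.mulRight ℂ (wd EP i.2.2.1.toList)) ∘ₗ
     (iS m n).toLinearMap ∘ₗ (LinearMap.mulLeft ℂ (g1 o ^ i.2.1)) ∘ₗ (K0 o).val.toLinearMap

lemma Theta_single {m n : ℕ} (o : Ind m n) (i) (v : K0 o) :
    Theta o (Finsupp.single i v) = wd EM i.1.1.toList * (iS m n (g1 o ^ i.2.1 * v) * wd EP i.2.2.1.toList) := by
  simp [Theta]

lemma Theta_surj {m n : ℕ} (o : Ind m n) (x : Usl m n) : ∃ c, Theta o c = x := by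
  change x ∈ LinearMap.range (Theta o)
  have hx := SS_top x
  refine (Submodule.span_le.2 ?_ : SS m n ≤ _) hx
  rintro _ ⟨w, y, w', rfl⟩
  have hy := K0_span o y
  induction hy using Submodule.span_induction with
  | mem y hy =>
    obtain ⟨k, v, rfl⟩ := hy
    by_cases hw : Good (w : Multiset (Ind m n))
    swap
    · rw [wd_bad _ EM_comm _ hw, zero_mul]; exact zero_mem _
    by_cases hw' : Good (w' : Multiset (Ind m n))
    swap
    · rw [wd_bad _ EP_comm _ hw', mul_zero, mul_zero]; exact zero_mem _
    have p1 : w.Perm (w : Multiset (Ind m n)).toList := by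
      apply Multiset.coe_eq_coe.1; simp
    have p2 : w'.Perm (w' : Multiset (Ind m n)).toList := by
      apply Multiset.coe_eq_coe.1; simp
    obtain ⟨c, hc⟩ := wd_perm (EM (m := m) (n := n)) EM_comm p1
    obtain ⟨d, hd⟩ := wd_perm (EP (m := m) (n := n)) EP_comm p2
    rw [hc, hd, smul_mul_assoc, mul_smul_comm, mul_smul_comm]
    refine Submodule.smul_mem _ _ (Submodule.smul_mem _ _ ?_)
    exact ⟨Finsupp.single (⟨_, hw⟩, k, ⟨_, hw'⟩) v, Theta_single o _ v⟩
  | zero => simp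
  | add a b _ _ ha hb => 
    rw [map_add, add_mul, mul_add]; exact add_mem ha hb
  | smul c a _ ha => rw [map_smul, smul_mul_assoc, mul_smul_comm]; exact Submodule.smul_mem _ _ ha


/-! Operators on F -/

@[simp] lemma mkOp_fmono {m n : ℕ} {M : Type} [AddCommGroup M] [Module ℂ M] (g : FMon m n → M) (x) :
    mkOp g (fmono x) = g x := by
  simp [mkOp, fmono]

lemma F_ext {m n : ℕ} {M : Type} [AddCommGroup M] [Module ℂ M] {f g : FSp m n →ₗ[ℂ] M}
    (h : ∀ x, f (fmono x) = g (fmono x)) : f = g := by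
  apply Finsupp.lhom_ext'
  intro x
  apply LinearMap.ext_ring
  exact h x

/-- parity involution -/
def sg {m n : ℕ} : Module.End ℂ (FSp m n) := mkOp fun x => ((-1 : ℂ) ^ cntA x.2.2) • fmono x

/-- multiplication by a power of `t_0` -/
def shf {m n : ℕ} (κ : ℤ) : Module.End ℂ (FSp m n) := mkOp fun x => fmono (x.1 + κ, x.2)

lemma cntA_true {n : ℕ} (b : Fin n → Bool) (i : Fin n) (h : b i = false) :
    cntA (Function.update b i true) = cntA b + 1 := by
  unfold cntA
  have : (Finset.univ.filter fun j => Function.update b i true j = true) =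
      insert i (Finset.univ.filter fun j => b j = true) := by
    ext j
    by_cases hj : j = i
    · subst hj; simp
    · simp [hj]
  rw [this, Finset.card_insert_of_notMem (by simp [h])]

lemma cntA_false {n : ℕ} (b : Fin n → Bool) (i : Fin n) (h : b i = true) :
    cntA b = cntA (Function.update b i false) + 1 := by
  have := cntA_true (Function.update b i false) i (by simp)
  rw [← this]
  congr 1
  simp [← h]

lemma sg_sq {m n : ℕ} : (sg : Module.End ℂ (FSp m n)) * sg = 1 := by
  apply F_ext
  intro x
  simp [sg, smul_smul, neg_one_sq_pow]

lemma sg_div {m n : ℕ} (a : Ind m n) : sg * opDiv a = ((-1 : ℂ) ^ pI a) • (opDiv a * sg) := by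
  apply F_ext
  intro x
  rcases a with i | i
  · simp [sg, opDiv, opDivE, pI]
  · simp only [sg, opDiv, opDivO, pI, Sum.elim_inr, Module.End.mul_apply, LinearMap.smul_apply,
      mkOp_fmono, map_smul]
    by_cases h : x.2.2 i = true
    · simp [h]
    · simp only [h, if_false, map_smul, mkOp_fmono, Bool.false_eq_true]
      rw [cntA_true _ _ (by simpa using h), pow_succ]
      module

lemma sg_par {m n : ℕ} (a : Ind (m+1) n) : sg * opPar a = ((-1 : ℂ) ^ pI a) • (opPar a * sg) := by
  apply F_ext
  intro x
  rcases a with i | i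
  · refine Fin.cases ?_ ?_ i
    · simp [sg, opPar, opPar0, pI, smul_smul, mul_comm]
    · intro i; simp [sg, opPar, opParE, pI, smul_smul, mul_comm]
  · simp only [sg, opPar, opParO, pI, Sum.elim_inr, Module.End.mul_apply, LinearMap.smul_apply,
      mkOp_fmono, map_smul]
    by_cases h : x.2.2 i = true
    · simp only [h, if_true, map_smul, mkOp_fmono]
      rw [cntA_false _ _ h, pow_succ]
      module
    · simp [h]

lemma sg_pow_comm {m n : ℕ} (k c : ℕ) (A : Module.End ℂ (FSp m n))
    (h : sg * A = ((-1 : ℂ) ^ c) • (A * sg)) :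
    sg ^ k * A = ((-1 : ℂ) ^ (k * c)) • (A * sg ^ k) := by
  induction k with
  | zero => simp
  | succ k ih =>
    rw [pow_succ, mul_assoc, h, mul_smul_comm, ← mul_assoc, ih, smul_mul_assoc, smul_smul, mul_assoc]
    congr 1
    rw [← pow_add]; ring

lemma shf_sg {m n : ℕ} (κ : ℤ) : sg * shf κ = shf κ * (sg : Module.End ℂ (FSp m n)) := by
  apply F_ext
  intro x
  simp [sg, shf]

lemma shf_div {m n : ℕ} (κ : ℤ) (a : Ind m n) : opDiv a * shf κ = shf κ * opDiv a := by
  apply F_ext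
  intro x
  rcases a with i | i
  · simp [opDiv, opDivE, shf, add_sub_right_comm]
  · simp only [opDiv, opDivO, shf, Sum.elim_inr, Module.End.mul_apply, mkOp_fmono]
    split_ifs <;> simp [add_sub_right_comm]

lemma shf_par {m n : ℕ} (κ : ℤ) (a : Ind m n) : opPar (emb a) * shf κ = shf κ * opPar (emb a) := by
  apply F_ext
  intro x
  rcases a with i | i
  · simp [opPar, opParE, shf, emb, add_right_comm]
  · simp only [opPar, opParO, shf, emb, Sum.map_inr, id, Sum.elim_inr, Module.End.mul_apply, mkOp_fmono]
    split_ifs <;> simp [add_right_comm]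

lemma shf_par0 {m n : ℕ} (κ : ℤ) :
   (opPar z0 : Module.End ℂ (FSp m n)) * shf κ = shf κ * (opPar z0 + (κ : ℂ) • 1) := by
  apply F_ext
  intro x
  simp [opPar, opPar0, shf, z0, add_smul]

lemma shf_inj {m n : ℕ} (κ : ℤ) : shf (-κ) * shf κ = (1 : Module.End ℂ (FSp m n)) := by
  apply F_ext
  intro x
  simp [shf]

/-- monomial of a multiset -/
def mon {m n : ℕ} (s : Multiset (Ind m n)) : FMon m n :=
  (-(s.card : ℤ), fun i => s.count (Sum.inl i), fun j => decide (Sum.inr j ∈ s))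

lemma mon_inj {m n : ℕ} {s t : Multiset (Ind m n)} (hs : Good s) (ht : Good t) (h : mon s = mon t) : s = t := by
  ext a
  simp only [mon, Prod.mk.injEq] at h
  rcases a with i | j
  · exact congrFun h.2.1 i
  · have h1 := congrFun h.2.2 j
    have h2 := hs j
    have h3 := ht j
    simp only [decide_eq_decide] at h1
    by_cases hj : Sum.inr j ∈ s
    · have h4 := Multiset.count_pos.2 hj
      have h5 := Multiset.count_pos.2 (h1.1 hj)
      omega
    · rw [Multiset.count_eq_zero_of_notMem hj, Multiset.count_eq_zero_of_notMem (fun h => hj (h1.2 h))]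

lemma opDiv_mon {m n : ℕ} (a : Ind m n) (s : Multiset (Ind m n)) (h : Good (a ::ₘ s)) :
    ∃ c : ℂ, c ≠ 0 ∧ opDiv a (fmono (mon s)) = c • fmono (mon (a ::ₘ s)) := by
  rcases a with i | j
  · refine ⟨1, one_ne_zero, ?_⟩
    simp only [opDiv, opDivE, Sum.elim_inl, mkOp_fmono, one_smul]
    congr 1
    simp only [mon, Prod.mk.injEq]
    refine ⟨by simp; ring, ?_, ?_⟩
    · ext k
      by_cases hk : k = i
      · subst hk; simp
      · simp [hk]
    · ext k; simp
  · have hj : Sum.inr j ∉ s := by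
      intro h1
      have := h j
      have h2 := Multiset.count_pos.2 h1
      simp at this
      exact this h1
    refine ⟨(-1 : ℂ) ^ (cntB (mon s).2.2 j), by simp, ?_⟩
    simp only [opDiv, opDivO, Sum.elim_inr, mkOp_fmono]
    rw [if_neg (by simp [mon, hj])]
    congr 2
    simp only [mon, Prod.mk.injEq]
    refine ⟨by simp; ring, ?_, ?_⟩
    · ext k; simp
    · ext k
      by_cases hk : k = j
      · subst hk; simp
      · simp [hk]

lemma opPar_mon {m n : ℕ} (a : Ind m n) (s : Multiset (Ind m n)) (h : Good s) (ha : a ∈ s) :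
    ∃ c : ℂ, c ≠ 0 ∧ opPar (emb a) (fmono (mon s)) = c • fmono (mon (s.erase a)) := by
  have hcard : -(s.card : ℤ) + 1 = -((s.erase a).card : ℤ) := by
    have := Multiset.card_erase_add_one ha
    omega
  rcases a with i | j
  · refine ⟨(s.count (Sum.inl i) : ℂ), ?_, ?_⟩
    · have := Multiset.count_pos.2 ha
      exact_mod_cast this.ne'
    simp only [opPar, opParE, emb, Sum.map_inl, Sum.elim_inl, Fin.cases_succ, mkOp_fmono]
    simp only [mon]
    congr 2
    simp only [Prod.mk.injEq]
    refine ⟨hcard, ?_, ?_⟩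
    · ext k
      by_cases hk : k = i
      · subst hk; simp
      · rw [Multiset.count_erase_of_ne (by simpa using hk)]; simp [hk]
    · ext k; simp [Multiset.mem_erase_of_ne]
  · refine ⟨(-1 : ℂ) ^ (cntB (mon s).2.2 j), by simp, ?_⟩
    simp only [opPar, opParO, emb, Sum.map_inr, id, Sum.elim_inr, mkOp_fmono]
    rw [if_pos (by simpa [mon] using ha)]
    congr 2
    simp only [mon, Prod.mk.injEq]
    refine ⟨hcard, ?_, ?_⟩
    · ext k; rw [Multiset.count_erase_of_ne (by simp)]
    · ext k
      by_cases hk : k = j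
      · subst hk
        have : Sum.inr k ∉ s.erase (Sum.inr k) := by
          rw [← Multiset.count_eq_zero, Multiset.count_erase_self]
          have := h k; omega
        simp [this]
      · simp [hk, Multiset.mem_erase_of_ne]

lemma opPar_mon0 {m n : ℕ} (a : Ind m n) (s : Multiset (Ind m n)) (ha : a ∉ s) :
    opPar (emb a) (fmono (mon s)) = 0 := by
  rcases a with i | j
  · simp [opPar, opParE, emb, mon, ha]
  · simp [opPar, opParO, emb, mon, ha]

lemma opPar0_mon {m n : ℕ} : opPar z0 (fmono (mon (0 : Multiset (Ind m n)))) = 0 := by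
  simp [opPar, opPar0, z0, mon]

lemma sg_mon {m n : ℕ} : sg (fmono (mon (0 : Multiset (Ind m n)))) = fmono (mon 0) := by
  simp [sg, mon, cntA]

lemma good_le {m n : ℕ} {s t : Multiset (Ind m n)} (h : s ≤ t) (ht : Good t) : Good s :=
  fun j => (Multiset.count_le_of_le _ h).trans (ht j)

lemma wd_div {m n : ℕ} (l : List (Ind m n)) (h : Good (l : Multiset (Ind m n))) :
    ∃ c : ℂ, c ≠ 0 ∧ wd opDiv l (fmono (mon 0)) = c • fmono (mon (l : Multiset (Ind m n))) := by
  induction l with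
  | nil => exact ⟨1, one_ne_zero, by simp⟩
  | cons a l ih =>
    have h' : Good (a ::ₘ (l : Multiset (Ind m n))) := by simpa using h
    obtain ⟨c, hc, e⟩ := ih (good_le (Multiset.le_cons_self _ a) h')
    obtain ⟨d, hd, e'⟩ := opDiv_mon a _ h'
    refine ⟨c * d, mul_ne_zero hc hd, ?_⟩
    rw [wd_cons, Module.End.mul_apply, e, map_smul, e', smul_smul]
    simp

lemma wd_par {m n : ℕ} (s : Multiset (Ind m n)) (hs : Good s) (l : List (Ind m n)) :
    ((l : Multiset (Ind m n)) ≤ s → ∃ c : ℂ, c ≠ 0 ∧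
      wd (fun b => opPar (emb b)) l (fmono (mon s)) = c • fmono (mon (s - (l : Multiset (Ind m n))))) ∧
    (¬ (l : Multiset (Ind m n)) ≤ s → wd (fun b => opPar (emb b)) l (fmono (mon s)) = 0) := by
  induction l with
  | nil => exact ⟨fun _ => ⟨1, one_ne_zero, by simp⟩, fun h => absurd (Multiset.zero_le _) h⟩
  | cons a l ih =>
    by_cases hl : (l : Multiset (Ind m n)) ≤ s
    · obtain ⟨c, hc, e⟩ := ih.1 hl
      rw [wd_cons, Module.End.mul_apply, e, map_smul]
      have hiff : ((a :: l : List (Ind m n)) : Multiset (Ind m n)) ≤ s ↔ a ∈ s - (l : Multiset (Ind m n)) := by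
        rw [← Multiset.cons_coe, ← Multiset.singleton_add, ← le_tsub_iff_right hl, Multiset.singleton_le]
      rw [hiff]
      constructor
      · intro ha
        obtain ⟨d, hd, e'⟩ := opPar_mon a _ (good_le (Multiset.sub_le_self _ _) hs) ha
        refine ⟨c * d, mul_ne_zero hc hd, ?_⟩
        rw [e', smul_smul, ← Multiset.cons_coe, ← Multiset.singleton_add, add_comm, tsub_add_eq_tsub_tsub,
          Multiset.sub_singleton]
      · intro ha
        rw [opPar_mon0 a _ ha, smul_zero]
    · have h2 : ¬ ((a :: l : List (Ind m n)) : Multiset (Ind m n)) ≤ s := by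
        intro h; apply hl
        rw [← Multiset.cons_coe] at h
        exact (Multiset.le_cons_self _ _).trans h
      refine ⟨fun h => absurd h h2, fun _ => ?_⟩
      rw [wd_cons, Module.End.mul_apply, ih.2 hl, map_zero]


/-! The representation of the super tensor product -/

abbrev MM (m n : ℕ) : Type := FSp m n ⊗[ℂ] UEA (Ind m n) pI

instance instMM (m n : ℕ) : AddCommGroup (MM m n) := Module.addCommMonoidToAddCommGroup ℂ

/-- operators on F, acting on the first factor -/
def rA (m n : ℕ) : Module.End ℂ (FSp m n) →ₐ[ℂ] Module.End ℂ (MM m n) :=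
  Module.End.rTensorAlgHom ℂ (FSp m n) (UEA (Ind m n) pI)

/-- left multiplication on the second factor, without sign -/
def rB (m n : ℕ) : UEA (Ind m n) pI →ₐ[ℂ] Module.End ℂ (MM m n) :=
  (Module.End.lTensorAlgHom ℂ (UEA (Ind m n) pI) (FSp m n)).comp (Algebra.lmul ℂ (UEA (Ind m n) pI))

@[simp] lemma rA_tmul {m n : ℕ} (f : Module.End ℂ (FSp m n)) (x) (u : UEA (Ind m n) pI) :
    rA m n f (x ⊗ₜ u) = (f x) ⊗ₜ u := by
  rfl

@[simp] lemma rB_tmul {m n : ℕ} (v : UEA (Ind m n) pI) (x : FSp m n) (u : UEA (Ind m n) pI) :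
    rB m n v (x ⊗ₜ u) = x ⊗ₜ (v * u) := by
  rfl

lemma rA_rB {m n : ℕ} (f : Module.End ℂ (FSp m n)) (v : UEA (Ind m n) pI) :
    rB m n v * rA m n f = rA m n f * rB m n v := by
  apply TensorProduct.ext'
  intro x y
  simp

lemma sg_even {m n : ℕ} (k : ℕ) : (sg : Module.End ℂ (FSp m n)) ^ (2 * k) = 1 := by
  rw [pow_mul, pow_two, sg_sq, one_pow]

def rUf {m n : ℕ} (i j : Ind m n) : Module.End ℂ (MM m n) :=
  rA m n (sg ^ (pI i + pI j)) * rB m n (gen pI i j)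

lemma rUf_mul {m n : ℕ} (i j k l : Ind m n) : rUf i j * rUf k l =
    rA m n (sg ^ (pI i + pI j + (pI k + pI l))) * rB m n (gen pI i j * gen pI k l) := by
  unfold rUf
  rw [pow_add sg (pI i + pI j) (pI k + pI l), map_mul, map_mul (rB m n)]
  simp only [mul_assoc]
  rw [← mul_assoc (rB m n _) (rA m n _), rA_rB, mul_assoc]

def rU (m n : ℕ) : UEA (Ind m n) pI →ₐ[ℂ] Module.End ℂ (MM m n) :=
  uLift (p := pI) (A := Module.End ℂ (MM m n)) rUf (by
    intro i j k l
    rw [rUf_mul, rUf_mul, add_comm (pI k + pI l), gen_rel i j k l, map_add, map_sub, map_smul, map_smul]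
    rw [mul_add, mul_smul_comm, add_sub_cancel_left, mul_sub, mul_smul_comm]
    congr 1
    · by_cases h : j = k
      · subst h
        simp only [if_true, rUf]
        rw [show pI i + pI j + (pI j + pI l) = 2 * pI j + (pI i + pI l) by ring, pow_add, sg_even, one_mul]
      · simp [h]
    · congr 1
      by_cases h : l = i
      · subst h
        simp only [if_true, rUf]
        rw [show pI l + pI j + (pI k + pI l) = 2 * pI l + (pI k + pI j) by ring, pow_add, sg_even, one_mul]
      · simp [h])

lemma rU_gen {m n : ℕ} (i j : Ind m n) : rU m n (gen pI i j) = rUf i j := by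
  rw [rU, uLift_gen]

def rD (m n : ℕ) : Dprime m n →ₐ[ℂ] Module.End ℂ (MM m n) := (rA m n).comp (Dprime m n).val

lemma rD_apply {m n : ℕ} (d : Dprime m n) : rD m n d = rA m n d.1 := rfl

lemma rU_comm {m n : ℕ} (i j : Ind m n) (c : ℕ) (A : Module.End ℂ (FSp m n))
    (h : sg * A = ((-1 : ℂ) ^ c) • (A * sg)) :
    rU m n (gen pI i j) * rA m n A = ((-1 : ℂ) ^ ((pI i + pI j) * c)) • (rA m n A * rU m n (gen pI i j)) := by
  rw [rU_gen, rUf, mul_assoc, rA_rB, ← mul_assoc, ← map_mul, sg_pow_comm _ _ _ h, map_smul, map_mul,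
    smul_mul_assoc, mul_assoc]

lemma exch {m n : ℕ} (ST : SuperTensor m n) (i j : Ind m n) (d : Dprime m n) :
    ∃ d' : Dprime m n, ST.inU (gen pI i j) * ST.inD d = ST.inD d' * ST.inU (gen pI i j) ∧
      rU m n (gen pI i j) * rD m n d = rD m n d' * rU m n (gen pI i j) := by
  obtain ⟨d, hd⟩ := d
  induction hd using Algebra.adjoin_induction with
  | mem x hx =>
    rcases hx with ⟨k, rfl⟩ | ⟨k, rfl⟩
    · refine ⟨((-1 : ℂ) ^ ((pI i + pI j) * pI k)) • tdiv k, ?_, ?_⟩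
      · rw [map_smul, smul_mul_assoc]; exact ST.comm_div i j k
      · rw [map_smul, smul_mul_assoc]; exact rU_comm i j _ _ (sg_div k)
    · refine ⟨((-1 : ℂ) ^ ((pI i + pI j) * pI k)) • tpar k, ?_, ?_⟩
      · rw [map_smul, smul_mul_assoc]; exact ST.comm_par i j k
      · rw [map_smul, smul_mul_assoc]; exact rU_comm i j _ _ (sg_par k)
  | algebraMap r =>
    have : (⟨algebraMap ℂ _ r, Subalgebra.algebraMap_mem _ r⟩ : Dprime m n) = algebraMap ℂ (Dprime m n) r := rfl
    refine ⟨algebraMap ℂ (Dprime m n) r, ?_, ?_⟩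
    · rw [this, AlgHom.commutes]; exact (Algebra.commutes _ _).symm
    · rw [this, AlgHom.commutes]; exact (Algebra.commutes _ _).symm
  | add x y hx hy h1 h2 =>
    obtain ⟨a, ha, ha'⟩ := h1
    obtain ⟨b, hb, hb'⟩ := h2
    have : (⟨x + y, add_mem hx hy⟩ : Dprime m n) = ⟨x, hx⟩ + ⟨y, hy⟩ := rfl
    refine ⟨a + b, ?_, ?_⟩
    · rw [this, map_add, mul_add, ha, hb, map_add, add_mul]
    · rw [this, map_add, mul_add, ha', hb', map_add, add_mul]
  | mul x y hx hy h1 h2 =>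
    obtain ⟨a, ha, ha'⟩ := h1
    obtain ⟨b, hb, hb'⟩ := h2
    have : (⟨x * y, mul_mem hx hy⟩ : Dprime m n) = ⟨x, hx⟩ * ⟨y, hy⟩ := rfl
    refine ⟨a * b, ?_, ?_⟩
    · rw [this, map_mul, ← mul_assoc, ha, mul_assoc, hb, map_mul, mul_assoc]
    · rw [this, map_mul, ← mul_assoc, ha', mul_assoc, hb', map_mul, mul_assoc]

def rT0 {m n : ℕ} (ST : SuperTensor m n) : ST.T →ₗ[ℂ] Module.End ℂ (MM m n) :=
  (LinearMap.mul' ℂ _) ∘ₗ (TensorProduct.map (rD m n).toLinearMap (rU m n).toLinearMap) ∘ₗ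
    ST.equiv.symm.toLinearMap

lemma rT0_apply {m n : ℕ} (ST : SuperTensor m n) (d : Dprime m n) (u) :
    rT0 ST (ST.inD d * ST.inU u) = rD m n d * rU m n u := by
  rw [← ST.equiv_tmul]
  simp [rT0]

lemma T_ind {m n : ℕ} (ST : SuperTensor m n) {P : ST.T → Prop} (h : ∀ d u, P (ST.inD d * ST.inU u))
    (hadd : ∀ x y, P x → P y → P (x + y)) (t : ST.T) : P t := by
  obtain ⟨x, rfl⟩ := ST.equiv.surjective t
  induction x using TensorProduct.induction_on with
  | zero => have := h 0 0; simpa using this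
  | tmul d u => rw [ST.equiv_tmul]; exact h d u
  | add x y hx hy => rw [map_add]; exact hadd _ _ hx hy

lemma rT0_D {m n : ℕ} (ST : SuperTensor m n) (d : Dprime m n) (t) :
    rT0 ST (ST.inD d * t) = rD m n d * rT0 ST t := by
  induction t using T_ind ST with
  | h d' u => rw [← mul_assoc, ← map_mul, rT0_apply, rT0_apply, map_mul, mul_assoc]
  | hadd x y hx hy => rw [mul_add, map_add, map_add, mul_add, hx, hy]

lemma rT0_gen {m n : ℕ} (ST : SuperTensor m n) (i j : Ind m n) (t) :
    rT0 ST (ST.inU (gen pI i j) * t) = rU m n (gen pI i j) * rT0 ST t := by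
  induction t using T_ind ST with
  | h d u =>
    obtain ⟨d', h1, h2⟩ := exch ST i j d
    rw [← mul_assoc, h1, mul_assoc, ← map_mul, rT0_apply, rT0_apply, map_mul, ← mul_assoc, ← h2, mul_assoc]
  | hadd x y hx hy => rw [mul_add, map_add, map_add, mul_add, hx, hy]

lemma rT0_U {m n : ℕ} (ST : SuperTensor m n) (u : UEA (Ind m n) pI) : ∀ (t),
    rT0 ST (ST.inU u * t) = rU m n u * rT0 ST t := by
  refine u_ind (P := fun u => ∀ t, rT0 ST (ST.inU u * t) = rU m n u * rT0 ST t) ?_ ?_ ?_ ?_ u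
  · intro t; simp
  · intro x y hx hy t; rw [map_add, add_mul, map_add, hx, hy, map_add, add_mul]
  · intro c x hx t; rw [map_smul, smul_mul_assoc, map_smul, hx, map_smul, smul_mul_assoc]
  · intro i j x hx t; rw [map_mul ST.inU, mul_assoc, rT0_gen, hx, map_mul (rU m n), mul_assoc]

def rT {m n : ℕ} (ST : SuperTensor m n) : ST.T →ₐ[ℂ] Module.End ℂ (MM m n) :=
  AlgHom.ofLinearMap (rT0 ST)
    (by have := rT0_apply ST 1 1; simpa using this)
    (by
      intro x y
      induction x using T_ind ST with
      | h d u => rw [mul_assoc, rT0_D, rT0_U, rT0_apply, mul_assoc]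
      | hadd x y hx hy => rw [add_mul, map_add, map_add, add_mul, hx, hy])

lemma rT_D {m n : ℕ} (ST : SuperTensor m n) (d : Dprime m n) : rT ST (ST.inD d) = rD m n d := by
  have := rT0_apply ST d 1
  change rT0 ST _ = _
  simpa using this

lemma rT_U {m n : ℕ} (ST : SuperTensor m n) (u) : rT ST (ST.inU u) = rU m n u := by
  have := rT0_apply ST 1 u
  change rT0 ST _ = _
  simpa using this

/-! Consequences for `ψ`. -/

lemma tdivB_emb {m n : ℕ} (a : Ind m n) : ((tdivB (emb a) : Dprime m n) : Module.End ℂ (FSp m n)) = opDiv a := by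
  rcases a with i | i <;> simp [tdivB, emb, tdiv]

lemma tdivB_z0 {m n : ℕ} : (tdivB z0 : Dprime m n) = 1 := by
  simp [tdivB, z0]

lemma rD_tdel {m n : ℕ} (a : Ind m n) (b : Ind (m+1) n) :
    rD m n (tdel (emb a) b) = rA m n (opDiv a) * rA m n (opPar b) := by
  rw [rD_apply, ← map_mul]
  congr 1
  have : ((tdel (emb a) b : Dprime m n) : Module.End ℂ (FSp m n)) =
    (tdivB (emb a) : Dprime m n).1 * (tpar b : Dprime m n).1 := rfl
  rw [this, tdivB_emb]; rfl

lemma rD_tdel0 {m n : ℕ} (b : Ind (m+1) n) :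
    rD m n (tdel z0 b) = rA m n (opPar b) := by
  rw [tdel, tdivB_z0, one_mul]; rfl

section psi
variable {m n : ℕ} (ST : SuperTensor m n) (ψ : Usl m n →ₐ[ℂ] ST.T)

lemma psi_EP (hψ : IsPhiS ST ψ) (b : Ind m n) : rT ST (ψ (EP b)) = rA m n (opPar (emb b)) := by
  rw [EP, hψ.2.2.1, rT_D, rD_tdel0]

lemma psi_EM (hψ : IsPhiS ST ψ) (a : Ind m n) : rT ST (ψ (EM a)) =
    rA m n (opDiv a) * rA m n (opPar z0) -
      ∑ j : Ind m n, ((-1 : ℂ) ^ (pI a * pI j)) • (rA m n (opDiv j) * rUf a j) := by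
  rw [EM, hψ.2.1, map_sub, rT_D, rD_tdel, map_sum]
  congr 1
  apply Finset.sum_congr rfl
  intro j _
  rw [map_smul, map_mul, rT_D, rT_U, rU_gen]; rfl

lemma psi_iS (hψ : IsPhiS ST ψ) (a b : Ind m n) : rT ST (ψ (iS m n (gen pI a b))) =
    rA m n (opDiv a) * rA m n (opPar (emb b)) + rUf a b -
      (if a = b then (-1 : ℂ) ^ pI a else 0) • rA m n (opPar z0) := by
  by_cases h : a = b
  · subst h
    have e : iS m n (gen pI a a) = (-(-1 : ℂ) ^ pI a) •
      (⟨gen pI z0 z0 - ((-1 : ℂ) ^ (pI a)) • gen pI (emb a) (emb a), mem_h a⟩ : Usl m n) := by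
      rw [iS_gen]
      apply Subtype.ext
      simp only [Subalgebra.coe_smul, gR, if_true, smul_sub, smul_smul, neg_mul, neg_one_sq_pow]
      module
    rw [e, map_smul, hψ.2.2.2, map_smul, map_sub, rT_D, map_sub, map_smul, map_smul, rT_U, rU_gen,
      rD_tdel, rD_tdel0, if_pos rfl]
    simp only [smul_sub, smul_smul, neg_mul, neg_one_sq_pow]
    module
  · have e : iS m n (gen pI a b) = ⟨gen pI (emb a) (emb b), mem_gen_ne fun he => h (emb_injective he)⟩ := by
      rw [iS_gen]
      apply Subtype.ext
      simp [gR, h]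
    rw [e, hψ.1 a b h, map_add, rT_D, rT_U, rU_gen, rD_tdel, if_neg h, zero_smul, sub_zero]

end psi


/-! polynomial dependence -/

def IsPol {V : Type} [AddCommGroup V] [Module ℂ V] (N : ℕ) (G : ℤ → V) (C : V) : Prop :=
  ∃ c : ℕ → V, ∀ κ : ℤ, G κ = (∑ i ∈ Finset.range N, ((κ : ℂ) ^ i) • c i) + ((κ : ℂ) ^ N) • C

section pol
variable {V : Type} [AddCommGroup V] [Module ℂ V]

lemma IsPol.const (v : V) : IsPol 0 (fun _ => v) v := ⟨fun _ => 0, fun κ => by simp⟩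

lemma IsPol.step {N : ℕ} {G : ℤ → V} {C : V} (h : IsPol N G C) (P R : Module.End ℂ V) :
    IsPol (N + 1) (fun κ => P (G κ) + (κ : ℂ) • R (G κ)) (R C) := by
  obtain ⟨c, hc⟩ := h
  refine ⟨fun i => (if i < N then P (c i) else P C) + (if i = 0 then 0 else R (c (i - 1))), ?_⟩
  intro κ
  simp only [smul_add, Finset.sum_add_distrib]
  rw [Finset.sum_range_succ, Finset.sum_range_succ' (fun i => ((κ : ℂ) ^ i) • (if i = 0 then 0 else R (c (i - 1))))]
  simp only [lt_irrefl, if_false, if_true, smul_zero, add_zero, Nat.add_one_ne_zero, Nat.add_sub_cancel]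
  have e : ∑ x ∈ Finset.range N, ((κ : ℂ) ^ x) • (if x < N then P (c x) else P C) =
      ∑ x ∈ Finset.range N, ((κ : ℂ) ^ x) • P (c x) := by
    apply Finset.sum_congr rfl
    intro x hx
    rw [if_pos (Finset.mem_range.1 hx)]
  rw [e, hc κ, map_add, map_add, map_sum, map_sum, smul_add, Finset.smul_sum]
  simp only [map_smul, smul_smul, pow_succ']
  abel

lemma IsPol.mono {N N' : ℕ} {G : ℤ → V} {C : V} (h : IsPol N G C) (hN : N < N') : IsPol N' G 0 := by
  have st : ∀ {N : ℕ} {C : V}, IsPol N G C → IsPol (N + 1) G 0 := by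
    intro N C h
    have := h.step 1 0
    simpa using this
  induction N', hN using Nat.le_induction with
  | base => exact st h
  | succ k _ ih => exact st ih

lemma IsPol.sum {ι : Type} (s : Finset ι) {N : ℕ} {G : ι → ℤ → V} {C : ι → V}
    (h : ∀ i ∈ s, IsPol N (G i) (C i)) : IsPol N (fun κ => ∑ i ∈ s, G i κ) (∑ i ∈ s, C i) := by
  classical
  induction s using Finset.induction_on with
  | empty => exact ⟨fun _ => 0, fun κ => by simp⟩
  | insert a s ha ih =>
    obtain ⟨c, hc⟩ := h a (Finset.mem_insert_self _ _)
    obtain ⟨d, hd⟩ := ih fun i hi => h i (Finset.mem_insert_of_mem hi)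
    refine ⟨fun i => c i + d i, fun κ => ?_⟩
    simp only [Finset.sum_insert ha, smul_add, Finset.sum_add_distrib]
    have hd' := hd κ
    beta_reduce at hd'
    rw [hc, hd']
    abel

lemma IsPol.eq_zero {N : ℕ} {C : V} (h : IsPol N (fun _ => (0 : V)) C) : C = 0 := by
  obtain ⟨c, hc⟩ := h
  rw [← Module.forall_dual_apply_eq_zero_iff ℂ]
  intro f
  let p : Polynomial ℂ := (∑ i ∈ Finset.range N, Polynomial.monomial i (f (c i))) + Polynomial.monomial N (f C)
  have hp : p = 0 := by
    apply Polynomial.eq_zero_of_infinite_isRoot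
    apply (Set.infinite_range_of_injective (Int.cast_injective (α := ℂ))).mono
    rintro _ ⟨κ, rfl⟩
    have := congrArg f (hc κ)
    simp only [map_add, map_sum, map_smul, map_zero, smul_eq_mul] at this
    simp only [p, Set.mem_ofPred_eq, Polynomial.IsRoot, Polynomial.eval_add, Polynomial.eval_finsetSum,
      Polynomial.eval_monomial]
    rw [this]
    simp only [mul_comm]
  have := congrArg (fun q => Polynomial.coeff q N) hp
  simpa [p, Polynomial.coeff_monomial] using this

end pol

/-! commutation with shifts -/

section tau
variable {m n : ℕ} (ST : SuperTensor m n) (ψ : Usl m n →ₐ[ℂ] ST.T)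

def Psi : Usl m n →ₐ[ℂ] Module.End ℂ (MM m n) := (rT ST).comp ψ

def tau (κ : ℤ) : Module.End ℂ (MM m n) := rA m n (shf κ)

lemma tau_inj (κ : ℤ) (x : MM m n) (h : tau κ x = 0) : x = 0 := by
  have : (tau (-κ) * tau κ : Module.End ℂ (MM m n)) = 1 := by
    rw [tau, tau, ← map_mul, shf_inj, map_one]
  have h2 := LinearMap.congr_fun this x
  rw [Module.End.mul_apply, h, map_zero] at h2
  exact h2.symm

lemma shf_sgp (κ : ℤ) (k : ℕ) : sg ^ k * shf κ = shf κ * (sg : Module.End ℂ (FSp m n)) ^ k := by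
  have : Commute (sg : Module.End ℂ (FSp m n)) (shf κ) := shf_sg κ
  exact this.pow_left k

lemma tau_rUf (κ : ℤ) (a b : Ind m n) : rUf a b * tau κ = tau κ * rUf a b := by
  rw [rUf, tau, mul_assoc, rA_rB, ← mul_assoc, ← map_mul, shf_sgp, map_mul, mul_assoc]

lemma tau_div (κ : ℤ) (a : Ind m n) : rA m n (opDiv a) * tau κ = tau κ * rA m n (opDiv a) := by
  rw [tau, ← map_mul, shf_div, map_mul]

lemma tau_par (κ : ℤ) (a : Ind m n) : rA m n (opPar (emb a)) * tau κ = tau κ * rA m n (opPar (emb a)) := by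
  rw [tau, ← map_mul, shf_par, map_mul]

lemma tau_par0 (κ : ℤ) : rA m n (opPar z0) * tau κ = tau κ * (rA m n (opPar z0) + (κ : ℂ) • 1) := by
  rw [tau, ← map_mul, shf_par0, map_mul, map_add, map_smul, map_one]

variable {ST ψ}

lemma tau_EP (hψ : IsPhiS ST ψ) (κ : ℤ) (b : Ind m n) :
    Psi ST ψ (EP b) * tau κ = tau κ * Psi ST ψ (EP b) := by
  change rT ST (ψ (EP b)) * _ = _ * rT ST (ψ (EP b))
  rw [psi_EP ST ψ hψ, tau_par]

lemma tau_EM (hψ : IsPhiS ST ψ) (κ : ℤ) (a : Ind m n) :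
    Psi ST ψ (EM a) * tau κ = tau κ * (Psi ST ψ (EM a) + (κ : ℂ) • rA m n (opDiv a)) := by
  change rT ST (ψ (EM a)) * _ = _ * (rT ST (ψ (EM a)) + _)
  have h : ∀ j : Ind m n, rA m n (opDiv j) * rUf a j * tau κ = tau κ * (rA m n (opDiv j) * rUf a j) := by
    intro j
    rw [mul_assoc, tau_rUf, ← mul_assoc, tau_div, mul_assoc]
  rw [psi_EM ST ψ hψ, sub_mul, mul_add, mul_sub, mul_assoc, tau_par0, ← mul_assoc, tau_div, mul_assoc,
    mul_add, mul_smul_comm, mul_one, mul_add, Finset.sum_mul, Finset.mul_sum]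
  simp only [smul_mul_assoc, mul_smul_comm, h]
  abel

lemma tau_iS (hψ : IsPhiS ST ψ) (κ : ℤ) (a b : Ind m n) :
    Psi ST ψ (iS m n (gen pI a b)) * tau κ = tau κ * (Psi ST ψ (iS m n (gen pI a b)) -
      (κ * (if a = b then (-1 : ℂ) ^ pI a else 0)) • 1) := by
  change rT ST (ψ (iS m n (gen pI a b))) * _ = _ * (rT ST (ψ (iS m n (gen pI a b))) - _)
  rw [psi_iS ST ψ hψ]
  simp only [sub_mul, add_mul, mul_sub, mul_add, smul_mul_assoc, mul_smul_comm, tau_rUf, tau_par0]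
  rw [mul_assoc, tau_par, ← mul_assoc, tau_div, mul_assoc]
  simp only [smul_add, smul_smul, mul_one]
  rw [mul_comm (κ : ℂ)]
  abel

lemma tau_g1 (hψ : IsPhiS ST ψ) (κ : ℤ) (o : Ind m n) :
    Psi ST ψ (iS m n (g1 o)) * tau κ = tau κ * (Psi ST ψ (iS m n (g1 o)) + (κ : ℂ) • 1) := by
  rw [g1, map_smul, map_smul, smul_mul_assoc, tau_iS hψ, if_pos rfl, ← mul_smul_comm]
  congr 1
  rw [smul_sub, smul_smul, mul_left_comm, neg_mul, neg_one_sq_pow, mul_neg, mul_one]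
  module

lemma tau_K0 (hψ : IsPhiS ST ψ) (κ : ℤ) (o : Ind m n) (v : UEA (Ind m n) pI) (hv : v ∈ K0 o) :
    Psi ST ψ (iS m n v) * tau κ = tau κ * Psi ST ψ (iS m n v) := by
  induction hv using Algebra.adjoin_induction with
  | mem x hx =>
    rcases hx with ⟨a, b, hab, rfl⟩ | ⟨a, rfl⟩
    · rw [tau_iS hψ, if_neg hab, mul_zero, zero_smul, sub_zero]
    · rw [map_sub, map_sub, map_smul, map_smul, sub_mul, smul_mul_assoc, tau_iS hψ, tau_iS hψ,
        if_pos rfl, if_pos rfl, ← mul_smul_comm, ← mul_sub]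
      congr 1
      rw [smul_sub, smul_smul, pow_add, show ((-1 : ℂ) ^ pI a * (-1) ^ pI o) * (κ * (-1) ^ pI o) =
        κ * (-1) ^ pI a * ((-1) ^ pI o * (-1) ^ pI o) by ring, neg_one_sq_pow, mul_one]
      abel
  | algebraMap r => simp only [AlgHom.commutes]; exact Algebra.commutes _ _
  | add x y hx hy h1 h2 => rw [map_add, map_add, add_mul, mul_add, h1, h2]
  | mul x y hx hy h1 h2 => rw [map_mul, map_mul, mul_assoc, h2, ← mul_assoc, h1, mul_assoc]

lemma Psi_m0 (hψ : IsPhiS ST ψ) (v : UEA (Ind m n) pI) : ∀ (u : UEA (Ind m n) pI),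
    Psi ST ψ (iS m n v) (fmono (mon 0) ⊗ₜ u) = fmono (mon 0) ⊗ₜ (v * u) := by
  refine u_ind (P := fun v => ∀ u : UEA (Ind m n) pI,
    Psi ST ψ (iS m n v) (fmono (mon 0) ⊗ₜ u) = fmono (mon 0) ⊗ₜ (v * u)) ?_ ?_ ?_ ?_ v
  · intro u; simp
  · intro x y hx hy u
    rw [map_add, map_add, LinearMap.add_apply, hx, hy, add_mul, TensorProduct.tmul_add]
  · intro c x hx u
    rw [map_smul, map_smul, LinearMap.smul_apply, hx, smul_mul_assoc, TensorProduct.tmul_smul]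
  · intro i j x hx u
    rw [map_mul, map_mul, Module.End.mul_apply, hx, mul_assoc]
    change rT ST (ψ (iS m n (gen pI i j))) _ = _
    have sp : ∀ k : ℕ, (sg ^ k : Module.End ℂ (FSp m n)) (fmono (mon 0)) = fmono (mon 0) := by
      intro k
      induction k with
      | zero => simp
      | succ k ih => rw [pow_succ, Module.End.mul_apply, sg_mon, ih]
    rw [psi_iS ST ψ hψ, LinearMap.sub_apply, LinearMap.add_apply, LinearMap.smul_apply,
      Module.End.mul_apply, rA_tmul, rA_tmul, opPar_mon0 _ _ (Multiset.notMem_zero _), rA_tmul, opPar0_mon,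
      rUf, Module.End.mul_apply, rB_tmul, rA_tmul, sp]
    simp

lemma wd_map_Psi (y : Ind m n → Usl m n) (l) :
    Psi ST ψ (wd y l) = wd (fun a => Psi ST ψ (y a)) l := by
  induction l with
  | nil => simp
  | cons a l ih => rw [wd_cons, wd_cons, map_mul, ih]

lemma wd_map_rA (y : Ind m n → Module.End ℂ (FSp m n)) (l) :
    rA m n (wd y l) = wd (fun a => rA m n (y a)) l := by
  induction l with
  | nil => simp
  | cons a l ih => rw [wd_cons, wd_cons, map_mul, ih]

lemma wd_tau {A : Type} [Ring A] (t : A) (y y' : Ind m n → A) (h : ∀ a, y a * t = t * y' a) (l) :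
    wd y l * t = t * wd y' l := by
  induction l with
  | nil => simp
  | cons a l ih => rw [wd_cons, wd_cons, mul_assoc, ih, ← mul_assoc, h, mul_assoc]

lemma Theta_tau (hψ : IsPhiS ST ψ) (κ : ℤ) (o : Ind m n) (i : GM m n × ℕ × GM m n) (v : K0 o) :
    Psi ST ψ (Theta o (Finsupp.single i v)) * tau κ =
      tau κ * (wd (fun a => Psi ST ψ (EM a) + (κ : ℂ) • rA m n (opDiv a)) i.1.1.toList *
        ((Psi ST ψ (iS m n (g1 o)) + (κ : ℂ) • 1) ^ i.2.1 * (Psi ST ψ (iS m n v) *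
          rA m n (wd (fun b => opPar (emb b)) i.2.2.1.toList)))) := by
  have e : rA m n (wd (fun b => opPar (emb b)) i.2.2.1.toList) = wd (fun b => Psi ST ψ (EP b)) i.2.2.1.toList := by
    rw [wd_map_rA]
    congr 1
    funext b
    exact (psi_EP ST ψ hψ b).symm
  have h1 := wd_tau (tau κ) _ _ (tau_EP hψ κ) i.2.2.1.toList
  have h2 := tau_K0 hψ κ o v v.2
  have h3 : Psi ST ψ (iS m n (g1 o)) ^ i.2.1 * tau κ =
      tau κ * (Psi ST ψ (iS m n (g1 o)) + (κ : ℂ) • 1) ^ i.2.1 := by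
    generalize i.2.1 = k
    induction k with
    | zero => simp
    | succ k ih => rw [pow_succ, pow_succ, mul_assoc, tau_g1 hψ, ← mul_assoc, ih, mul_assoc]
  have h4 := wd_tau (tau κ) _ _ (tau_EM hψ κ) i.1.1.toList
  rw [e, Theta_single, map_mul, map_mul, map_mul, map_mul, map_pow, map_pow, wd_map_Psi, wd_map_Psi]
  rw [mul_assoc, mul_assoc, mul_assoc, h1, ← mul_assoc _ (tau κ), h2, mul_assoc (tau κ), ← mul_assoc _ (tau κ), h3,
    mul_assoc (tau κ), ← mul_assoc _ (tau κ), h4, mul_assoc (tau κ)]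

end tau


section main
variable {m n : ℕ}

lemma pol_pow {V : Type} [AddCommGroup V] [Module ℂ V] (Q : Module.End ℂ V) (w : V) (k : ℕ) :
    IsPol k (fun κ : ℤ => ((Q + (κ : ℂ) • 1) ^ k) w) w := by
  induction k with
  | zero => exact IsPol.const w
  | succ k ih =>
    have := ih.step Q 1
    simpa [pow_succ'] using this

lemma pol_wd {V : Type} [AddCommGroup V] [Module ℂ V] (P R : Ind m n → Module.End ℂ V)
    {k : ℕ} {G : ℤ → V} {C : V} (h : IsPol k G C) (l : List (Ind m n)) :
    IsPol (l.length + k) (fun κ : ℤ => wd (fun a => P a + (κ : ℂ) • R a) l (G κ)) (wd R l C) := by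
  induction l with
  | nil => simpa using h
  | cons a l ih =>
    have := ih.step (P a) (R a)
    rw [List.length_cons, Nat.add_right_comm]
    simpa using this

/-- coefficient extraction -/
def cf (x : FMon m n) : MM m n →ₗ[ℂ] UEA (Ind m n) pI :=
  (TensorProduct.lid ℂ (UEA (Ind m n) pI)).toLinearMap ∘ₗ
    LinearMap.rTensor (UEA (Ind m n) pI) (Finsupp.lapply x : FSp m n →ₗ[ℂ] ℂ)

lemma cf_tmul (x y : FMon m n) (u) : cf x (fmono y ⊗ₜ u) = if y = x then u else 0 := by
  simp only [cf, LinearMap.comp_apply, LinearMap.rTensor_tmul, LinearEquiv.coe_coe, TensorProduct.lid_tmul,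
    Finsupp.lapply_apply, fmono, Finsupp.single_apply]
  split_ifs <;> simp

variable {ST : SuperTensor m n} {ψ : Usl m n →ₐ[ℂ] ST.T}

/-- the contribution of one term -/
def Gt (ST : SuperTensor m n) (ψ : Usl m n →ₐ[ℂ] ST.T) (o : Ind m n) (s0 : Multiset (Ind m n)) (i : GM m n × ℕ × GM m n) (v : K0 o) (κ : ℤ) : MM m n :=
  wd (fun a => Psi ST ψ (EM a) + (κ : ℂ) • rA m n (opDiv a)) i.1.1.toList
    (((Psi ST ψ (iS m n (g1 o)) + (κ : ℂ) • 1) ^ i.2.1) (Psi ST ψ (iS m n v)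
          (rA m n (wd (fun b => opPar (emb b)) i.2.2.1.toList) (fmono (mon s0) ⊗ₜ 1))))

lemma Gt_zero (o : Ind m n) (s0 : Multiset (Ind m n)) (h0 : Good s0) (i : GM m n × ℕ × GM m n) (v : K0 o)
    (hi : i.2.2.1 ≠ s0) (hc : s0.card ≤ i.2.2.1.card) (κ : ℤ) : Gt ST ψ o s0 i v κ = 0 := by
  have : ¬ ((i.2.2.1.toList : Multiset (Ind m n)) ≤ s0) := by
    rw [Multiset.coe_toList]
    intro h
    exact hi (Multiset.eq_of_le_of_card_le h hc)
  rw [Gt, rA_tmul, (wd_par s0 h0 _).2 this, TensorProduct.zero_tmul, map_zero, map_zero, map_zero]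

lemma Gt_pol (hψ : IsPhiS ST ψ) (o : Ind m n) (s0 : GM m n) (i : GM m n × ℕ × GM m n) (v : K0 o) (hi : i.2.2 = s0) :
    ∃ c : ℂ, c ≠ 0 ∧ IsPol (i.1.1.card + i.2.1) (Gt ST ψ o s0.1 i v) (c • (fmono (mon i.1.1) ⊗ₜ v.1)) := by
  obtain ⟨s, k, s'⟩ := i
  dsimp only at hi
  subst hi
  obtain ⟨c, hc, e⟩ := (wd_par s'.1 s'.2 s'.1.toList).1 (by rw [Multiset.coe_toList])
  obtain ⟨d, hd, e'⟩ := wd_div s.1.toList (by rw [Multiset.coe_toList]; exact s.2)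
  rw [Multiset.coe_toList] at e e'
  rw [tsub_self] at e
  refine ⟨c * d, mul_ne_zero hc hd, ?_⟩
  have := pol_wd (fun a => Psi ST ψ (EM a)) (fun a => rA m n (opDiv a))
    (pol_pow (Psi ST ψ (iS m n (g1 o))) (c • (fmono (mon 0) ⊗ₜ v.1) : MM m n) k) s.1.toList
  rw [Multiset.length_toList, ← wd_map_rA, map_smul, rA_tmul, e', ← TensorProduct.smul_tmul', smul_smul] at this
  convert this using 2 with κ
  rw [Gt, rA_tmul, e, ← TensorProduct.smul_tmul', map_smul, Psi_m0 hψ, mul_one]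

lemma Theta_inj (hψ : IsPhiS ST ψ) (o : Ind m n) (c : (GM m n × ℕ × GM m n) →₀ K0 o)
    (h : ψ (Theta o c) = 0) : c = 0 := by
  classical
  by_contra hne
  obtain ⟨j0, hj0, hmin⟩ := Finset.exists_min_image c.support (fun i => i.2.2.1.card)
    (Finsupp.support_nonempty_iff.2 hne)
  set s0 := j0.2.2 with hs0
  obtain ⟨i0, hi0, hmax⟩ := Finset.exists_max_image (c.support.filter fun i => i.2.2 = s0)
    (fun i => i.1.1.card + i.2.1) ⟨j0, by simp only [Finset.mem_filter]; exact ⟨hj0, hs0.symm⟩⟩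
  rw [Finset.mem_filter] at hi0
  -- vanishing
  have hv : ∀ κ : ℤ, ∑ i ∈ c.support, Gt ST ψ o s0.1 i (c i) κ = 0 := by
    intro κ
    apply tau_inj κ
    have e1 : Psi ST ψ (Theta o c) * tau κ = 0 := by
      have : Psi ST ψ (Theta o c) = 0 := by
        change rT ST (ψ (Theta o c)) = 0
        rw [h, map_zero]
      rw [this, zero_mul]
    have e2 : Theta o c = ∑ i ∈ c.support, Theta o (Finsupp.single i (c i)) := by
      rw [← map_sum]
      congr 1
      exact c.sum_single.symm
    rw [e2, map_sum, Finset.sum_mul] at e1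
    have e3 := LinearMap.congr_fun e1 (fmono (mon s0.1) ⊗ₜ 1)
    rw [LinearMap.sum_apply, LinearMap.zero_apply] at e3
    rw [map_sum, ← e3]
    apply Finset.sum_congr rfl
    intro i _
    rw [Theta_tau hψ]
    rfl
  set N := i0.1.1.card + i0.2.1 with hN
  have hp : ∀ i ∈ c.support, ∃ d : ℂ, (i = i0 → d ≠ 0) ∧ ∃ C : MM m n, IsPol N (Gt ST ψ o s0.1 i (c i)) C ∧
      cf (mon i0.1.1) C = if i = i0 then d • (c i).1 else 0 := by
    intro i hi
    by_cases his : i.2.2 = s0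
    · obtain ⟨d, hd, hp⟩ := Gt_pol hψ o s0 i (c i) his
      have hle : i.1.1.card + i.2.1 ≤ N := hmax i (Finset.mem_filter.2 ⟨hi, his⟩)
      rcases hle.lt_or_eq with hlt | heq
      · refine ⟨d, fun _ => hd, 0, hp.mono hlt, ?_⟩
        rw [map_zero, if_neg]
        rintro rfl
        exact lt_irrefl _ hlt
      · refine ⟨d, fun _ => hd, _, heq ▸ hp, ?_⟩
        rw [map_smul, cf_tmul]
        by_cases hii : i = i0
        · subst hii; simp
        · rw [if_neg hii, if_neg, smul_zero]
          intro hm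
          apply hii
          have h1 : i.1 = i0.1 := Subtype.ext (mon_inj i.1.2 i0.1.2 hm)
          have h2 : i.2.1 = i0.2.1 := by rw [h1] at heq; omega
          exact Prod.ext h1 (Prod.ext h2 (his.trans hi0.2.symm))
    · refine ⟨1, fun _ => one_ne_zero, 0, ?_, ?_⟩
      · refine ⟨fun _ => 0, fun κ => ?_⟩
        rw [Gt_zero o s0.1 s0.2 i (c i) (fun h => his (Subtype.ext h)) (hmin i hi)]
        simp
      · rw [map_zero, if_neg]
        rintro rfl
        exact his hi0.2
  choose! d hd C hC hcf using hp
  have hz : IsPol N (fun κ => ∑ i ∈ c.support, Gt ST ψ o s0.1 i (c i) κ) (∑ i ∈ c.support, C i) :=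
    IsPol.sum _ hC
  rw [funext hv] at hz
  have hz0 := congrArg (cf (mon i0.1.1)) hz.eq_zero
  rw [map_sum, map_zero, Finset.sum_congr rfl hcf, Finset.sum_ite_eq' , if_pos hi0.1] at hz0
  have := (smul_eq_zero.1 hz0).resolve_left (hd i0 hi0.1 rfl)
  exact (Finsupp.mem_support_iff.1 hi0.1) (Subtype.ext this)

lemma U_nontrivial [IsEmpty (Ind m n)] : Nontrivial (UEA (Ind m n) pI) := by
  let f : UEA (Ind m n) pI →ₐ[ℂ] ℂ := uLift (p := pI) (fun i _ => isEmptyElim i) (fun i => isEmptyElim i)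
  exact f.toRingHom.domain_nontrivial

lemma T_nontrivial [IsEmpty (Ind m n)] (ST : SuperTensor m n) : Nontrivial ST.T := by
  have := U_nontrivial (m := m) (n := n)
  have h1 : Nontrivial (MM m n) := by
    refine ⟨fmono (mon 0) ⊗ₜ 1, 0, ?_⟩
    intro h
    have := congrArg (cf (mon 0)) h
    rw [cf_tmul, if_pos rfl, map_zero] at this
    exact one_ne_zero this
  exact (rT ST).toRingHom.domain_nontrivial

lemma inj_empty [IsEmpty (Ind m n)] : Function.Injective ψ := by
  have := T_nontrivial ST
  rw [injective_iff_map_eq_zero]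
  intro x hx
  have hb : Usl m n = ⊥ := by
    rw [eq_bot_iff, Usl]
    apply Algebra.adjoin_le
    rintro x (⟨i, j, hij, rfl⟩ | ⟨a, rfl⟩)
    · exfalso
      rcases ind_cases i with rfl | ⟨a, rfl⟩
      · rcases ind_cases j with rfl | ⟨a, rfl⟩
        · exact hij rfl
        · exact isEmptyElim a
      · exact isEmptyElim a
    · exact isEmptyElim a
  have hx' : x.1 ∈ (⊥ : Subalgebra ℂ (UEA (Ind (m+1) n) pI)) := hb ▸ x.2
  obtain ⟨r, hr⟩ := Algebra.mem_bot.1 hx'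
  have e : x = algebraMap ℂ (Usl m n) r := Subtype.ext hr.symm
  rw [e, AlgHom.commutes] at hx
  have : r = 0 := (FaithfulSMul.algebraMap_injective ℂ ST.T) (by rw [hx, map_zero])
  rw [e, this, map_zero]

lemma main_inj (hψ : IsPhiS ST ψ) : Function.Injective ψ := by
  rcases isEmpty_or_nonempty (Ind m n) with he | ⟨⟨o⟩⟩
  · exact inj_empty
  · rw [injective_iff_map_eq_zero]
    intro x hx
    obtain ⟨c, rfl⟩ := Theta_surj o x
    rw [Theta_inj hψ o c hx, map_zero]

end main

end S17

/-- The homomorphism `φ^s : U(sl(m+1|n)) → D'(m|n)⊗U(gl(m|n))` is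
injective. -/
theorem stmt17 (m n : ℕ) (ST : SuperTensor m n)
    (ψ : Usl m n →ₐ[ℂ] ST.T) (hψ : IsPhiS ST ψ) :
    Function.Injective ψ := by
  exact S17.main_inj hψ
end
end
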